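/- arXiv:1707.02081 — 2 statements merged into one kernel-verified Lean document; each statement's English description precedes it below -/
import Mathlib

section
/- Let C be a small addable class of finite simple graphs such that for every n ≥ 1 the set of connected graphs in C on the vertex set Fin n is nonempty, and let φ be a sentence of first-order logic in the language of graphs. Let p_n denote the probability that a graph drawn uniformly at random from the connected graphs in C on the vertex set Fin n satisfies φ. Then lim_{n→∞} p_n exists and is equal to either 0 or 1. -/
open Filter Topology FirstOrder

/-- A class of finite simple graphs, given as a property of simple graphs
on arbitrary finite vertex types. -/
abbrev GraphClassOn := ∀ (V : Type) [Finite V], SimpleGraph V → Prop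

/-- The class is invariant under graph isomorphism. -/
def ClassIsoInvariant (C : GraphClassOn) : Prop :=
  ∀ (V W : Type) [Finite V] [Finite W] (G : SimpleGraph V) (H : SimpleGraph W),
    Nonempty (G ≃g H) → (C V G ↔ C W H)

/-- The class is bridge-addable: one may add an edge between two vertices lying in
distinct connected components. -/
def ClassBridgeAddable (C : GraphClassOn) : Prop :=
  ∀ (V : Type) [Finite V] (G : SimpleGraph V) (u v : V),
    C V G → ¬G.Reachable u v → C V (G ⊔ SimpleGraph.fromEdgeSet {s(u, v)})

/-- The class is decomposable: a graph belongs to the class iff each of its connected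
components does. -/
def ClassDecomposable (C : GraphClassOn) : Prop :=
  ∀ (V : Type) [Finite V] (G : SimpleGraph V),
    C V G ↔ ∀ c : G.ConnectedComponent, C c.supp (G.induce c.supp)

/-- Addable = decomposable and bridge-addable. -/
def ClassAddable (C : GraphClassOn) : Prop :=
  ClassDecomposable C ∧ ClassBridgeAddable C

/-- The number of graphs in the class on the vertex set `Fin n`. -/
noncomputable def classCount (C : GraphClassOn) (n : ℕ) : ℕ :=
  Nat.card {G : SimpleGraph (Fin n) // C (Fin n) G}

/-- The class is small: `c_n ≤ d^n · n!` for some real `d`. -/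
def ClassSmall (C : GraphClassOn) : Prop :=
  ∃ d : ℝ, ∀ n : ℕ, (classCount C n : ℝ) ≤ d ^ n * n.factorial

/-- The class is smooth: `c_n / (n · c_{n-1})` tends to a finite limit. -/
def ClassSmooth (C : GraphClassOn) : Prop :=
  ∃ γ : ℝ, Tendsto (fun n : ℕ => (classCount C n : ℝ) / (n * classCount C (n - 1)))
    atTop (𝓝 γ)

/-- The probability that a uniformly random graph from the class on `Fin n`
satisfies the property `P`. -/
noncomputable def classProb (C : GraphClassOn) (n : ℕ) (P : SimpleGraph (Fin n) → Prop) : ℝ :=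
  (Nat.card {G : SimpleGraph (Fin n) // C (Fin n) G ∧ P G} : ℝ) / (classCount C n : ℝ)

/-- The probability that a uniformly random *connected* graph from the class on `Fin n`
satisfies the property `P`. -/
noncomputable def connClassProb (C : GraphClassOn) (n : ℕ)
    (P : SimpleGraph (Fin n) → Prop) : ℝ :=
  (Nat.card {G : SimpleGraph (Fin n) // (C (Fin n) G ∧ G.Connected) ∧ P G} : ℝ) /
    (Nat.card {G : SimpleGraph (Fin n) // C (Fin n) G ∧ G.Connected} : ℝ)

/-- Satisfaction of a first-order sentence in the language of graphs in a simple graph. -/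
def SatFO {V : Type} (G : SimpleGraph V) (φ : Language.graph.Sentence) : Prop :=
  letI := G.structure
  V ⊨ φ

/-- The rooted graph `(H, r)` appears in `G` on the vertex set `W`:
the induced subgraph of `G` on `W` is isomorphic to `H` via an isomorphism sending some
`w ∈ W` to `r`, every edge of `G` joining `W` to its complement is incident on `w`,
and there is exactly one such edge. -/
def AppearsAt {VH V : Type} (H : SimpleGraph VH) (r : VH) (G : SimpleGraph V)
    (W : Set V) : Prop :=
  ∃ (w : V) (hw : w ∈ W) (e : G.induce W ≃g H),
    e ⟨w, hw⟩ = r ∧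
    (∀ a ∈ W, ∀ b ∉ W, G.Adj a b → a = w) ∧
    (∃! b, b ∉ W ∧ G.Adj w b)

/-- The rooted graph `(H, r)` appears in `G`. -/
def Appears {VH V : Type} (H : SimpleGraph VH) (r : VH) (G : SimpleGraph V) : Prop :=
  ∃ W : Set V, AppearsAt H r G W

/-- The number of appearances of the rooted graph `(H, r)` in `G`, i.e. the number of
vertex sets `W` witnessing an appearance. -/
noncomputable def numAppearances {VH V : Type} (H : SimpleGraph VH) (r : VH)
    (G : SimpleGraph V) : ℕ :=
  Nat.card {W : Set V // AppearsAt H r G W}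

/-- The number of connected components of `G` whose induced subgraph is isomorphic
to `H`. -/
noncomputable def numComponentsIso {V VH : Type} (G : SimpleGraph V)
    (H : SimpleGraph VH) : ℕ :=
  Nat.card {c : G.ConnectedComponent // Nonempty (G.induce c.supp ≃g H)}

/-!
Two connected graphs in which every local type of small rank that occurs at all is realized by many
vertices far apart from each other satisfy the same first-order sentences of small quantifier rank:
Duplicator answers a move near the earlier pebbles by local back-and-forth, and any other move by a
vertex of the same local type far from all pebbles. So it is enough that a random connected member
of the class almost surely contains many disjoint pendant copies of each fixed connected member.

That follows by counting. Weighting the number of connected members on `n` vertices by `n / n!`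
gives a supermultiplicative sequence, since two members joined by a rooted bridge determine the two
sides up to labelling; as the class is small, the sequence has a finite growth rate. If members with
few pendant copies of some `H` were not rare, attaching linearly many copies of `H` to them in all
possible ways would produce exponentially more members than this growth rate allows: each result
still has few pendant copies of `H`, so it arises in few ways.
-/

/-! ### Back-and-forth systems and their local versions -/

section Distance

variable {V : Type*} {G : SimpleGraph V}

/-- The vertex `x` is within distance `r` of the set `A`. -/
def Near (G : SimpleGraph V) (r : ℕ) (A : Set V) (x : V) : Prop :=
  ∃ a ∈ A, G.dist x a ≤ r

/-- The sets `A` and `B` are at distance greater than `r`. In a disconnected graph this is affected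
by the convention that unreachable vertices are at distance `0`. -/
def FarApart (G : SimpleGraph V) (r : ℕ) (A B : Set V) : Prop :=
  ∀ a ∈ A, ∀ b ∈ B, r < G.dist a b

/-- The vertices of the family `Y` are at pairwise distance greater than `r`. -/
def Scattered {ι : Type*} (G : SimpleGraph V) (r : ℕ) (Y : ι → V) : Prop :=
  Pairwise fun i j => r < G.dist (Y i) (Y j)

theorem near_union {r : ℕ} {A B : Set V} {x : V} :
    Near G r (A ∪ B) x ↔ Near G r A x ∨ Near G r B x := by
  simp only [Near, Set.mem_union, or_and_right, exists_or]

theorem FarApart.symm {r : ℕ} {A B : Set V} (h : FarApart G r A B) : FarApart G r B A :=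
  fun b hb a ha => G.dist_comm (u := a) ▸ h a ha b hb

theorem FarApart.mono {r s : ℕ} {A B : Set V} (hrs : r ≤ s) (h : FarApart G s A B) :
    FarApart G r A B :=
  fun a ha b hb => hrs.trans_lt (h a ha b hb)

theorem FarApart.insert_left (hG : G.Connected) {r s : ℕ} {A B : Set V} {x : V}
    (h : FarApart G (r + s) A B) (hx : Near G s A x) : FarApart G r (insert x A) B := by
  rintro a (rfl | ha) b hb
  · obtain ⟨a', ha', hd⟩ := hx
    have := h a' ha' b hb
    have := hG.dist_triangle (u := a') (v := a) (w := b)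
    rw [G.dist_comm (u := a') (v := a)] at this
    omega
  · exact h.mono (Nat.le_add_right r s) a ha b hb

theorem farApart_singleton_right {r : ℕ} {A : Set V} {x : V} :
    FarApart G r A {x} ↔ ¬Near G r A x := by
  simp only [FarApart, Near, Set.mem_singleton_iff, forall_eq, not_exists, not_and, not_le,
    G.dist_comm (u := x)]

theorem ne_of_one_lt_dist {a b : V} (h : 1 < G.dist a b) : a ≠ b := by
  rintro rfl
  simp at h

theorem not_adj_of_one_lt_dist {a b : V} (h : 1 < G.dist a b) : ¬G.Adj a b :=
  fun hab => h.ne' (G.dist_eq_one_iff_adj.2 hab)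

theorem Scattered.exists_not_near (hG : G.Connected) {ι : Type*} {r : ℕ} {Y : ι → V}
    (hY : Scattered G (2 * r) Y) {A : Set V} (hA : A.Finite) (hcard : A.ncard < Nat.card ι) :
    ∃ i, ¬Near G r A (Y i) := by
  by_contra! hcon
  choose s hs hd using hcon
  have hinj : Function.Injective s := by
    intro i j hij
    by_contra hne
    have := hY hne
    have hi := hd i
    have hj := hd j
    have := hG.dist_triangle (u := Y i) (v := s i) (w := Y j)
    rw [hij] at hi this
    rw [G.dist_comm (u := s j)] at this
    omega
  have := Set.ncard_le_ncard (Set.range_subset_iff.2 hs) hA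
  rw [Set.ncard_range_of_injective hinj] at this
  omega

end Distance

section Games

variable {V W : Type*} {G : SimpleGraph V} {H : SimpleGraph W} {S T : Set (V × W)} {k : ℕ}

/-- The relation `S` is a partial isomorphism from `G` to `H`. -/
def IsPartialIso (G : SimpleGraph V) (H : SimpleGraph W) (S : Set (V × W)) : Prop :=
  ∀ p ∈ S, ∀ q ∈ S, (p.1 = q.1 ↔ p.2 = q.2) ∧ (G.Adj p.1 q.1 ↔ H.Adj p.2 q.2)

/-- Duplicator wins the `k`-round Ehrenfeucht–Fraïssé game on `G` and `H` from position `S`. -/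
def BackAndForth (G : SimpleGraph V) (H : SimpleGraph W) : ℕ → Set (V × W) → Prop
  | 0, S => IsPartialIso G H S
  | k + 1, S => BackAndForth G H k S ∧
      (∀ x, ∃ y, BackAndForth G H k (insert (x, y) S)) ∧
      (∀ y, ∃ x, BackAndForth G H k (insert (x, y) S))

/-- Duplicator wins the game in which, with `k` rounds left after the current one, both players
must move within distance `2 ^ k` of the vertices already chosen. -/
def LocalBackAndForth (G : SimpleGraph V) (H : SimpleGraph W) : ℕ → Set (V × W) → Prop
  | 0, S => IsPartialIso G H S
  | k + 1, S => LocalBackAndForth G H k S ∧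
      (∀ x, Near G (2 ^ k) (Prod.fst '' S) x →
        ∃ y, Near H (2 ^ k) (Prod.snd '' S) y ∧ LocalBackAndForth G H k (insert (x, y) S)) ∧
      (∀ y, Near H (2 ^ k) (Prod.snd '' S) y →
        ∃ x, Near G (2 ^ k) (Prod.fst '' S) x ∧ LocalBackAndForth G H k (insert (x, y) S))

theorem BackAndForth.isPartialIso (h : BackAndForth G H k S) : IsPartialIso G H S := by
  induction k with
  | zero => exact h
  | succ k ih => exact ih h.1

theorem IsPartialIso.swap (h : IsPartialIso G H S) : IsPartialIso H G (Prod.swap '' S) := by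
  rintro _ ⟨p, hp, rfl⟩ _ ⟨q, hq, rfl⟩
  exact ⟨(h p hp q hq).1.symm, (h p hp q hq).2.symm⟩

theorem LocalBackAndForth.swap (h : LocalBackAndForth G H k S) :
    LocalBackAndForth H G k (Prod.swap '' S) := by
  induction k generalizing S with
  | zero => exact IsPartialIso.swap h
  | succ k ih =>
    have hfst : Prod.fst '' (Prod.swap '' S) = Prod.snd '' S := Set.image_image _ _ _
    have hsnd : Prod.snd '' (Prod.swap '' S) = Prod.fst '' S := Set.image_image _ _ _
    have hins (x : V) (y : W) :
        insert (y, x) (Prod.swap '' S) = Prod.swap '' insert (x, y) S := by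
      rw [Set.image_insert_eq, Prod.swap_prod_mk]
    simp only [LocalBackAndForth, hfst, hsnd, hins]
    refine ⟨ih h.1, fun y hy => ?_, fun x hx => ?_⟩
    · exact (h.2.2 y hy).imp fun x => And.imp_right ih
    · exact (h.2.1 x hx).imp fun y => And.imp_right ih

theorem LocalBackAndForth.of_swap (h : LocalBackAndForth H G k (Prod.swap '' S)) :
    LocalBackAndForth G H k S := by
  simpa only [Set.image_image, Prod.swap_swap, Set.image_id'] using h.swap

theorem IsPartialIso.union (hS : IsPartialIso G H S) (hT : IsPartialIso G H T)
    (hG : FarApart G 1 (Prod.fst '' S) (Prod.fst '' T))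
    (hH : FarApart H 1 (Prod.snd '' S) (Prod.snd '' T)) : IsPartialIso G H (S ∪ T) := by
  have apart : ∀ p ∈ S, ∀ q ∈ T,
      (p.1 = q.1 ↔ p.2 = q.2) ∧ (G.Adj p.1 q.1 ↔ H.Adj p.2 q.2) := by
    intro p hp q hq
    have hGpq := hG _ ⟨p, hp, rfl⟩ _ ⟨q, hq, rfl⟩
    have hHpq := hH _ ⟨p, hp, rfl⟩ _ ⟨q, hq, rfl⟩
    exact ⟨iff_of_false (ne_of_one_lt_dist hGpq) (ne_of_one_lt_dist hHpq),
      iff_of_false (not_adj_of_one_lt_dist hGpq) (not_adj_of_one_lt_dist hHpq)⟩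
  rintro p (hp | hp) q (hq | hq)
  · exact hS p hp q hq
  · exact apart p hp q hq
  · simpa only [eq_comm, SimpleGraph.adj_comm] using apart q hq p hp
  · exact hT p hp q hq

theorem LocalBackAndForth.union (hG : G.Connected) (hH : H.Connected)
    (hS : LocalBackAndForth G H k S) (hT : LocalBackAndForth G H k T)
    (hdG : FarApart G (2 ^ k) (Prod.fst '' S) (Prod.fst '' T))
    (hdH : FarApart H (2 ^ k) (Prod.snd '' S) (Prod.snd '' T)) :
    LocalBackAndForth G H k (S ∪ T) := by
  induction k generalizing S T with
  | zero => exact IsPartialIso.union hS hT hdG hdH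
  | succ k ih =>
    have hk : 2 ^ k ≤ 2 ^ (k + 1) := Nat.pow_le_pow_right two_pos k.le_succ
    have extend {S T : Set (V × W)} (hT : LocalBackAndForth G H k T)
        (hdG : FarApart G (2 ^ (k + 1)) (Prod.fst '' S) (Prod.fst '' T))
        (hdH : FarApart H (2 ^ (k + 1)) (Prod.snd '' S) (Prod.snd '' T)) {x : V} {y : W}
        (hx : Near G (2 ^ k) (Prod.fst '' S) x) (hy : Near H (2 ^ k) (Prod.snd '' S) y)
        (hxy : LocalBackAndForth G H k (insert (x, y) S)) :
        LocalBackAndForth G H k (insert (x, y) (S ∪ T)) := by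
      rw [pow_succ, mul_two] at hdG hdH
      rw [← Set.insert_union]
      refine ih hxy hT ?_ ?_ <;> rw [Set.image_insert_eq]
      exacts [hdG.insert_left hG hx, hdH.insert_left hH hy]
    simp only [LocalBackAndForth, Set.image_union, near_union]
    refine ⟨ih hS.1 hT.1 (hdG.mono hk) (hdH.mono hk), ?_, ?_⟩
    · rintro x (hx | hx)
      · obtain ⟨y, hy, hxy⟩ := hS.2.1 x hx
        exact ⟨y, .inl hy, extend hT.1 hdG hdH hx hy hxy⟩
      · obtain ⟨y, hy, hxy⟩ := hT.2.1 x hx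
        exact ⟨y, .inr hy, Set.union_comm S T ▸ extend hS.1 hdG.symm hdH.symm hx hy hxy⟩
    · rintro y (hy | hy)
      · obtain ⟨x, hx, hxy⟩ := hS.2.2 y hy
        exact ⟨x, .inl hx, extend hT.1 hdG hdH hx hy hxy⟩
      · obtain ⟨x, hx, hxy⟩ := hT.2.2 y hy
        exact ⟨x, .inr hx, Set.union_comm S T ▸ extend hS.1 hdG.symm hdH.symm hx hy hxy⟩

theorem LocalBackAndForth.exists_insert (hG : G.Connected) (hH : H.Connected)
    (hS : LocalBackAndForth G H (k + 1) S) (hfin : S.Finite) {ι : Type*}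
    (hcard : S.ncard < Nat.card ι) {x : V} {Y : ι → W} (hY : Scattered H (2 * 2 ^ k) Y)
    (hxY : ∀ i, LocalBackAndForth G H k {(x, Y i)}) :
    ∃ y, LocalBackAndForth G H k (insert (x, y) S) := by
  by_cases hx : Near G (2 ^ k) (Prod.fst '' S) x
  · exact (hS.2.1 x hx).imp fun y hy => hy.2
  · obtain ⟨i, hi⟩ := hY.exists_not_near hH (hfin.image Prod.snd)
      ((Set.ncard_image_le hfin).trans_lt hcard)
    refine ⟨Y i, Set.union_singleton ▸ hS.1.union hG hH (hxY i) ?_ ?_⟩ <;>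
      rwa [Set.image_singleton, farApart_singleton_right]

/-- Hanf-style locality: a local win becomes a win once every vertex has, in the other graph, more
scattered local counterparts than there are rounds. -/
theorem LocalBackAndForth.backAndForth (hG : G.Connected) (hH : H.Connected) {q : ℕ} {ι : Type*}
    (hq : q ≤ Nat.card ι)
    (forth : ∀ l < q, ∀ x, ∃ Y : ι → W, Scattered H (2 * 2 ^ l) Y ∧
      ∀ i, LocalBackAndForth G H l {(x, Y i)})
    (back : ∀ l < q, ∀ y, ∃ X : ι → V, Scattered G (2 * 2 ^ l) X ∧
      ∀ i, LocalBackAndForth G H l {(X i, y)})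
    (hfin : S.Finite) (hcard : S.ncard + k ≤ q) (hS : LocalBackAndForth G H k S) :
    BackAndForth G H k S := by
  induction k generalizing S with
  | zero => exact hS
  | succ k ih =>
    have extend {x : V} {y : W} (h : LocalBackAndForth G H k (insert (x, y) S)) :
        BackAndForth G H k (insert (x, y) S) :=
      ih (hfin.insert _) (by have := Set.ncard_insert_le (x, y) S; omega) h
    refine ⟨ih hfin (by omega) hS.1, fun x => ?_, fun y => ?_⟩
    · obtain ⟨Y, hY, hxY⟩ := forth k (by omega) x
      exact (hS.exists_insert hG hH hfin (by omega) hY hxY).imp fun _ => extend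
    · obtain ⟨X, hX, hXy⟩ := back k (by omega) y
      have hcard' : (Prod.swap '' S).ncard < Nat.card ι :=
        (Set.ncard_image_le hfin).trans_lt (by omega)
      obtain ⟨x, hx⟩ := hS.swap.exists_insert hH hG (hfin.image _) hcard' hX (x := y) fun i => by
        simpa only [Set.image_singleton, Prod.swap_prod_mk] using (hXy i).swap
      refine ⟨x, extend (.of_swap ?_)⟩
      rwa [Set.image_insert_eq, Prod.swap_prod_mk]

end Games

/-! ### Quantifier rank -/

section QuantifierRank

variable {V W : Type*} {G : SimpleGraph V} {H : SimpleGraph W}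

/-- The quantifier rank of a formula: its nesting depth of quantifiers. -/
def quantifierRank {L : Language} {α : Type*} : ∀ {n : ℕ}, L.BoundedFormula α n → ℕ
  | _, .falsum => 0
  | _, .equal _ _ => 0
  | _, .rel _ _ => 0
  | _, .imp φ ψ => max (quantifierRank φ) (quantifierRank ψ)
  | _, .all φ => quantifierRank φ + 1

theorem range_snoc_prod_snoc {n : ℕ} (a : Fin n → V) (b : Fin n → W) (x : V) (y : W) :
    Set.range (fun i => ((Fin.snoc a x : Fin (n + 1) → V) i, (Fin.snoc b y : Fin (n + 1) → W) i)) =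
      insert (x, y) (Set.range fun i => (a i, b i)) := by
  rw [← Fin.range_snoc]
  congr 1 with i <;> induction i using Fin.lastCases <;> simp

theorem exists_eq_var_of_graph_term {n : ℕ} (t : Language.graph.Term (Empty ⊕ Fin n)) :
    ∃ i, t = .var (.inr i) := by
  rcases t with (x | i) | ⟨f, _⟩
  exacts [x.elim, ⟨i, rfl⟩, f.elim]

theorem BackAndForth.realize_iff {n : ℕ} (φ : Language.graph.BoundedFormula Empty n) {k : ℕ}
    (hk : quantifierRank φ ≤ k) {a : Fin n → V} {b : Fin n → W}
    (h : BackAndForth G H k (Set.range fun i => (a i, b i))) :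
    letI := G.structure
    letI := H.structure
    φ.Realize default a ↔ φ.Realize default b := by
  let := G.structure
  let := H.structure
  induction φ generalizing k with
  | falsum => exact Iff.rfl
  | equal t₁ t₂ =>
    obtain ⟨i, rfl⟩ := exists_eq_var_of_graph_term t₁
    obtain ⟨j, rfl⟩ := exists_eq_var_of_graph_term t₂
    exact (h.isPartialIso _ ⟨i, rfl⟩ _ ⟨j, rfl⟩).1
  | rel R ts =>
    cases R
    obtain ⟨i, hi⟩ := exists_eq_var_of_graph_term (ts 0)
    obtain ⟨j, hj⟩ := exists_eq_var_of_graph_term (ts 1)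
    change G.Adj ((ts 0).realize _) ((ts 1).realize _) ↔
      H.Adj ((ts 0).realize _) ((ts 1).realize _)
    rw [hi, hj]
    exact (h.isPartialIso _ ⟨i, rfl⟩ _ ⟨j, rfl⟩).2
  | imp φ ψ ihφ ihψ =>
    obtain ⟨hφ, hψ⟩ := max_le_iff.1 hk
    exact imp_congr (ihφ hφ h) (ihψ hψ h)
  | all φ ih =>
    obtain ⟨k, rfl⟩ := Nat.exists_eq_add_of_lt hk
    have hφ : quantifierRank φ ≤ quantifierRank φ + k := by omega
    constructor
    · intro hall y
      obtain ⟨x, hx⟩ := h.2.2 y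
      exact (ih hφ (range_snoc_prod_snoc a b x y ▸ hx)).1 (hall x)
    · intro hall x
      obtain ⟨y, hy⟩ := h.2.1 x
      exact (ih hφ (range_snoc_prod_snoc a b x y ▸ hy)).2 (hall y)

theorem BackAndForth.satFO_iff {V W : Type} {G : SimpleGraph V} {H : SimpleGraph W}
    {φ : Language.graph.Sentence} (h : BackAndForth G H (quantifierRank φ) ∅) :
    SatFO G φ ↔ SatFO H φ :=
  BackAndForth.realize_iff φ le_rfl <| by rwa [Set.range_eq_empty]

end QuantifierRank

/-! ### Local types -/

/-- The finite set in which local types of rank `k` of `n`-tuples take their values. -/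
def LocalType : ℕ → ℕ → Type
  | 0, n => Set (Fin n × Fin n) × Set (Fin n × Fin n)
  | k + 1, n => LocalType k n × Set (LocalType k (n + 1))

instance LocalType.finite : ∀ k n : ℕ, Finite (LocalType k n)
  | 0, n => inferInstanceAs (Finite (Set (Fin n × Fin n) × Set (Fin n × Fin n)))
  | k + 1, n =>
    have := LocalType.finite k n
    have := LocalType.finite k (n + 1)
    inferInstanceAs (Finite (LocalType k n × Set (LocalType k (n + 1))))

section LocalType

variable {V W : Type*}

/-- The rank-`k` local type of a tuple: the isomorphism type of the tuple if `k = 0`, and otherwise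
its type of rank `k - 1` together with those of its extensions by a vertex at distance at most
`2 ^ (k - 1)`. -/
def localType (G : SimpleGraph V) : ∀ (k : ℕ) {n : ℕ}, (Fin n → V) → LocalType k n
  | 0, _, a => ({p | a p.1 = a p.2}, {p | G.Adj (a p.1) (a p.2)})
  | k + 1, n, a => (localType G k a,
      {τ | ∃ x : V, Near G (2 ^ k) (Set.range a) x ∧
        localType G k (Fin.snoc a x : Fin (n + 1) → V) = τ})

theorem localBackAndForth_of_localType_eq {G : SimpleGraph V} {H : SimpleGraph W} {k n : ℕ}
    {a : Fin n → V} {b : Fin n → W} (h : localType G k a = localType H k b) :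
    LocalBackAndForth G H k (Set.range fun i => (a i, b i)) := by
  induction k generalizing n with
  | zero =>
    obtain ⟨heq, hadj⟩ := Prod.ext_iff.1 h
    rintro _ ⟨i, rfl⟩ _ ⟨j, rfl⟩
    exact ⟨Set.ext_iff.1 heq (i, j), Set.ext_iff.1 hadj (i, j)⟩
  | succ k ih =>
    obtain ⟨htype, hext⟩ := Prod.ext_iff.1 h
    have hfst : Prod.fst '' Set.range (fun i => (a i, b i)) = Set.range a := by
      rw [← Set.range_comp]; rfl
    have hsnd : Prod.snd '' Set.range (fun i => (a i, b i)) = Set.range b := by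
      rw [← Set.range_comp]; rfl
    simp only [LocalBackAndForth, hfst, hsnd, ← range_snoc_prod_snoc]
    refine ⟨ih htype, fun x hx => ?_, fun y hy => ?_⟩
    · obtain ⟨y, hy, hτ⟩ := (Set.ext_iff.1 hext _).1 ⟨x, hx, rfl⟩
      exact ⟨y, hy, ih hτ.symm⟩
    · obtain ⟨x, hx, hτ⟩ := (Set.ext_iff.1 hext _).2 ⟨y, hy, rfl⟩
      exact ⟨x, hx, ih hτ⟩

theorem localBackAndForth_singleton {G : SimpleGraph V} {H : SimpleGraph W} {k : ℕ} {x : V} {y : W}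
    (h : localType G k (fun _ : Fin 1 => x) = localType H k fun _ => y) :
    LocalBackAndForth G H k {(x, y)} := by
  simpa only [Set.range_const] using localBackAndForth_of_localType_eq h

theorem localBackAndForth_empty (G : SimpleGraph V) (H : SimpleGraph W) (k : ℕ) :
    LocalBackAndForth G H k ∅ := by
  induction k with
  | zero => exact fun p hp => hp.elim
  | succ k ih => simpa [LocalBackAndForth, Near] using ih

end LocalType

/-! ### Pendant copies of a rooted graph -/

section Pendant

variable {V W : Type*} {G : SimpleGraph V} {H : SimpleGraph W} {y : V} {f g : V → W}

/-- `f` embeds `G` as an induced subgraph of `H` of which only the root `f y` may have neighbours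
outside. -/
structure IsPendant (G : SimpleGraph V) (H : SimpleGraph W) (y : V) (f : V → W) : Prop where
  injective : Function.Injective f
  adj_iff : ∀ a b, H.Adj (f a) (f b) ↔ G.Adj a b
  mem_range_of_adj : ∀ a, a ≠ y → ∀ w, H.Adj (f a) w → w ∈ Set.range f

theorem IsPendant.dist_map_le (hf : IsPendant G H y f) (hG : G.Connected) (a b : V) :
    H.dist (f a) (f b) ≤ G.dist a b := by
  obtain ⟨p, hp⟩ := hG.exists_walk_length_eq_dist a b
  let φ : G →g H := ⟨f, fun {a b} => (hf.adj_iff a b).2⟩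
  calc H.dist (φ a) (φ b) ≤ (p.map φ).length := SimpleGraph.dist_le _
    _ = G.dist a b := by rw [SimpleGraph.Walk.length_map, hp]

theorem IsPendant.walk_inside_or_through_root (hf : IsPendant G H y f) (hG : G.Connected)
    {u w : W} (p : H.Walk u w) {a : V} (hu : u = f a) :
    (∃ x, f x = w ∧ G.dist a x ≤ p.length) ∨ G.dist a y + H.dist (f y) w ≤ p.length := by
  induction p generalizing a with
  | nil => exact .inl ⟨a, hu.symm, by simp⟩
  | @cons u v w h p ih =>
    subst hu
    by_cases ha : a = y
    · subst ha
      right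
      simpa using SimpleGraph.dist_le (p.cons h)
    · obtain ⟨b, rfl⟩ := hf.mem_range_of_adj a ha v h
      have hab : G.dist a b = 1 := SimpleGraph.dist_eq_one_iff_adj.2 ((hf.adj_iff a b).1 h)
      rw [SimpleGraph.Walk.length_cons]
      rcases ih rfl with ⟨x, hx, hd⟩ | hd
      · have := hG.dist_triangle (u := a) (v := b) (w := x)
        exact .inl ⟨x, hx, by omega⟩
      · have := hG.dist_triangle (u := a) (v := b) (w := y)
        exact .inr (by omega)

theorem IsPendant.dist_inside_or_through_root (hf : IsPendant G H y f) (hG : G.Connected)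
    (hH : H.Connected) (a : V) (w : W) :
    (∃ x, f x = w ∧ G.dist a x ≤ H.dist (f a) w) ∨
      G.dist a y + H.dist (f y) w ≤ H.dist (f a) w := by
  obtain ⟨p, hp⟩ := hH.exists_walk_length_eq_dist (f a) w
  exact hp ▸ hf.walk_inside_or_through_root hG p rfl

theorem IsPendant.dist_root_add_le (hf : IsPendant G H y f) (hG : G.Connected) (hH : H.Connected)
    (a : V) {w : W} (hw : w ∉ Set.range f) : G.dist a y + H.dist (f y) w ≤ H.dist (f a) w :=
  (hf.dist_inside_or_through_root hG hH a w).resolve_left fun ⟨x, hx, _⟩ => hw ⟨x, hx⟩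

theorem IsPendant.two_mul_dist_le (hf : IsPendant G H y f) (hg : IsPendant G H y g)
    (hG : G.Connected) (hH : H.Connected) (hfg : Disjoint (Set.range f) (Set.range g)) (a : V) :
    2 * G.dist a y ≤ H.dist (f a) (g a) := by
  have hleave := hf.dist_root_add_le hG hH a (hfg.symm.notMem_of_mem_left ⟨a, rfl⟩)
  have henter := hg.dist_root_add_le hG hH a (hfg.notMem_of_mem_left ⟨y, rfl⟩)
  rw [H.dist_comm (u := g a)] at henter
  omega

theorem IsPendant.near_image_iff (hf : IsPendant G H y f) (hG : G.Connected) (hH : H.Connected)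
    {A : Set V} {r : ℕ} (hA : ∀ a ∈ A, r < G.dist a y) {w : W} :
    Near H r (f '' A) w ↔ ∃ x, Near G r A x ∧ f x = w := by
  constructor
  · rintro ⟨_, ⟨a, ha, rfl⟩, hd⟩
    rw [H.dist_comm] at hd
    have := hA a ha
    rcases hf.dist_inside_or_through_root hG hH a w with ⟨x, hx, hx'⟩ | hd'
    · exact ⟨x, ⟨a, ha, G.dist_comm (u := a) ▸ hx'.trans hd⟩, hx⟩
    · omega
  · rintro ⟨x, ⟨a, ha, hd⟩, rfl⟩
    exact ⟨f a, ⟨a, ha, rfl⟩, (hf.dist_map_le hG x a).trans hd⟩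

theorem IsPendant.localType_comp (hf : IsPendant G H y f) (hG : G.Connected) (hH : H.Connected)
    {k n : ℕ} {a : Fin n → V} (ha : ∀ i, 2 ^ k < G.dist (a i) y) :
    localType H k (f ∘ a) = localType G k a := by
  induction k generalizing n with
  | zero =>
    refine Prod.ext (Set.ext fun p => ?_) (Set.ext fun p => ?_)
    exacts [hf.injective.eq_iff, hf.adj_iff _ _]
  | succ k ih =>
    rw [pow_succ, mul_two] at ha
    have hlt (i : Fin n) : 2 ^ k < G.dist (a i) y := by have := ha i; omega
    have hsnoc {x : V} (hx : Near G (2 ^ k) (Set.range a) x) :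
        localType H k (Fin.snoc (f ∘ a) (f x) : Fin (n + 1) → W) =
          localType G k (Fin.snoc a x : Fin (n + 1) → V) := by
      rw [← Fin.comp_snoc]
      refine ih fun i => ?_
      induction i using Fin.lastCases with
      | last =>
        obtain ⟨_, ⟨i, rfl⟩, hd⟩ := hx
        have := ha i
        have := hG.dist_triangle (u := a i) (v := x) (w := y)
        rw [G.dist_comm (u := a i) (v := x)] at this
        rw [Fin.snoc_last]
        omega
      | cast i => rw [Fin.snoc_castSucc]; exact hlt i
    refine Prod.ext (ih hlt) (Set.ext fun τ => ?_)
    simp only [localType, Set.range_comp, hf.near_image_iff hG hH (Set.forall_mem_range.2 hlt)]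
    constructor
    · rintro ⟨_, ⟨x, hx, rfl⟩, rfl⟩
      exact ⟨x, hx, (hsnoc hx).symm⟩
    · rintro ⟨x, hx, rfl⟩
      exact ⟨f x, ⟨x, hx, rfl⟩, hsnoc hx⟩

end Pendant

/-! ### Bridges and attached copies -/

section BridgeJoin

/-- `G` is a connected member of the class `C`. -/
def ConnMem (C : GraphClassOn) {V : Type} [Finite V] (G : SimpleGraph V) : Prop :=
  C V G ∧ G.Connected

theorem ConnMem.of_iso {C : GraphClassOn} (hIso : ClassIsoInvariant C) {V W : Type} [Finite V]
    [Finite W] {G : SimpleGraph V} {H : SimpleGraph W} (hG : ConnMem C G) (e : G ≃g H) :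
    ConnMem C H :=
  ⟨(hIso V W G H ⟨e⟩).1 hG.1, e.connected_iff.1 hG.2⟩

/-- The disjoint union of `G` and `H` together with the bridge between `u` and `v`. -/
def bridgeJoin {V W : Type*} (G : SimpleGraph V) (H : SimpleGraph W) (u : V) (v : W) :
    SimpleGraph (V ⊕ W) :=
  (G ⊕g H) ⊔ SimpleGraph.edge (.inl u) (.inr v)

section

variable {V W : Type*} {G : SimpleGraph V} {H : SimpleGraph W} {u : V} {v : W}

@[simp]
theorem bridgeJoin_adj_inl_inl {a b : V} :
    (bridgeJoin G H u v).Adj (.inl a) (.inl b) ↔ G.Adj a b := by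
  simp [bridgeJoin, SimpleGraph.edge_adj]

@[simp]
theorem bridgeJoin_adj_inl_inr {a : V} {b : W} :
    (bridgeJoin G H u v).Adj (.inl a) (.inr b) ↔ a = u ∧ b = v := by
  simp [bridgeJoin, SimpleGraph.edge_adj]

@[simp]
theorem bridgeJoin_adj_inr_inl {a : W} {b : V} :
    (bridgeJoin G H u v).Adj (.inr a) (.inl b) ↔ a = v ∧ b = u := by
  simp [bridgeJoin, SimpleGraph.edge_adj]

@[simp]
theorem bridgeJoin_adj_inr_inr {a b : W} :
    (bridgeJoin G H u v).Adj (.inr a) (.inr b) ↔ H.Adj a b := by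
  simp [bridgeJoin, SimpleGraph.edge_adj]

theorem isPendant_inl_bridgeJoin : IsPendant G (bridgeJoin G H u v) u Sum.inl where
  injective := Sum.inl_injective
  adj_iff _ _ := bridgeJoin_adj_inl_inl
  mem_range_of_adj := by
    rintro a ha (b | b) h
    · exact ⟨b, rfl⟩
    · exact absurd (bridgeJoin_adj_inl_inr.1 h).1 ha

end

/-- The class is closed under joining two of its connected members by a bridge. -/
def ClassBridgeJoinClosed (C : GraphClassOn) : Prop :=
  ∀ (V W : Type) [Finite V] [Finite W] (G : SimpleGraph V) (H : SimpleGraph W) (u : V) (v : W),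
    ConnMem C G → ConnMem C H → C (V ⊕ W) (bridgeJoin G H u v)

section

variable {V W : Type} {G : SimpleGraph V} {H : SimpleGraph W}

theorem supp_connectedComponentMk_inl (hG : G.Preconnected) (a : V) :
    ((G ⊕g H).connectedComponentMk (.inl a)).supp = Set.range Sum.inl := by
  ext (b | b) <;> simp only [SimpleGraph.ConnectedComponent.mem_supp_iff,
    SimpleGraph.ConnectedComponent.eq, Set.mem_range, Sum.inl.injEq, exists_eq, iff_true,
    reduceCtorEq, exists_false, iff_false]
  · exact (hG b a).map SimpleGraph.Embedding.sumInl.toHom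
  · exact fun h => SimpleGraph.not_reachable_sum_inl_inr a b h.symm

theorem supp_connectedComponentMk_inr (hH : H.Preconnected) (b : W) :
    ((G ⊕g H).connectedComponentMk (.inr b)).supp = Set.range Sum.inr := by
  ext (a | a) <;> simp only [SimpleGraph.ConnectedComponent.mem_supp_iff,
    SimpleGraph.ConnectedComponent.eq, Set.mem_range, Sum.inr.injEq, exists_eq, iff_true,
    reduceCtorEq, exists_false, iff_false]
  · exact SimpleGraph.not_reachable_sum_inl_inr a b
  · exact (hH a b).map SimpleGraph.Embedding.sumInr.toHom

theorem ClassIsoInvariant.mem_induce {C : GraphClassOn} (hIso : ClassIsoInvariant C) [Finite V]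
    [Finite W] (f : G ↪g H) {s : Set W} (hs : s = Set.range f) (hG : C V G) : C s (H.induce s) := by
  subst hs
  exact (hIso _ _ _ _ ⟨f.isoInduceRange⟩).1 hG

theorem ClassDecomposable.sum_mem {C : GraphClassOn} (hC : ClassDecomposable C)
    (hIso : ClassIsoInvariant C) [Finite V] [Finite W] (hG : ConnMem C G) (hH : ConnMem C H) :
    C (V ⊕ W) (G ⊕g H) := by
  refine (hC _ _).2 fun c => ?_
  induction c using SimpleGraph.ConnectedComponent.ind with | h v
  rcases v with a | b
  · exact hIso.mem_induce SimpleGraph.Embedding.sumInl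
      (supp_connectedComponentMk_inl hG.2.preconnected a) hG.1
  · exact hIso.mem_induce SimpleGraph.Embedding.sumInr
      (supp_connectedComponentMk_inr hH.2.preconnected b) hH.1

end

theorem ClassAddable.bridgeJoinClosed {C : GraphClassOn} (hC : ClassAddable C)
    (hIso : ClassIsoInvariant C) : ClassBridgeJoinClosed C :=
  fun _ _ _ _ _ _ u v hG hH =>
    hC.2 _ _ _ _ (hC.1.sum_mem hIso hG hH) (SimpleGraph.not_reachable_sum_inl_inr u v)

theorem ConnMem.bridgeJoin {C : GraphClassOn} (hC : ClassBridgeJoinClosed C) {V W : Type}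
    [Finite V] [Finite W] {G : SimpleGraph V} {H : SimpleGraph W} (hG : ConnMem C G)
    (hH : ConnMem C H) (u : V) (v : W) : ConnMem C (bridgeJoin G H u v) :=
  ⟨hC V W G H u v hG hH, hG.2.sum_sup_edge hH.2⟩

theorem connMem_bot_fin_one {C : GraphClassOn} (hone : C (Fin 1) ⊥) :
    ConnMem C (⊥ : SimpleGraph (Fin 1)) :=
  ⟨hone, SimpleGraph.connected_bot_iff.2 ⟨inferInstance, inferInstance⟩⟩

theorem exists_connMem_le_dist {C : GraphClassOn} (hJoin : ClassBridgeJoinClosed C)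
    (hone : C (Fin 1) ⊥) (n : ℕ) :
    ∃ (V : Type) (_ : Finite V) (G : SimpleGraph V) (x y : V), ConnMem C G ∧ n ≤ G.dist x y := by
  induction n with
  | zero => exact ⟨Fin 1, inferInstance, ⊥, 0, 0, connMem_bot_fin_one hone, Nat.zero_le _⟩
  | succ n ih =>
    obtain ⟨V, _, G, x, y, hG, hd⟩ := ih
    have hF := hG.bridgeJoin hJoin (connMem_bot_fin_one hone) y 0
    have hadd := isPendant_inl_bridgeJoin.dist_root_add_le hG.2 hF.2 x (w := .inr 0) (by simp)
    have hpos := hF.2.pos_dist_of_ne (u := .inl y) (v := .inr 0) (by simp)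
    exact ⟨_, inferInstance, _, .inl x, .inr 0, hF, by omega⟩

end BridgeJoin

section AttachCopies

variable {U J K : Type*}

/-- The graph `G` together with copies of `H` indexed by `J`, where the root `y` of the `j`-th copy
is joined to the vertex `t j` of `G`. -/
def attachCopies (G : SimpleGraph U) (H : SimpleGraph K) (y : K) (t : J → U) :
    SimpleGraph (U ⊕ J × K) where
  Adj
    | .inl a, .inl b => G.Adj a b
    | .inl a, .inr (j, k) => a = t j ∧ k = y
    | .inr (j, k), .inl a => a = t j ∧ k = y
    | .inr (j, k), .inr (i, l) => j = i ∧ H.Adj k l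
  symm := ⟨by
    rintro (a | ⟨j, k⟩) (b | ⟨i, l⟩) h
    exacts [SimpleGraph.Adj.symm h, h, h, ⟨h.1.symm, h.2.symm⟩]⟩
  loopless := ⟨by
    rintro (a | ⟨j, k⟩) h
    exacts [G.irrefl h, H.irrefl h.2]⟩

variable {G : SimpleGraph U} {H : SimpleGraph K} {y : K} {t : J → U}

@[simp]
theorem attachCopies_adj_inl_inl {a b : U} :
    (attachCopies G H y t).Adj (.inl a) (.inl b) ↔ G.Adj a b :=
  Iff.rfl

@[simp]
theorem attachCopies_adj_inl_inr {a : U} {p : J × K} :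
    (attachCopies G H y t).Adj (.inl a) (.inr p) ↔ a = t p.1 ∧ p.2 = y :=
  Iff.rfl

@[simp]
theorem attachCopies_adj_inr_inl {a : U} {p : J × K} :
    (attachCopies G H y t).Adj (.inr p) (.inl a) ↔ a = t p.1 ∧ p.2 = y :=
  Iff.rfl

@[simp]
theorem attachCopies_adj_inr_inr {p q : J × K} :
    (attachCopies G H y t).Adj (.inr p) (.inr q) ↔ p.1 = q.1 ∧ H.Adj p.2 q.2 :=
  Iff.rfl

theorem attachCopies_injective (H : SimpleGraph K) (y : K) :
    Function.Injective2 fun (G : SimpleGraph U) (t : J → U) => attachCopies G H y t := by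
  intro G G' t t' h
  have hadj (v w : U ⊕ J × K) :
      (attachCopies G H y t).Adj v w ↔ (attachCopies G' H y t').Adj v w := by
    simp only at h
    rw [h]
  refine ⟨?_, ?_⟩
  · ext a b
    exact hadj (.inl a) (.inl b)
  · ext j
    exact ((hadj (.inl (t j)) (.inr (j, y))).1 ⟨rfl, rfl⟩).1

theorem isPendant_attachCopies (j : J) :
    IsPendant H (attachCopies G H y t) y fun k => .inr (j, k) where
  injective k l h := by simpa using h
  adj_iff k l := by simp
  mem_range_of_adj := by
    rintro k hk (a | ⟨i, l⟩) h
    · exact absurd h.2 hk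
    · exact ⟨l, by rw [show j = i from h.1]⟩

/-- Reindexing the attached copies. -/
def attachCopiesCongr {J' : Type*} (e : J ≃ J') (t : J' → U) :
    attachCopies G H y (t ∘ e) ≃g attachCopies G H y t where
  toEquiv := (Equiv.refl U).sumCongr (e.prodCongr (Equiv.refl K))
  map_rel_iff' := by rintro (a | p) (b | q) <;> simp

/-- Attaching no copies. -/
def attachCopiesEmpty [IsEmpty J] (t : J → U) : attachCopies G H y t ≃g G where
  toEquiv := Equiv.sumEmpty U (J × K)
  map_rel_iff' := by
    rintro (a | p) (b | q)
    exacts [Iff.rfl, isEmptyElim q, isEmptyElim p, isEmptyElim p]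

/-- Attaching one more copy by a bridge. -/
def attachCopiesOption (t : Option J → U) :
    bridgeJoin (attachCopies G H y (t ∘ some)) H (.inl (t none)) y ≃g attachCopies G H y t where
  toEquiv := (Equiv.sumAssoc U (J × K) K).trans
    ((Equiv.refl U).sumCongr ((Equiv.sumComm _ _).trans optionProdEquiv.symm))
  map_rel_iff' := by
    rintro ((a | p) | k) ((b | q) | l) <;> simp [optionProdEquiv, and_comm]

theorem ConnMem.attachCopies {C : GraphClassOn} (hIso : ClassIsoInvariant C)
    (hJoin : ClassBridgeJoinClosed C) {U J K : Type} [Finite U] [Finite J] [Finite K]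
    {G : SimpleGraph U} {H : SimpleGraph K} (hG : ConnMem C G) (hH : ConnMem C H) (y : K)
    (t : J → U) : ConnMem C (attachCopies G H y t) := by
  refine Finite.induction_empty_option
    (P := fun J => ∀ [Finite J] (t : J → U), ConnMem C (_root_.attachCopies G H y t)) ?_ ?_ ?_ J t
  · intro I I' e ih _ t
    have := Finite.of_equiv I' e.symm
    exact (ih (t ∘ e)).of_iso hIso (attachCopiesCongr e t)
  · exact fun t => hG.of_iso hIso (attachCopiesEmpty t).symm
  · exact fun ih _ t =>
      ((ih (t ∘ some)).bridgeJoin hJoin hH _ y).of_iso hIso (attachCopiesOption t)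

end AttachCopies

/-! ### Appearances -/

section Appearance

variable {K T T' : Type*} [Fintype K] [Fintype T] [Fintype T'] {H : SimpleGraph K} {y : K}
  {G : SimpleGraph T} {G' : SimpleGraph T'} {f : K → T}

open Classical in
/-- An appearance of the rooted graph `(H, y)` in `G`: a pendant copy whose root has degree at most
`Fintype.card K` in `G`. The bound on the degree is what limits the number of appearances through a
given vertex. -/
structure IsAppearance (H : SimpleGraph K) (y : K) (G : SimpleGraph T) (f : K → T) : Prop where
  isPendant : IsPendant H G y f
  degree_root_le : G.degree (f y) ≤ Fintype.card K

/-- The finset of all appearances of `(H, y)` in `G`. -/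
noncomputable def appearances (H : SimpleGraph K) (y : K) (G : SimpleGraph T) : Finset (K → T) :=
  (Set.toFinite {f | IsAppearance H y G f}).toFinset

@[simp]
theorem mem_appearances : f ∈ appearances H y G ↔ IsAppearance H y G f := by
  simp [appearances]

theorem IsAppearance.comp_iso (hf : IsAppearance H y G f) (e : G ≃g G') :
    IsAppearance H y G' (e ∘ f) where
  isPendant :=
    { injective := e.injective.comp hf.isPendant.injective
      adj_iff a b := e.map_adj_iff.trans (hf.isPendant.adj_iff a b)
      mem_range_of_adj := by
        intro a ha w hw
        obtain ⟨v, rfl⟩ := e.surjective w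
        obtain ⟨b, rfl⟩ := hf.isPendant.mem_range_of_adj a ha _ (e.map_adj_iff.1 hw)
        exact ⟨b, rfl⟩ }
  degree_root_le := by
    classical exact (e.degree_eq (f y)).trans_le hf.degree_root_le

theorem card_appearances_le_of_iso (e : G ≃g G') :
    (appearances H y G).card ≤ (appearances H y G').card :=
  Finset.card_le_card_of_injOn (e ∘ ·)
    (fun _ hf => mem_appearances.2 ((mem_appearances.1 hf).comp_iso e))
    e.injective.comp_left.injOn

open Classical in
theorem IsAppearance.degree_le (hf : IsAppearance H y G f) (a : K) :
    G.degree (f a) ≤ Fintype.card K := by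
  by_cases ha : a = y
  · exact ha ▸ hf.degree_root_le
  · have hsub : G.neighborFinset (f a) ⊆ Finset.univ.image f := fun w hw => by
      obtain ⟨b, rfl⟩ := hf.isPendant.mem_range_of_adj a ha _ ((G.mem_neighborFinset _ _).1 hw)
      exact Finset.mem_image_of_mem f (Finset.mem_univ b)
    exact (Finset.card_le_card hsub).trans Finset.card_image_le

open Classical in
/-- The vertices that can be reached from `w` by a walk of length at most `i` all of whose vertices,
except possibly the last, have degree at most `d`. -/
noncomputable def lowDegreeBall (d : ℕ) (G : SimpleGraph T) (w : T) : ℕ → Finset T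
  | 0 => {w}
  | i + 1 => lowDegreeBall d G w i ∪
      {u ∈ lowDegreeBall d G w i | G.degree u ≤ d}.biUnion fun u => G.neighborFinset u

theorem card_lowDegreeBall_le (d : ℕ) (G : SimpleGraph T) (w : T) (i : ℕ) :
    (lowDegreeBall d G w i).card ≤ (d + 1) ^ i := by
  classical
  induction i with
  | zero => simp [lowDegreeBall]
  | succ i ih =>
    have hnbr := Finset.card_biUnion_le_card_mul {u ∈ lowDegreeBall d G w i | G.degree u ≤ d}
      (fun u => G.neighborFinset u) d fun u hu => (Finset.mem_filter.1 hu).2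
    calc (lowDegreeBall d G w (i + 1)).card
        ≤ (lowDegreeBall d G w i).card + (lowDegreeBall d G w i).card * d :=
          (Finset.card_union_le _ _).trans
            (by gcongr; exact hnbr.trans (by gcongr; exact Finset.filter_subset _ _))
      _ = (lowDegreeBall d G w i).card * (d + 1) := by ring
      _ ≤ (d + 1) ^ i * (d + 1) := by gcongr
      _ = (d + 1) ^ (i + 1) := (pow_succ _ _).symm

theorem lowDegreeBall_mono (d : ℕ) (G : SimpleGraph T) (w : T) :
    Monotone (lowDegreeBall d G w) := by
  classical exact monotone_nat_of_le_succ fun _ => Finset.subset_union_left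

theorem IsAppearance.mem_lowDegreeBall (hf : IsAppearance H y G f) {w : T} {a b : K}
    (p : H.Walk a b) {i : ℕ} (ha : f a ∈ lowDegreeBall (Fintype.card K) G w i) :
    f b ∈ lowDegreeBall (Fintype.card K) G w (i + p.length) := by
  classical
  induction p generalizing i with
  | nil => exact ha
  | cons h p ih =>
    rw [SimpleGraph.Walk.length_cons, add_comm p.length, ← add_assoc]
    refine ih (Finset.mem_union_right _ <| Finset.mem_biUnion.2
      ⟨_, Finset.mem_filter.2 ⟨ha, hf.degree_le _⟩, ?_⟩)
    exact (G.mem_neighborFinset _ _).2 ((hf.isPendant.adj_iff _ _).2 h)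

/-- An upper bound for the number of appearances of a connected rooted graph on `d` vertices that
contain a given vertex. -/
def appearanceBound (d : ℕ) : ℕ :=
  ((d + 1) ^ d) ^ d

theorem card_le_of_forall_mem_range (hH : H.Connected) {S : Finset (K → T)}
    (hS : S ⊆ appearances H y G) {w : T} (hw : ∀ f ∈ S, w ∈ Set.range f) :
    S.card ≤ appearanceBound (Fintype.card K) := by
  classical
  have hsub : S ⊆
      Fintype.piFinset fun _ : K => lowDegreeBall (Fintype.card K) G w (Fintype.card K) := by
    intro f hf
    obtain ⟨u, rfl⟩ := hw f hf
    refine Fintype.mem_piFinset.2 fun a => ?_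
    obtain ⟨p, hp, -⟩ := hH.exists_path_of_dist u a
    have hball := (mem_appearances.1 (hS hf)).mem_lowDegreeBall p (w := f u) (i := 0)
      (Finset.mem_singleton_self _)
    rw [zero_add] at hball
    exact lowDegreeBall_mono _ G (f u) hp.length_lt.le hball
  calc S.card ≤ _ := Finset.card_le_card hsub
    _ = (lowDegreeBall (Fintype.card K) G w (Fintype.card K)).card ^ Fintype.card K := by
      rw [Fintype.card_piFinset, Finset.prod_const, Finset.card_univ]
    _ ≤ appearanceBound (Fintype.card K) :=
      Nat.pow_le_pow_left (card_lowDegreeBall_le _ G w _) _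

theorem card_le_of_forall_exists_mem_range (hH : H.Connected) {S : Finset (K → T)}
    (hS : S ⊆ appearances H y G) {X : Finset T} (hX : ∀ f ∈ S, ∃ w ∈ X, w ∈ Set.range f) :
    S.card ≤ X.card * appearanceBound (Fintype.card K) := by
  classical
  have hsub : S ⊆ X.biUnion fun w => {f ∈ S | w ∈ Set.range f} := by
    intro f hf
    obtain ⟨w, hw, hwf⟩ := hX f hf
    exact Finset.mem_biUnion.2 ⟨w, hw, Finset.mem_filter.2 ⟨hf, hwf⟩⟩
  exact (Finset.card_le_card hsub).trans <| Finset.card_biUnion_le_card_mul _ _ _ fun w _ =>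
    card_le_of_forall_mem_range hH ((Finset.filter_subset _ _).trans hS)
      fun f hf => (Finset.mem_filter.1 hf).2

theorem exists_pairwiseDisjoint_appearances (hH : H.Connected) {N : ℕ}
    (hN : N * Fintype.card K * appearanceBound (Fintype.card K) < (appearances H y G).card) :
    ∃ F ⊆ appearances H y G, F.card = N ∧ (F : Set (K → T)).PairwiseDisjoint Set.range := by
  classical
  induction N with
  | zero => exact ⟨∅, Finset.empty_subset _, rfl, by simp⟩
  | succ N ih =>
    have hlt : N * Fintype.card K * appearanceBound (Fintype.card K) < (appearances H y G).card :=
      hN.trans_le' (by gcongr; omega)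
    obtain ⟨F, hF, hcard, hdisj⟩ := ih hlt
    let X : Finset T := F.biUnion fun f => Finset.univ.image f
    have hX : X.card ≤ N * Fintype.card K :=
      hcard ▸ Finset.card_biUnion_le_card_mul _ _ _ fun f _ => Finset.card_image_le
    obtain ⟨f, hf, hfX⟩ : ∃ f ∈ appearances H y G, ¬∃ w ∈ X, w ∈ Set.range f := by
      by_contra! hall
      have hle := card_le_of_forall_exists_mem_range hH Finset.Subset.rfl hall
      exact hlt.not_ge (hle.trans (by gcongr))
    have hfF : ∀ g ∈ F, Disjoint (Set.range f) (Set.range g) := by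
      refine fun g hg => Set.disjoint_right.2 ?_
      rintro _ ⟨a, rfl⟩ hw
      exact hfX ⟨g a, Finset.mem_biUnion.2 ⟨g, hg, by simp⟩, hw⟩
    obtain ⟨r⟩ := hH.nonempty
    have hfnot : f ∉ F := fun hmem => Set.disjoint_left.1 (hfF f hmem) ⟨r, rfl⟩ ⟨r, rfl⟩
    refine ⟨insert f F, Finset.insert_subset hf hF, ?_, ?_⟩
    · rw [Finset.card_insert_of_notMem hfnot, hcard]
    rw [Finset.coe_insert]
    exact hdisj.insert fun g hg _ => hfF g hg

variable {U J : Type*} [Fintype U] [Fintype J] {F : SimpleGraph U} {t : J → U}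

theorem isAppearance_attachCopies (j : J) :
    IsAppearance H y (attachCopies F H y t) fun k => .inr (j, k) where
  isPendant := isPendant_attachCopies j
  degree_root_le := by
    classical
    let g : K → U ⊕ J × K := fun k => if k = y then .inl (t j) else .inr (j, k)
    have hsub : (attachCopies F H y t).neighborFinset (.inr (j, y)) ⊆ Finset.univ.image g := by
      rintro (a | ⟨i, k⟩) h <;> simp only [SimpleGraph.mem_neighborFinset] at h <;>
        simp only [Finset.mem_image, Finset.mem_univ, true_and]
      · exact ⟨y, by simp only [g, if_pos, h.1]⟩
      · exact ⟨k, by simp only [g, if_neg h.2.ne', show j = i from h.1]⟩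
    exact (Finset.card_le_card hsub).trans Finset.card_image_le

theorem IsAppearance.of_attachCopies {f : K → U}
    (hf : IsAppearance H y (attachCopies F H y t) (Sum.inl ∘ f)) : IsAppearance H y F f where
  isPendant :=
    { injective := hf.isPendant.injective.of_comp
      adj_iff := hf.isPendant.adj_iff
      mem_range_of_adj := by
        intro a ha w hw
        obtain ⟨b, hb⟩ := hf.isPendant.mem_range_of_adj a ha (.inl w) hw
        exact ⟨b, Sum.inl_injective hb⟩ }
  degree_root_le := hf.degree_root_le.trans' <|
    Finset.card_le_card_of_injOn Sum.inl (fun w hw => by simpa using hw) Sum.inl_injective.injOn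

theorem card_appearances_attachCopies_le (hH : H.Connected) :
    (appearances H y (attachCopies F H y t)).card ≤
      (appearances H y F).card +
        Fintype.card J * Fintype.card K * appearanceBound (Fintype.card K) := by
  classical
  let X : Finset (U ⊕ J × K) := Finset.univ.image Sum.inr
  have hX : X.card ≤ Fintype.card J * Fintype.card K :=
    Finset.card_image_le.trans_eq (by rw [Finset.card_univ, Fintype.card_prod])
  have hsub : appearances H y (attachCopies F H y t) ⊆
      (appearances H y F).image (Sum.inl ∘ ·) ∪
        {f ∈ appearances H y (attachCopies F H y t) | ∃ w ∈ X, w ∈ Set.range f} := by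
    intro f hf
    by_cases hfX : ∃ w ∈ X, w ∈ Set.range f
    · exact Finset.mem_union_right _ (Finset.mem_filter.2 ⟨hf, hfX⟩)
    · have hleft (k : K) : ∃ u, f k = .inl u := by
        cases hk : f k with
        | inl u => exact ⟨u, rfl⟩
        | inr p => exact absurd ⟨.inr p, by simp [X], k, hk⟩ hfX
      choose g hg using hleft
      obtain rfl : f = Sum.inl ∘ g := funext hg
      exact Finset.mem_union_left _ <|
        Finset.mem_image_of_mem _ (mem_appearances.2 (mem_appearances.1 hf).of_attachCopies)
  have hmeet := (card_le_of_forall_exists_mem_range hH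
    (Finset.filter_subset (fun f => ∃ w ∈ X, w ∈ Set.range f)
      (appearances H y (attachCopies F H y t)))
    fun f hf => (Finset.mem_filter.1 hf).2).trans (Nat.mul_le_mul_right _ hX)
  exact (Finset.card_le_card hsub).trans <| (Finset.card_union_le _ _).trans <|
    Nat.add_le_add Finset.card_image_le hmeet

end Appearance

/-! ### Counting labelled graphs -/

section Labelling

theorem card_le_card_of_trans_symm_mem_range {α T Γ : Type*} [Fintype Γ]
    (ψ : Γ → Equiv.Perm α) {S : Finset (α ≃ T)}
    (hS : ∀ σ ∈ S, ∀ τ ∈ S, σ.trans τ.symm ∈ Set.range ψ) : S.card ≤ Fintype.card Γ := by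
  classical
  obtain rfl | ⟨τ, hτ⟩ := S.eq_empty_or_nonempty
  · exact Nat.zero_le _
  have hsub : S ⊆ Finset.univ.image fun γ => (ψ γ).trans τ := by
    intro σ hσ
    obtain ⟨γ, hγ⟩ := hS σ hσ τ hτ
    refine Finset.mem_image.2 ⟨γ, Finset.mem_univ γ, ?_⟩
    rw [hγ, Equiv.trans_assoc, Equiv.symm_trans_self, Equiv.trans_refl]
  exact (Finset.card_le_card hsub).trans Finset.card_image_le

variable {α β T : Type*} [Fintype α]

theorem card_labellings_le_of_mapsTo_inl [Fintype β] {S : Finset (α ⊕ β ≃ T)}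
    (hS : ∀ σ ∈ S, ∀ τ ∈ S,
      Set.MapsTo (σ.trans τ.symm) (Set.range Sum.inl) (Set.range Sum.inl)) :
    S.card ≤ (Fintype.card α).factorial * (Fintype.card β).factorial := by
  classical
  have hcard := card_le_card_of_trans_symm_mem_range (Equiv.Perm.sumCongrHom α β) (S := S)
    fun σ hσ τ hτ => Equiv.Perm.mem_sumCongrHom_range_of_perm_mapsTo_inl (hS σ hσ τ hτ)
  rwa [Fintype.card_prod, Fintype.card_perm, Fintype.card_perm] at hcard

theorem card_labellings_le_of_comp_inr_eq [Finite β] {S : Finset (α ⊕ β ≃ T)} {g : β → T}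
    (hS : ∀ σ ∈ S, σ ∘ Sum.inr = g) : S.card ≤ (Fintype.card α).factorial := by
  classical
  rw [← Fintype.card_perm]
  refine card_le_card_of_trans_symm_mem_range (fun p : Equiv.Perm α => p.sumCongr (Equiv.refl β))
    fun σ hσ τ hτ => ?_
  have hinr (b : β) : σ.trans τ.symm (.inr b) = .inr b := by
    rw [Equiv.trans_apply, Equiv.symm_apply_eq]
    exact congrFun ((hS σ hσ).trans (hS τ hτ).symm) b
  obtain ⟨⟨p, q⟩, hpq⟩ := Equiv.Perm.mem_sumCongrHom_range_of_perm_mapsTo_inl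
    (σ := σ.trans τ.symm) <| by
      rintro _ ⟨a, rfl⟩
      cases h : σ.trans τ.symm (.inl a) with
      | inl c => exact ⟨c, rfl⟩
      | inr b => exact absurd ((σ.trans τ.symm).injective (h.trans (hinr b).symm)) Sum.inl_ne_inr
  refine ⟨p, ?_⟩
  rw [← hpq]
  ext (a | b)
  · rfl
  · rw [← hpq] at hinr
    exact (hinr b).symm

end Labelling

section ConnMembers

/-- The connected members of the class on the vertex set `Fin n`. -/
noncomputable def connMembers (C : GraphClassOn) (n : ℕ) : Finset (SimpleGraph (Fin n)) :=
  (Set.toFinite {G | ConnMem C G}).toFinset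

/-- The connected members of the class on the vertex set `Fin n` with at most `L` appearances of
`(H, y)`. -/
noncomputable def fewAppearances (C : GraphClassOn) {K : Type*} [Fintype K] (H : SimpleGraph K)
    (y : K) (L n : ℕ) : Finset (SimpleGraph (Fin n)) :=
  (Set.toFinite {G | ConnMem C G ∧ (appearances H y G).card ≤ L}).toFinset

variable {C : GraphClassOn}

@[simp]
theorem mem_connMembers {n : ℕ} {G : SimpleGraph (Fin n)} : G ∈ connMembers C n ↔ ConnMem C G := by
  simp [connMembers]

@[simp]
theorem mem_fewAppearances {K : Type*} [Fintype K] {H : SimpleGraph K} {y : K} {L n : ℕ}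
    {G : SimpleGraph (Fin n)} :
    G ∈ fewAppearances C H y L n ↔ ConnMem C G ∧ (appearances H y G).card ≤ L := by
  simp [fewAppearances]

theorem card_pos_connMembers (hIso : ClassIsoInvariant C) (hJoin : ClassBridgeJoinClosed C)
    (hone : C (Fin 1) ⊥) {n : ℕ} (hn : 1 ≤ n) : 0 < (connMembers C n).card := by
  induction n, hn using Nat.le_induction with
  | base => exact Finset.card_pos.2 ⟨⊥, mem_connMembers.2 (connMem_bot_fin_one hone)⟩
  | succ n hn ih =>
    obtain ⟨G, hG⟩ := Finset.card_pos.1 ih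
    have hF := (mem_connMembers.1 hG).bridgeJoin hJoin (connMem_bot_fin_one hone) ⟨0, hn⟩ 0
    exact Finset.card_pos.2
      ⟨_, mem_connMembers.2 (hF.of_iso hIso (SimpleGraph.Iso.map finSumFinEquiv _))⟩

end ConnMembers

section Pendant

variable {U J K T : Type*} [Fintype U] [Fintype J] [Fintype K] [Fintype T] {H : SimpleGraph K}
  {y : K}

theorem card_attachCopies_fiber_le {R : SimpleGraph T}
    {S : Finset (SimpleGraph U × (U ⊕ J × K ≃ T) × (J → U))}
    (hS : ∀ p ∈ S, (attachCopies p.1 H y p.2.2).map p.2.1 = R) :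
    S.card ≤ (Fintype.card U).factorial * (appearances H y R).card ^ Fintype.card J := by
  classical
  have hinj : Set.InjOn (fun p => p.2.1) (S : Set (SimpleGraph U × (U ⊕ J × K ≃ T) × (J → U))) := by
    rintro ⟨G, σ, t⟩ hp ⟨G', τ, t'⟩ hp' (rfl : σ = τ)
    obtain ⟨rfl, rfl⟩ := attachCopies_injective H y <|
      SimpleGraph.map_injective σ.toEmbedding ((hS _ hp).trans (hS _ hp').symm)
    rfl
  have hmaps : ∀ σ ∈ S.image (fun p => p.2.1), (fun j k => σ (.inr (j, k))) ∈
      Fintype.piFinset fun _ : J => appearances H y R := by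
    intro σ hσ
    obtain ⟨p, hp, rfl⟩ := Finset.mem_image.1 hσ
    rw [Fintype.mem_piFinset, ← hS p hp]
    exact fun j => mem_appearances.2
      ((isAppearance_attachCopies j).comp_iso (SimpleGraph.Iso.map p.2.1 _))
  calc S.card = (S.image fun p => p.2.1).card := (Finset.card_image_of_injOn hinj).symm
    _ ≤ (Fintype.card U).factorial * (Fintype.piFinset fun _ : J => appearances H y R).card := by
      refine Finset.card_le_mul_card_image_of_maps_to hmaps _ fun g _ =>
        card_labellings_le_of_comp_inr_eq (g := Function.uncurry g) fun σ hσ => ?_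
      rw [← (Finset.mem_filter.1 hσ).2]
      rfl
    _ = _ := by rw [Fintype.card_piFinset, Finset.prod_const, Finset.card_univ]

end Pendant

/-- Attach `m` copies of `H` to each member with few appearances, in all possible ways, and count
the labelled results twice: each of them has few appearances, hence arises in few ways. -/
theorem card_fewAppearances_mul_le {C : GraphClassOn} (hIso : ClassIsoInvariant C)
    (hJoin : ClassBridgeJoinClosed C) {K : Type} [Fintype K] {H : SimpleGraph K} (hH : ConnMem C H)
    (y : K) (L n m : ℕ) :
    (fewAppearances C H y L n).card * ((n + m * Fintype.card K).factorial * n ^ m) ≤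
      n.factorial * (L + m * Fintype.card K * appearanceBound (Fintype.card K)) ^ m *
        (connMembers C (n + m * Fintype.card K)).card := by
  classical
  let I : Finset (SimpleGraph (Fin n) × (Fin n ⊕ Fin m × K ≃ Fin (n + m * Fintype.card K)) ×
    (Fin m → Fin n)) := fewAppearances C H y L n ×ˢ Finset.univ
  have hI : I.card =
      (fewAppearances C H y L n).card * ((n + m * Fintype.card K).factorial * n ^ m) := by
    rw [Finset.card_product, Finset.card_univ, Fintype.card_prod,
      Fintype.card_equiv (Fintype.equivOfCardEq (by simp))]
    simp
  rw [← hI]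
  refine Finset.card_le_mul_card_image_of_maps_to
    (f := fun p => (attachCopies p.1 H y p.2.2).map p.2.1) ?_ _ fun R _ => ?_
  · intro p hp
    have hG := (mem_fewAppearances.1 (Finset.mem_product.1 hp).1).1
    exact mem_connMembers.2
      ((hG.attachCopies hIso hJoin hH y p.2.2).of_iso hIso (SimpleGraph.Iso.map p.2.1 _))
  · have hfiber := card_attachCopies_fiber_le
      (S := {p ∈ I | (attachCopies p.1 H y p.2.2).map p.2.1 = R})
      fun p hp => (Finset.mem_filter.1 hp).2
    obtain hempty | ⟨p, hp⟩ :=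
      {p ∈ I | (attachCopies p.1 H y p.2.2).map p.2.1 = R}.eq_empty_or_nonempty
    · rw [hempty]
      exact Nat.zero_le _
    obtain ⟨hpI, rfl⟩ := Finset.mem_filter.1 hp
    have hR : (appearances H y ((attachCopies p.1 H y p.2.2).map p.2.1)).card ≤
        L + m * Fintype.card K * appearanceBound (Fintype.card K) := by
      have hle := (card_appearances_le_of_iso (H := H) (y := y)
        (SimpleGraph.Iso.map p.2.1 (attachCopies p.1 H y p.2.2)).symm).trans
          (card_appearances_attachCopies_le hH.2)
      rw [Fintype.card_fin] at hle
      exact hle.trans <| Nat.add_le_add_right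
        (mem_fewAppearances.1 (Finset.mem_product.1 hpI).1).2 _
    rw [Fintype.card_fin, Fintype.card_fin] at hfiber
    exact hfiber.trans (by gcongr)

section Bridge

variable {U K T : Type*}

theorem bridgeJoin_injective {G G' : SimpleGraph U} {H H' : SimpleGraph K} {u u' : U} {v v' : K}
    (h : bridgeJoin G H u v = bridgeJoin G' H' u' v') :
    ((G, H), u, v) = ((G', H'), u', v') := by
  have hadj (a b : U ⊕ K) : (bridgeJoin G H u v).Adj a b ↔ (bridgeJoin G' H' u' v').Adj a b := by
    rw [h]
  have hG : G = G' := by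
    ext a b
    simpa using hadj (.inl a) (.inl b)
  have hH : H = H' := by
    ext a b
    simpa using hadj (.inr a) (.inr b)
  obtain ⟨rfl, rfl⟩ : u = u' ∧ v = v' := by simpa using hadj (.inl u) (.inr v)
  rw [hG, hH]

theorem exists_iso_coe_eq_of_map_eq {V W : Type*} {G : SimpleGraph V} {G' : SimpleGraph W}
    {σ : V ≃ T} {τ : W ≃ T} (h : G.map σ = G'.map τ) : ∃ e : G ≃g G', ⇑e = σ.trans τ.symm := by
  refine ⟨⟨σ.trans τ.symm, fun {a b} => ?_⟩, rfl⟩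
  have hab : (G'.map τ).Adj (σ a) (σ b) ↔ G.Adj a b := h ▸ (SimpleGraph.Iso.map σ G).map_adj_iff
  exact (SimpleGraph.Iso.map τ G').symm.map_adj_iff.trans hab

theorem exists_adj_mem_notMem {V : Type*} {G : SimpleGraph V} (hG : G.Preconnected) {S : Set V}
    {a b : V} (ha : a ∈ S) (hb : b ∉ S) : ∃ c d, G.Adj c d ∧ c ∈ S ∧ d ∉ S := by
  obtain ⟨p⟩ := hG a b
  obtain ⟨d, -, hfst, hsnd⟩ := p.exists_boundary_dart S ha hb
  exact ⟨d.fst, d.snd, d.adj, hfst, hsnd⟩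

variable {G G' : SimpleGraph U} {H H' : SimpleGraph K} {u u' : U} {v v' : K}

theorem eq_and_eq_of_bridgeJoin_iso_of_adj (e : bridgeJoin G H u v ≃g bridgeJoin G' H' u' v')
    (he : e (.inl u) = .inl u') {x z : U ⊕ K} (hxz : (bridgeJoin G H u v).Adj x z)
    (hx : e x ∈ Set.range Sum.inl) (hz : e z ∉ Set.range Sum.inl) :
    x = .inl u ∧ e z = .inr v' := by
  obtain ⟨a, ha⟩ := hx
  obtain ⟨b, hb⟩ : ∃ b, e z = .inr b := by
    cases h : e z with
    | inl c => exact absurd ⟨c, h.symm⟩ hz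
    | inr b => exact ⟨b, rfl⟩
  have hadj := e.map_adj_iff.2 hxz
  rw [← ha, hb, bridgeJoin_adj_inl_inr] at hadj
  exact ⟨e.injective (by rw [he, ← ha, hadj.1]), by rw [hb, hadj.2]⟩

variable [Fintype U] [Fintype K]

theorem exists_apply_inr_notMem_range_inl (hcard : Fintype.card U ≤ Fintype.card K)
    (σ : Equiv.Perm (U ⊕ K)) (hσ : σ (.inl u) = .inl u') :
    ∃ k, σ (.inr k) ∉ Set.range Sum.inl := by
  by_contra! hK
  have hopt (o : Option K) : ∃ a, .inl a = σ (o.elim (.inl u) .inr) := by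
    cases o with
    | none => exact ⟨u', hσ.symm⟩
    | some k => exact hK k
  choose g hg using hopt
  have hinj : Function.Injective g := by
    intro o o' h
    have := σ.injective ((hg o).symm.trans ((congrArg Sum.inl h).trans (hg o')))
    cases o <;> cases o' <;> simp_all
  have := Fintype.card_le_of_injective g hinj
  rw [Fintype.card_option] at this
  omega

/-- The smaller side of a bridge is determined by its endpoint in it. -/
theorem mapsTo_range_inl_of_bridgeJoin_iso (hG : G.Preconnected) (hH : H.Preconnected)
    (hcard : Fintype.card U ≤ Fintype.card K)
    (e : bridgeJoin G H u v ≃g bridgeJoin G' H' u' v') (he : e (.inl u) = .inl u') :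
    Set.MapsTo e (Set.range Sum.inl) (Set.range Sum.inl) := by
  have hroot : e (.inl u) ∈ Set.range Sum.inl := ⟨u', he.symm⟩
  have hv : e (.inr v) ∉ Set.range Sum.inl := by
    intro hv
    obtain ⟨k, hk⟩ := exists_apply_inr_notMem_range_inl hcard e.toEquiv he
    obtain ⟨a, b, hab, ha, hb⟩ := exists_adj_mem_notMem hH
      (S := {k | e (.inr k) ∈ Set.range Sum.inl}) hv hk
    exact absurd (eq_and_eq_of_bridgeJoin_iso_of_adj e he (bridgeJoin_adj_inr_inr.2 hab) ha hb).1
      Sum.inr_ne_inl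
  rintro _ ⟨a, rfl⟩
  by_contra ha
  obtain ⟨b, c, hbc, hb, hc⟩ := exists_adj_mem_notMem hG
    (S := {a | e (.inl a) ∈ Set.range Sum.inl}) hroot ha
  have hcv := (eq_and_eq_of_bridgeJoin_iso_of_adj e he (bridgeJoin_adj_inl_inl.2 hbc) hb hc).2.trans
    (eq_and_eq_of_bridgeJoin_iso_of_adj e he (bridgeJoin_adj_inl_inr.2 ⟨rfl, rfl⟩) hroot hv).2.symm
  exact absurd (e.injective hcv) Sum.inl_ne_inr

theorem card_bridgeJoin_fiber_le {R : SimpleGraph T} {x : T}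
    (hcard : Fintype.card U ≤ Fintype.card K)
    {S : Finset (((SimpleGraph U × SimpleGraph K) × U × K) × (U ⊕ K ≃ T))}
    (hconn : ∀ p ∈ S, p.1.1.1.Preconnected ∧ p.1.1.2.Preconnected)
    (hmap : ∀ p ∈ S, (bridgeJoin p.1.1.1 p.1.1.2 p.1.2.1 p.1.2.2).map p.2 = R)
    (hroot : ∀ p ∈ S, p.2 (.inl p.1.2.1) = x) :
    S.card ≤ (Fintype.card U).factorial * (Fintype.card K).factorial := by
  classical
  have hinj : Set.InjOn Prod.snd
      (S : Set (((SimpleGraph U × SimpleGraph K) × U × K) × (U ⊕ K ≃ T))) := by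
    rintro ⟨q, σ⟩ hp ⟨q', τ⟩ hp' (rfl : σ = τ)
    have := bridgeJoin_injective <|
      SimpleGraph.map_injective σ.toEmbedding ((hmap _ hp).trans (hmap _ hp').symm)
    exact congrArg (·, σ) this
  rw [← Finset.card_image_of_injOn hinj]
  refine card_labellings_le_of_mapsTo_inl fun σ hσ τ hτ => ?_
  obtain ⟨p, hp, rfl⟩ := Finset.mem_image.1 hσ
  obtain ⟨q, hq, rfl⟩ := Finset.mem_image.1 hτ
  obtain ⟨e, he⟩ := exists_iso_coe_eq_of_map_eq ((hmap p hp).trans (hmap q hq).symm)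
  rw [← he]
  refine mapsTo_range_inl_of_bridgeJoin_iso (hconn p hp).1 (hconn p hp).2 hcard e ?_
  rw [he, Equiv.trans_apply, hroot p hp, Equiv.symm_apply_eq, hroot q hq]

end Bridge

section Supermultiplicative

variable {C : GraphClassOn} (hIso : ClassIsoInvariant C) (hJoin : ClassBridgeJoinClosed C)
include hIso hJoin

theorem card_connMembers_mul_le_of_le {m n : ℕ} (hmn : m ≤ n) :
    (connMembers C m).card * (connMembers C n).card * (m * n * (m + n).factorial) ≤
      m.factorial * n.factorial * ((connMembers C (m + n)).card * (m + n)) := by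
  classical
  let I : Finset (((SimpleGraph (Fin m) × SimpleGraph (Fin n)) × Fin m × Fin n) ×
      (Fin m ⊕ Fin n ≃ Fin (m + n))) :=
    ((connMembers C m ×ˢ connMembers C n) ×ˢ Finset.univ) ×ˢ Finset.univ
  have hI : I.card =
      (connMembers C m).card * (connMembers C n).card * (m * n * (m + n).factorial) := by
    rw [Finset.card_product, Finset.card_product, Finset.card_product, Finset.card_univ,
      Finset.card_univ, Fintype.card_prod, Fintype.card_equiv finSumFinEquiv, Fintype.card_sum,
      Fintype.card_fin, Fintype.card_fin, mul_assoc _ (m * n)]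
  have hmaps : ∀ p ∈ I,
      ((bridgeJoin p.1.1.1 p.1.1.2 p.1.2.1 p.1.2.2).map p.2, p.2 (.inl p.1.2.1)) ∈
        connMembers C (m + n) ×ˢ Finset.univ := by
    intro p hp
    simp only [I, Finset.mem_product, mem_connMembers, Finset.mem_univ, and_true] at hp ⊢
    exact (hp.1.bridgeJoin hJoin hp.2 p.1.2.1 p.1.2.2).of_iso hIso (SimpleGraph.Iso.map p.2 _)
  rw [← hI]
  refine (Finset.card_le_mul_card_image_of_maps_to hmaps (m.factorial * n.factorial)
    fun Rx _ => ?_).trans_eq (by rw [Finset.card_product, Finset.card_univ, Fintype.card_fin])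
  have hfiber := card_bridgeJoin_fiber_le (R := Rx.1) (x := Rx.2) (by simpa using hmn)
    (S := {p ∈ I | ((bridgeJoin p.1.1.1 p.1.1.2 p.1.2.1 p.1.2.2).map p.2,
      p.2 (.inl p.1.2.1)) = Rx}) ?_ ?_ ?_
  · rwa [Fintype.card_fin, Fintype.card_fin] at hfiber
  · intro p hp
    simp only [I, Finset.mem_filter, Finset.mem_product, mem_connMembers, Finset.mem_univ,
      and_true] at hp
    exact ⟨hp.1.1.2.preconnected, hp.1.2.2.preconnected⟩
  · exact fun p hp => congrArg Prod.fst (Finset.mem_filter.1 hp).2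
  · exact fun p hp => congrArg Prod.snd (Finset.mem_filter.1 hp).2

theorem card_connMembers_mul_le (m n : ℕ) :
    (connMembers C m).card * (connMembers C n).card * (m * n * (m + n).factorial) ≤
      m.factorial * n.factorial * ((connMembers C (m + n)).card * (m + n)) := by
  obtain hmn | hnm := le_total m n
  · exact card_connMembers_mul_le_of_le hIso hJoin hmn
  · convert card_connMembers_mul_le_of_le hIso hJoin hnm using 1
    · rw [add_comm n m]; ring
    · rw [add_comm n m]; ring

end Supermultiplicative

/-! ### Growth of the number of connected members -/

section Supermultiplicative

variable {g : ℕ → ℝ}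

theorem subadditive_neg_log (hzero : 0 ≤ g 0) (hpos : ∀ n, 1 ≤ n → 0 < g n)
    (hmul : ∀ m n, g m * g n ≤ g (m + n)) : Subadditive fun n => -Real.log (g n) := by
  have hlog : Real.log (g 0) ≤ 0 := by
    refine Real.log_nonpos hzero ?_
    by_contra! h
    nlinarith [hmul 0 0]
  intro m n
  obtain rfl | hm := m.eq_zero_or_pos
  · rw [zero_add]
    linarith
  obtain rfl | hn := n.eq_zero_or_pos
  · rw [add_zero]
    linarith
  have hle := Real.log_le_log (mul_pos (hpos m hm) (hpos n hn)) (hmul m n)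
  rw [Real.log_mul (hpos m hm).ne' (hpos n hn).ne'] at hle
  linarith

theorem bddBelow_neg_log_div (hpos : ∀ n, 1 ≤ n → 0 < g n) {D : ℝ}
    (hD : ∀ n, 1 ≤ n → g n ≤ D ^ n) :
    BddBelow (Set.range fun n : ℕ => -Real.log (g n) / n) := by
  refine ⟨-|Real.log D|, ?_⟩
  rintro _ ⟨n, rfl⟩
  obtain rfl | hn := n.eq_zero_or_pos
  · simp
  have hle := Real.log_le_log (hpos n hn) (hD n hn)
  rw [Real.log_pow] at hle
  have hn' : (0 : ℝ) < n := Nat.cast_pos.2 hn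
  rw [le_div_iff₀ hn']
  nlinarith [le_abs_self (Real.log D)]

/-- Fekete's lemma for supermultiplicative sequences. -/
theorem exists_growth_rate_of_supermultiplicative (hzero : 0 ≤ g 0)
    (hpos : ∀ n, 1 ≤ n → 0 < g n) (hmul : ∀ m n, g m * g n ≤ g (m + n)) {D : ℝ}
    (hD : ∀ n, 1 ≤ n → g n ≤ D ^ n) :
    ∃ γ > 0, (∀ n, 1 ≤ n → g n ≤ γ ^ n) ∧ ∀ x > 1, ∀ᶠ n in atTop, γ ^ n ≤ x ^ n * g n := by
  have hsub := subadditive_neg_log hzero hpos hmul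
  have hbdd := bddBelow_neg_log_div hpos hD
  refine ⟨Real.exp (-hsub.lim), Real.exp_pos _, fun n hn => ?_, fun x hx => ?_⟩
  · have hlim := hsub.lim_le_div hbdd (Nat.one_le_iff_ne_zero.1 hn)
    rw [le_div_iff₀ (Nat.cast_pos.2 hn)] at hlim
    rw [← Real.exp_nat_mul, ← Real.log_le_iff_le_exp (hpos n hn)]
    linarith
  · have hev := (hsub.tendsto_lim hbdd).eventually_lt_const
      (lt_add_of_pos_right hsub.lim (Real.log_pos hx))
    filter_upwards [hev, eventually_ge_atTop 1] with n hlt hn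
    rw [div_lt_iff₀ (Nat.cast_pos.2 hn)] at hlt
    rw [← Real.exp_nat_mul, ← Real.le_log_iff_exp_le (mul_pos (by positivity) (hpos n hn)),
      Real.log_mul (by positivity) (hpos n hn).ne', Real.log_pow]
    linarith

/-- Choose `m = n / s` for a constant `s` so large that `B * m / n ≤ exp (-2)`. -/
theorem tendsto_zero_of_le_mul_div_pow_mul {r a : ℕ → ℝ} {B : ℝ} (hB : 0 ≤ B)
    (hr : ∀ n, 0 ≤ r n) (ha : ∀ x > 1, ∀ᶠ n in atTop, a n ≤ x ^ n)
    (hra : ∀ m n : ℕ, 1 ≤ m → 1 ≤ n → r n ≤ (B * m / n) ^ m * a n) :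
    Tendsto r atTop (𝓝 0) := by
  obtain ⟨s, hs⟩ := exists_nat_ge (max 1 (B * Real.exp 2))
  have hs₁ : 1 ≤ s := Nat.one_le_cast.1 ((le_max_left _ _).trans hs)
  have : (0 : ℝ) < s := Nat.cast_pos.2 hs₁
  have hBs : B ≤ s * Real.exp (-2) := by
    rw [Real.exp_neg, ← div_eq_mul_inv, le_div_iff₀ (Real.exp_pos 2)]
    exact (le_max_right _ _).trans hs
  have hexp : Tendsto (fun n : ℕ => Real.exp (1 - (n / s : ℕ))) atTop (𝓝 0) :=
    Real.tendsto_exp_atBot.comp <| tendsto_atBot_add_const_left _ _ <|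
      tendsto_neg_atTop_atBot.comp <|
        tendsto_natCast_atTop_atTop.comp <|
          Nat.tendsto_div_const_atTop (Nat.one_le_iff_ne_zero.1 hs₁)
  refine squeeze_zero' (.of_forall hr) ?_ hexp
  filter_upwards [ha (Real.exp (1 / s)) (Real.one_lt_exp_iff.2 (by positivity)),
    eventually_ge_atTop s] with n han hn
  have hm : 1 ≤ n / s := (Nat.one_le_div_iff hs₁).2 hn
  have hbase : B * (n / s : ℕ) / n ≤ Real.exp (-2) := by
    rw [div_le_iff₀ (Nat.cast_pos.2 (hs₁.trans hn))]
    calc B * (n / s : ℕ) ≤ s * Real.exp (-2) * (n / s) := by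
          gcongr
          exact Nat.cast_div_le
      _ = Real.exp (-2) * n := by field_simp
  have hfloor : (n : ℝ) / s ≤ (n / s : ℕ) + 1 := by
    rw [← Nat.floor_div_eq_div (K := ℝ)]
    exact (Nat.lt_floor_add_one _).le
  calc r n ≤ (B * (n / s : ℕ) / n) ^ (n / s) * a n := hra _ n hm (hs₁.trans hn)
    _ ≤ (B * (n / s : ℕ) / n) ^ (n / s) * Real.exp (1 / s) ^ n := by gcongr
    _ ≤ Real.exp (-2) ^ (n / s) * Real.exp (1 / s) ^ n := by gcongr
    _ = Real.exp ((n / s : ℕ) * (-2) + n / s) := by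
      rw [← Real.exp_nat_mul, ← Real.exp_nat_mul, ← Real.exp_add, mul_one_div]
    _ ≤ Real.exp (1 - (n / s : ℕ)) := Real.exp_le_exp.2 (by linarith)

end Supermultiplicative

/-- The normalized number of pairs of a connected member of the class on the vertex set `Fin n` and
a root vertex. The factor `n` makes this sequence supermultiplicative. -/
noncomputable def connWeight (C : GraphClassOn) (n : ℕ) : ℝ :=
  n * (connMembers C n).card / n.factorial

section ConnWeight

variable {C : GraphClassOn}

theorem exists_connWeight_le_pow (hSmall : ClassSmall C) :
    ∃ D : ℝ, ∀ n, connWeight C n ≤ D ^ n := by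
  obtain ⟨d, hd⟩ := hSmall
  have hcount (n : ℕ) : (connMembers C n).card ≤ classCount C n := by
    classical
    rw [classCount, Nat.card_eq_fintype_card, Fintype.card_subtype]
    exact Finset.card_le_card fun G hG => Finset.mem_filter.2
      ⟨Finset.mem_univ G, (mem_connMembers.1 hG).1⟩
  refine ⟨2 * |d|, fun n => ?_⟩
  have hn : (n : ℝ) ≤ 2 ^ n := by exact_mod_cast Nat.lt_two_pow_self.le
  rw [connWeight, div_le_iff₀ (by positivity), mul_pow, mul_assoc]
  gcongr
  calc ((connMembers C n).card : ℝ) ≤ classCount C n := Nat.cast_le.2 (hcount n)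
    _ ≤ d ^ n * n.factorial := hd n
    _ ≤ |d| ^ n * n.factorial :=
      mul_le_mul_of_nonneg_right ((le_abs_self _).trans_eq (abs_pow d n)) (Nat.cast_nonneg _)

variable (hIso : ClassIsoInvariant C) (hJoin : ClassBridgeJoinClosed C)
include hIso hJoin

theorem connWeight_mul_le (m n : ℕ) : connWeight C m * connWeight C n ≤ connWeight C (m + n) := by
  have hcard : ((connMembers C m).card : ℝ) * (connMembers C n).card *
      (m * n * (m + n).factorial) ≤
        m.factorial * n.factorial * ((connMembers C (m + n)).card * (m + n)) := by
    exact_mod_cast card_connMembers_mul_le hIso hJoin m n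
  rw [connWeight, connWeight, connWeight, div_mul_div_comm,
    div_le_div_iff₀ (by positivity) (by positivity)]
  push_cast
  linarith

theorem connWeight_pos (hone : C (Fin 1) ⊥) {n : ℕ} (hn : 1 ≤ n) : 0 < connWeight C n := by
  have := card_pos_connMembers hIso hJoin hone hn
  rw [connWeight]
  positivity

variable {K : Type} [Fintype K] {H : SimpleGraph K}

theorem card_fewAppearances_mul_pow_le (hH : ConnMem C H) (y : K) (L : ℕ) {γ : ℝ}
    (hγ : ∀ n, 1 ≤ n → connWeight C n ≤ γ ^ n) {m n : ℕ} (hm : 1 ≤ m) (hn : 1 ≤ n) :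
    ((fewAppearances C H y L n).card : ℝ) * (n ^ m * n) ≤
      n.factorial * ((L + Fintype.card K * appearanceBound (Fintype.card K)) * m) ^ m *
        γ ^ (n + m * Fintype.card K) := by
  set h := Fintype.card K
  set b := appearanceBound h
  set N := n + m * h
  have hnN : (n : ℝ) ≤ N := Nat.cast_le.2 (Nat.le_add_right _ _)
  have hcount : ((fewAppearances C H y L n).card : ℝ) * (N.factorial * n ^ m) ≤
      n.factorial * (L + m * h * b : ℝ) ^ m * (connMembers C N).card := by
    exact_mod_cast card_fewAppearances_mul_le hIso hJoin hH y L n m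
  have hlarge : (n : ℝ) * (connMembers C N).card ≤ γ ^ N * N.factorial := by
    have hN := hγ N (hn.trans (Nat.le_add_right _ _))
    rw [connWeight, div_le_iff₀ (by positivity)] at hN
    exact le_trans (by gcongr) hN
  have hbound : (L + m * h * b : ℝ) ≤ (L + h * b) * m := by
    have : (L : ℝ) ≤ L * m := le_mul_of_one_le_right (Nat.cast_nonneg L) (Nat.one_le_cast.2 hm)
    linarith
  refine le_of_mul_le_mul_right ?_ (Nat.cast_pos.2 N.factorial_pos)
  calc _ = (fewAppearances C H y L n).card * (N.factorial * (n : ℝ) ^ m) * n := by ring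
    _ ≤ n.factorial * (L + m * h * b) ^ m * (connMembers C N).card * n := by gcongr
    _ = n.factorial * (L + m * h * b) ^ m * (n * (connMembers C N).card) := by ring
    _ ≤ n.factorial * ((L + h * b) * m) ^ m * (γ ^ N * N.factorial) := by gcongr
    _ = _ := by ring

theorem card_fewAppearances_div_le (hone : C (Fin 1) ⊥) (hH : ConnMem C H) (y : K) (L : ℕ) {γ : ℝ}
    (hγ : ∀ n, 1 ≤ n → connWeight C n ≤ γ ^ n) {m n : ℕ} (hm : 1 ≤ m) (hn : 1 ≤ n) :
    ((fewAppearances C H y L n).card : ℝ) / (connMembers C n).card ≤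
      ((L + Fintype.card K * appearanceBound (Fintype.card K)) * γ ^ Fintype.card K * m / n) ^ m *
        (γ ^ n / connWeight C n) := by
  have hM : (0 : ℝ) < (connMembers C n).card :=
    Nat.cast_pos.2 (card_pos_connMembers hIso hJoin hone hn)
  have : (0 : ℝ) < n := Nat.cast_pos.2 hn
  have hfew := card_fewAppearances_mul_pow_le hIso hJoin hH y L hγ hm hn
  rw [← le_div_iff₀ (by positivity)] at hfew
  rw [div_le_iff₀ hM]
  refine hfew.trans_eq ?_
  rw [connWeight, pow_add, mul_comm m, pow_mul, div_pow, mul_pow, mul_pow, mul_pow]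
  field_simp

theorem tendsto_card_fewAppearances_div (hone : C (Fin 1) ⊥) (hSmall : ClassSmall C)
    (hH : ConnMem C H) (y : K) (L : ℕ) :
    Tendsto (fun n => ((fewAppearances C H y L n).card : ℝ) / (connMembers C n).card) atTop
      (𝓝 0) := by
  obtain ⟨D, hD⟩ := exists_connWeight_le_pow hSmall
  have hpos (n : ℕ) : 1 ≤ n → 0 < connWeight C n := connWeight_pos hIso hJoin hone
  obtain ⟨γ, hγ, hle, hev⟩ := exists_growth_rate_of_supermultiplicative (by simp [connWeight])
    hpos (connWeight_mul_le hIso hJoin) fun n _ => hD n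
  refine tendsto_zero_of_le_mul_div_pow_mul (by positivity) (fun n => by positivity) ?_
    fun m n => card_fewAppearances_div_le hIso hJoin hone hH y L hle
  intro x hx
  filter_upwards [hev x hx, eventually_ge_atTop 1] with n hn hn₁
  exact (div_le_iff₀ (hpos n hn₁)).2 hn

end ConnWeight

/-! ### The zero-one law -/

section Probability

variable {C : GraphClassOn} {n : ℕ} {P Q : SimpleGraph (Fin n) → Prop}

theorem connClassProb_eq_card_div (C : GraphClassOn) (P : SimpleGraph (Fin n) → Prop)
    [DecidablePred P] :
    connClassProb C n P = ({G ∈ connMembers C n | P G}.card : ℝ) / (connMembers C n).card := by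
  classical
  rw [connClassProb, Nat.card_eq_fintype_card, Nat.card_eq_fintype_card,
    Fintype.card_of_subtype {G ∈ connMembers C n | P G} (by simp [ConnMem]),
    Fintype.card_of_subtype (connMembers C n) (by simp [ConnMem])]

theorem connClassProb_nonneg : 0 ≤ connClassProb C n P := by
  rw [connClassProb]
  positivity

theorem connClassProb_mono (h : ∀ G, ConnMem C G → P G → Q G) :
    connClassProb C n P ≤ connClassProb C n Q := by
  classical
  rw [connClassProb_eq_card_div, connClassProb_eq_card_div]
  gcongr (Nat.cast ?_) / _
  refine Finset.card_le_card fun G hG => ?_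
  obtain ⟨hG, hP⟩ := Finset.mem_filter.1 hG
  exact Finset.mem_filter.2 ⟨hG, h G (mem_connMembers.1 hG) hP⟩

theorem connClassProb_exists_le_sum {ι : Type*} [Fintype ι] (P : ι → SimpleGraph (Fin n) → Prop) :
    connClassProb C n (fun G => ∃ i, P i G) ≤ ∑ i, connClassProb C n (P i) := by
  classical
  simp only [connClassProb_eq_card_div, ← Finset.sum_div, ← Nat.cast_sum]
  gcongr (Nat.cast ?_) / _
  refine (Finset.card_le_card fun G hG => ?_).trans Finset.card_biUnion_le
  obtain ⟨hG, i, hi⟩ := Finset.mem_filter.1 hG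
  exact Finset.mem_biUnion.2 ⟨i, Finset.mem_univ i, Finset.mem_filter.2 ⟨hG, hi⟩⟩

theorem connClassProb_add_not (hpos : 0 < (connMembers C n).card) :
    connClassProb C n P + connClassProb C n (fun G => ¬P G) = 1 := by
  classical
  rw [connClassProb_eq_card_div, connClassProb_eq_card_div, ← add_div, ← Nat.cast_add,
    Finset.card_filter_add_card_filter_not, div_self (Nat.cast_ne_zero.2 hpos.ne')]

theorem exists_tendsto_connClassProb_of_agree (hpos : ∀ n, 1 ≤ n → 0 < (connMembers C n).card)
    {P Q : ∀ n, SimpleGraph (Fin n) → Prop}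
    (hQ : Tendsto (fun n => connClassProb C n fun G => ¬Q n G) atTop (𝓝 0))
    (hagree : ∀ {m n : ℕ} {G : SimpleGraph (Fin m)} {H : SimpleGraph (Fin n)}, ConnMem C G →
      ConnMem C H → Q m G → Q n H → P m G → P n H) :
    ∃ p : ℝ, (p = 0 ∨ p = 1) ∧ Tendsto (fun n => connClassProb C n (P n)) atTop (𝓝 p) := by
  have hzero {R : ∀ n, SimpleGraph (Fin n) → Prop}
      (hR : ∀ n G, ConnMem C G → R n G → ¬Q n G) :
      Tendsto (fun n => connClassProb C n (R n)) atTop (𝓝 0) :=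
    squeeze_zero (fun _ => connClassProb_nonneg) (fun n => connClassProb_mono (hR n)) hQ
  by_cases hex : ∃ (m : ℕ) (G : SimpleGraph (Fin m)), ConnMem C G ∧ Q m G ∧ P m G
  · obtain ⟨m, G, hG, hQG, hPG⟩ := hex
    refine ⟨1, .inr rfl, ?_⟩
    have hnot := hzero (R := fun n H => ¬P n H) fun n H hH hPH hQH =>
      hPH (hagree hG hH hQG hQH hPG)
    refine (sub_zero (1 : ℝ) ▸ hnot.const_sub 1).congr' ?_
    filter_upwards [eventually_ge_atTop 1] with n hn
    exact (eq_sub_of_add_eq (connClassProb_add_not (hpos n hn))).symm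
  · exact ⟨0, .inl rfl, hzero fun n G hG hP hQ => hex ⟨n, G, hG, hQ, hP⟩⟩

end Probability

section Rich

/-- The rank-`k` local type `τ` is realized in some connected member of the class by a vertex `x`
which is far from another vertex `y`, so that pendant copies rooted at `y` still realize `τ`. -/
def RealizableType (C : GraphClassOn) (k : ℕ) (τ : LocalType k 1) : Prop :=
  ∃ (K : Type) (_ : Finite K) (H : SimpleGraph K) (x y : K),
    ConnMem C H ∧ 2 ^ k < H.dist x y ∧ localType H k (fun _ => x) = τ

/-- `G` contains `N` scattered vertices of local type `τ`. -/
def HasScatteredType {V : Type*} (G : SimpleGraph V) (N : ℕ) {k : ℕ} (τ : LocalType k 1) : Prop :=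
  ∃ Y : Fin N → V, Scattered G (2 * 2 ^ k) Y ∧ ∀ i, localType G k (fun _ => Y i) = τ

/-- `G` contains `q + 2` scattered vertices of each realizable local type of rank at most `q`:
enough for Duplicator to survive `q` rounds, and to find far from any vertex another vertex. -/
def IsRich (C : GraphClassOn) (q : ℕ) {V : Type*} (G : SimpleGraph V) : Prop :=
  ∀ k ≤ q, ∀ τ : LocalType k 1, RealizableType C k τ → HasScatteredType G (q + 2) τ

variable {C : GraphClassOn}

theorem hasScatteredType_of_lt_card_appearances {K T : Type*} [Fintype K] [Fintype T]
    {H : SimpleGraph K} {G : SimpleGraph T} (hH : H.Connected) (hG : G.Connected) {k N : ℕ}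
    {x y : K} (hxy : 2 ^ k < H.dist x y)
    (hN : N * Fintype.card K * appearanceBound (Fintype.card K) < (appearances H y G).card) :
    HasScatteredType G N (localType H k fun _ => x) := by
  obtain ⟨F, hF, hcard, hdisj⟩ := exists_pairwiseDisjoint_appearances hH hN
  have hpend (f : F) : IsPendant H G y f := (mem_appearances.1 (hF f.2)).isPendant
  let e := F.equivFinOfCardEq hcard
  refine ⟨fun i => (e.symm i).1 x, fun i j hij => ?_, fun i => ?_⟩
  · have hne : (e.symm i).1 ≠ (e.symm j).1 := fun h => hij (e.symm.injective (Subtype.ext h))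
    have hdist := (hpend _).two_mul_dist_le (hpend _) hH hG
      (hdisj (e.symm i).2 (e.symm j).2 hne) x
    exact lt_of_lt_of_le (by omega) hdist
  · exact (hpend (e.symm i)).localType_comp hH hG fun _ => hxy

/-- Two scattered vertices cannot both be near `x`, so some vertex is far from `x`. -/
theorem IsRich.realizableType {q k : ℕ} {V : Type} [Finite V] {G : SimpleGraph V}
    (hrich : IsRich C q G) (hG : ConnMem C G) {σ : LocalType q 1} (hσ : RealizableType C q σ)
    (hk : k ≤ q) (x : V) : RealizableType C k (localType G k fun _ => x) := by
  obtain ⟨Y, hY, -⟩ := hrich q le_rfl σ hσ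
  have hfar : 2 * 2 ^ q < G.dist (Y 0) (Y 1) := hY (by simp)
  have htri := hG.2.dist_triangle (u := Y 0) (v := x) (w := Y 1)
  rw [G.dist_comm (u := Y 0) (v := x)] at htri
  have hpow : 2 ^ k ≤ 2 ^ q := Nat.pow_le_pow_right two_pos hk
  obtain h | h : 2 ^ k < G.dist x (Y 0) ∨ 2 ^ k < G.dist x (Y 1) := by omega
  exacts [⟨V, ‹_›, G, x, Y 0, hG, h, rfl⟩, ⟨V, ‹_›, G, x, Y 1, hG, h, rfl⟩]

theorem IsRich.satFO_iff {V W : Type} [Finite V] [Finite W] {G : SimpleGraph V}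
    {H : SimpleGraph W} {φ : Language.graph.Sentence} (hGrich : IsRich C (quantifierRank φ) G)
    (hHrich : IsRich C (quantifierRank φ) H) (hG : ConnMem C G) (hH : ConnMem C H)
    {σ : LocalType (quantifierRank φ) 1} (hσ : RealizableType C (quantifierRank φ) σ) :
    SatFO G φ ↔ SatFO H φ := by
  refine BackAndForth.satFO_iff <| (localBackAndForth_empty G H _).backAndForth hG.2 hH.2
    (q := quantifierRank φ) (ι := Fin (quantifierRank φ + 2)) (by simp) (fun l hl x => ?_)
    (fun l hl y => ?_) Set.finite_empty (by simp)
  · obtain ⟨Y, hY, htype⟩ := hHrich l hl.le _ (hGrich.realizableType hG hσ hl.le x)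
    exact ⟨Y, hY, fun i => localBackAndForth_singleton (htype i).symm⟩
  · obtain ⟨X, hX, htype⟩ := hGrich l hl.le _ (hHrich.realizableType hH hσ hl.le y)
    exact ⟨X, hX, fun i => localBackAndForth_singleton (htype i)⟩

end Rich

section ZeroOneLaw

variable {C : GraphClassOn} (hIso : ClassIsoInvariant C) (hJoin : ClassBridgeJoinClosed C)
  (hone : C (Fin 1) ⊥) (hSmall : ClassSmall C)
include hJoin hone

theorem exists_realizableType (k : ℕ) : ∃ τ, RealizableType C k τ := by
  obtain ⟨K, _, H, x, y, hH, hxy⟩ := exists_connMem_le_dist hJoin hone (2 ^ k + 1)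
  exact ⟨_, K, ‹_›, H, x, y, hH, hxy, rfl⟩

include hIso hSmall

theorem tendsto_connClassProb_not_hasScatteredType {k : ℕ} {τ : LocalType k 1}
    (hτ : RealizableType C k τ) (N : ℕ) :
    Tendsto (fun n => connClassProb C n fun G => ¬HasScatteredType G N τ) atTop (𝓝 0) := by
  classical
  obtain ⟨K, _, H, x, y, hH, hxy, rfl⟩ := hτ
  have := Fintype.ofFinite K
  let L := N * Fintype.card K * appearanceBound (Fintype.card K)
  refine squeeze_zero (fun _ => connClassProb_nonneg) (fun n => ?_)
    (tendsto_card_fewAppearances_div hIso hJoin hone hSmall hH y L)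
  rw [connClassProb_eq_card_div]
  gcongr
  intro G hG
  obtain ⟨hG, hnot⟩ := Finset.mem_filter.1 hG
  have hG := mem_connMembers.1 hG
  exact mem_fewAppearances.2 ⟨hG, not_lt.1 fun hL =>
    hnot (hasScatteredType_of_lt_card_appearances hH.2 hG.2 hxy hL)⟩

theorem tendsto_connClassProb_not_isRich (q : ℕ) :
    Tendsto (fun n => connClassProb C n fun G => ¬IsRich C q G) atTop (𝓝 0) := by
  let ι := Σ k : Fin (q + 1), {τ : LocalType k 1 // RealizableType C k τ}
  have := Fintype.ofFinite ι
  have hsum := tendsto_finsetSum (Finset.univ : Finset ι) fun i _ =>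
    tendsto_connClassProb_not_hasScatteredType hIso hJoin hone hSmall i.2.2 (q + 2)
  rw [Finset.sum_const_zero] at hsum
  refine squeeze_zero (fun _ => connClassProb_nonneg) (fun n => ?_) hsum
  refine (connClassProb_mono fun G _ hG => ?_).trans (connClassProb_exists_le_sum _)
  simp only [IsRich, not_forall] at hG
  obtain ⟨k, hk, τ, hτ, hnot⟩ := hG
  exact ⟨⟨⟨k, Nat.lt_succ_of_le hk⟩, τ, hτ⟩, hnot⟩

end ZeroOneLaw

theorem fo_zero_one_law_connected_general {C : GraphClassOn} (hIso : ClassIsoInvariant C)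
    (hJoin : ClassBridgeJoinClosed C) (hone : C (Fin 1) ⊥) (hSmall : ClassSmall C)
    (φ : Language.graph.Sentence) :
    ∃ p : ℝ, (p = 0 ∨ p = 1) ∧
      Tendsto (fun n => connClassProb C n fun G => SatFO G φ) atTop (𝓝 p) := by
  obtain ⟨σ, hσ⟩ := exists_realizableType hJoin hone (quantifierRank φ)
  exact exists_tendsto_connClassProb_of_agree (fun n => card_pos_connMembers hIso hJoin hone)
    (tendsto_connClassProb_not_isRich hIso hJoin hone hSmall (quantifierRank φ))
    fun hG hH hGrich hHrich => (hGrich.satFO_iff hHrich hG hH hσ).1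

/-- Zero-one law for first-order logic on the connected graphs of a
small addable class. -/
theorem fo_zero_one_law_connected
    (C : GraphClassOn) (hIso : ClassIsoInvariant C) (hAdd : ClassAddable C)
    (hSmall : ClassSmall C)
    (hne : ∀ n : ℕ, 1 ≤ n → ∃ G : SimpleGraph (Fin n), C (Fin n) G ∧ G.Connected)
    (φ : Language.graph.Sentence) :
    ∃ p : ℝ, (p = 0 ∨ p = 1) ∧
      Tendsto (fun n : ℕ => connClassProb C n (fun G => SatFO G φ)) atTop (𝓝 p) := by
  obtain ⟨G, hG, -⟩ := hne 1 le_rfl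
  exact fo_zero_one_law_connected_general hIso (hAdd.bridgeJoinClosed hIso)
    (Subsingleton.elim G ⊥ ▸ hG) hSmall φ
end

section
/- Let C be a smooth addable class of finite simple graphs with C_n nonempty for every n ≥ 1, and let φ be a sentence of first-order logic in the language of graphs. Then the probability that the uniformly random graph R_n(C) on vertex set Fin n drawn from C satisfies φ tends to a limit as n → ∞. -/
open Filter Topology FirstOrder

/-!
Fix a quantifier rank `k`. Call a rooted graph `(M, r)` of the class absorbing if joining `r` by an
edge to any connected rooted graph of the class does not change its rank-`k` type. Such graphs exist
because there are finitely many types and `k` pendant copies cannot be told apart from `k + 1`.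

With probability at least `1 - 2 / K`, the random graph has a giant component missing fewer than `K`
vertices, since otherwise many of its non-edges are bridges that could be added. The giant component
almost surely contains a pendant copy of `M`: attaching `M` to graphs without such a copy is
injective, and gains a factor of order `n`. Being a bridge of `M` with another graph, the giant then
has the rank-`k` theory of `M`, so only the graph formed by the small components matters.

The law of that graph converges. If `A`, `E` and `E_Q` are the exponential generating functions of
the class, of its graphs with all components of size at most `K`, and of those among them that
satisfy `Q`, then `(E_Q / E) * A` counts the graphs whose small part satisfies `Q`. Smoothness makes
the ratios of coefficients of `A` converge, the bridge-addable property bounds them, and `E` and its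
inverse solve `X F' = ± B F` with `B` a polynomial, which makes their coefficients summable.
-/

open SimpleGraph

namespace RandomGraphClass

universe u v

variable {ι κ V W V' W' : Type*}

/-! ### Gluing two graphs -/

/-- The graph on `V ⊕ W` made of `G`, of `H` and of the cross edges prescribed by `X`. -/
def glue (G : SimpleGraph V) (H : SimpleGraph W) (X : V → W → Prop) : SimpleGraph (V ⊕ W) where
  Adj
    | .inl a, .inl b => G.Adj a b
    | .inr a, .inr b => H.Adj a b
    | .inl a, .inr b => X a b
    | .inr b, .inl a => X a b
  symm := ⟨by rintro (a | a) (b | b) h <;> first | exact h | exact h.symm⟩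
  loopless := ⟨by rintro (a | a) h <;> exact h.ne rfl⟩

section Glue

variable {G : SimpleGraph V} {H : SimpleGraph W} {G' : SimpleGraph V'} {H' : SimpleGraph W'}
  {X : V → W → Prop} {a b : V} {x y : W}

@[simp] lemma glue_adj_inl_inl : (glue G H X).Adj (.inl a) (.inl b) ↔ G.Adj a b := Iff.rfl

@[simp] lemma glue_adj_inr_inr : (glue G H X).Adj (.inr x) (.inr y) ↔ H.Adj x y := Iff.rfl

@[simp] lemma glue_adj_inl_inr : (glue G H X).Adj (.inl a) (.inr x) ↔ X a x := Iff.rfl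

@[simp] lemma glue_adj_inr_inl : (glue G H X).Adj (.inr x) (.inl a) ↔ X a x := Iff.rfl

/-- Gluing respects isomorphisms that match the cross edges. -/
def glueIso {X' : V' → W' → Prop} (e : G ≃g G') (f : H ≃g H')
    (h : ∀ a x, X' (e a) (f x) ↔ X a x) : glue G H X ≃g glue G' H' X' where
  toEquiv := Equiv.sumCongr e.toEquiv f.toEquiv
  map_rel_iff' := by rintro (a | a) (b | b) <;> simp [h, e.map_adj_iff, f.map_adj_iff]

end Glue

/-- `G` and `H` side by side, joined by the single edge `r p`. -/
def bridge (G : SimpleGraph V) (H : SimpleGraph W) (r : V) (p : W) : SimpleGraph (V ⊕ W) :=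
  glue G H fun x y => x = r ∧ y = p

section Bridge

variable {G : SimpleGraph V} {H : SimpleGraph W} {G' : SimpleGraph V'} {H' : SimpleGraph W'}
  {r : V} {p : W}

@[simp] lemma bridge_adj_inl_inl {a b : V} :
    (bridge G H r p).Adj (.inl a) (.inl b) ↔ G.Adj a b := Iff.rfl

@[simp] lemma bridge_adj_inr_inr {x y : W} :
    (bridge G H r p).Adj (.inr x) (.inr y) ↔ H.Adj x y := Iff.rfl

@[simp] lemma bridge_adj_inl_inr {a : V} {x : W} :
    (bridge G H r p).Adj (.inl a) (.inr x) ↔ a = r ∧ x = p := Iff.rfl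

@[simp] lemma bridge_adj_inr_inl {a : V} {x : W} :
    (bridge G H r p).Adj (.inr x) (.inl a) ↔ a = r ∧ x = p := Iff.rfl

lemma bridge_eq_sum_sup_edge :
    bridge G H r p = (G ⊕g H) ⊔ fromEdgeSet {s(Sum.inl r, Sum.inr p)} := by
  ext (a | a) (b | b) <;> simp [and_comm]

/-- Bridging respects isomorphisms that match the ends of the bridge. -/
def bridgeIso (e : G ≃g G') (f : H ≃g H') (r : V) (p : W) :
    bridge G H r p ≃g bridge G' H' (e r) (f p) :=
  glueIso e f fun a x => by simp

/-- The order in which two graphs are bridged does not matter. -/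
def bridgeComm (G : SimpleGraph V) (H : SimpleGraph W) (r : V) (p : W) :
    bridge G H r p ≃g bridge H G p r where
  toEquiv := Equiv.sumComm V W
  map_rel_iff' := by rintro (a | a) (b | b) <;> simp [and_comm]

end Bridge

/-! ### Rank types -/

/-- The equality and adjacency pattern of a tuple of vertices. -/
def atomicType (G : SimpleGraph V) (a : ι → V) : (ι → ι → Prop) × (ι → ι → Prop) :=
  (fun i j => a i = a j, fun i j => G.Adj (a i) (a j))

lemma atomicType_eq_iff {G : SimpleGraph V} {H : SimpleGraph W} {a : ι → V} {b : ι → W} :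
    atomicType G a = atomicType H b ↔
      ∀ i j, (a i = a j ↔ b i = b j) ∧ (G.Adj (a i) (a j) ↔ H.Adj (b i) (b j)) := by
  simp only [atomicType, Prod.mk.injEq, funext_iff, eq_iff_iff, forall_and]

/-- The possible rank-`k` types of tuples indexed by `ι`. -/
def RankType : ℕ → Type u → Type u
  | 0, ι => (ι → ι → Prop) × (ι → ι → Prop)
  | k + 1, ι => ((ι → ι → Prop) × (ι → ι → Prop)) × Set (RankType k (Option ι))

/-- The rank-`k` type of a tuple `a` of vertices: its atomic type together with the rank-`(k - 1)`
types of its one-point extensions. Equality of rank-`k` types is the existence of a winning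
strategy for Duplicator in the `k`-round Ehrenfeucht–Fraïssé game. -/
def rankType : ∀ (k : ℕ) {ι : Type u} {V : Type v}, SimpleGraph V → (ι → V) → RankType k ι
  | 0, _, _, G, a => atomicType G a
  | k + 1, _, _, G, a => (atomicType G a, Set.range fun x => rankType k G (Option.elim' x a))

instance RankType.finite (k : ℕ) (ι : Type u) [Finite ι] : Finite (RankType k ι) := by
  induction k generalizing ι with
  | zero => unfold RankType; infer_instance
  | succ k ih => unfold RankType; have := ih (Option ι); infer_instance

section RankType

variable {k l : ℕ} {G : SimpleGraph V} {H : SimpleGraph W} {G' : SimpleGraph V'}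
  {H' : SimpleGraph W'} {a : ι → V} {b : ι → W}

lemma rankType_succ_eq_iff :
    rankType (k + 1) G a = rankType (k + 1) H b ↔ atomicType G a = atomicType H b ∧
      (∀ x, ∃ y, rankType k G (Option.elim' x a) = rankType k H (Option.elim' y b)) ∧
      ∀ y, ∃ x, rankType k G (Option.elim' x a) = rankType k H (Option.elim' y b) := by
  refine Prod.mk_inj.trans (and_congr_right' ?_)
  simp only [Set.Subset.antisymm_iff, Set.range_subset_iff, Set.mem_range,
    eq_comm (a := rankType k H _)]

lemma atomicType_eq_of_rankType_eq (h : rankType k G a = rankType k H b) :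
    atomicType G a = atomicType H b := by
  cases k with
  | zero => exact h
  | succ k => exact (rankType_succ_eq_iff.1 h).1

lemma rankType_eq_of_succ (h : rankType (k + 1) G a = rankType (k + 1) H b) :
    rankType k G a = rankType k H b := by
  induction k generalizing ι with
  | zero => exact atomicType_eq_of_rankType_eq h
  | succ k ih =>
    obtain ⟨h₀, forth, back⟩ := rankType_succ_eq_iff.1 h
    exact rankType_succ_eq_iff.2
      ⟨h₀, fun x => (forth x).imp fun _ => ih, fun y => (back y).imp fun _ => ih⟩

lemma rankType_eq_of_le (hkl : k ≤ l) (h : rankType l G a = rankType l H b) :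
    rankType k G a = rankType k H b := by
  induction hkl with
  | refl => exact h
  | step _ ih => exact ih (rankType_eq_of_succ h)

lemma elim'_comp_right (f : κ → ι) (a : ι → V) (x : V) :
    Option.elim' x (a ∘ f) = Option.elim' x a ∘ Option.map f := by
  funext o; cases o <;> rfl

lemma elim'_comp_left (f : V → W) (a : ι → V) (x : V) :
    Option.elim' (f x) (f ∘ a) = f ∘ Option.elim' x a := by
  funext o; cases o <;> rfl

lemma rankType_comp_eq {f : κ → ι} (h : rankType k G a = rankType k H b) :
    rankType k G (a ∘ f) = rankType k H (b ∘ f) := by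
  induction k generalizing ι κ with
  | zero =>
    exact atomicType_eq_iff.2 fun i j => atomicType_eq_iff.1 h (f i) (f j)
  | succ k ih =>
    obtain ⟨h₀, forth, back⟩ := rankType_succ_eq_iff.1 h
    refine rankType_succ_eq_iff.2
      ⟨atomicType_eq_iff.2 fun i j => atomicType_eq_iff.1 h₀ (f i) (f j),
        fun x => (forth x).imp fun y hy => ?_, fun y => (back y).imp fun x hx => ?_⟩
    · rw [elim'_comp_right, elim'_comp_right]; exact ih hy
    · rw [elim'_comp_right, elim'_comp_right]; exact ih hx

lemma atomicType_iso_comp (e : G ≃g H) (a : ι → V) : atomicType H (e ∘ a) = atomicType G a :=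
  atomicType_eq_iff.2 fun i j => by simp [e.map_adj_iff]

lemma rankType_iso_comp (e : G ≃g H) (a : ι → V) : rankType k H (e ∘ a) = rankType k G a := by
  induction k generalizing ι with
  | zero => exact atomicType_iso_comp e a
  | succ k ih =>
    refine rankType_succ_eq_iff.2 ⟨atomicType_iso_comp e a, fun y => ⟨e.symm y, ?_⟩,
      fun x => ⟨e x, ?_⟩⟩
    · rw [← ih, ← elim'_comp_left, e.apply_symm_apply]
    · rw [elim'_comp_left, ih]

end RankType

section GlueCongr

variable {k : ℕ} {G : SimpleGraph V} {H : SimpleGraph W} {G' : SimpleGraph V'}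
  {H' : SimpleGraph W'} {a : ι → V} {b : κ → W} {a' : ι → V'} {b' : κ → W'}

lemma atomicType_glue_congr {R : ι → κ → Prop} (hG : atomicType G a = atomicType G' a')
    (hH : atomicType H b = atomicType H' b') :
    atomicType (glue G H (Relation.Map R a b)) (Sum.map a b) =
      atomicType (glue G' H' (Relation.Map R a' b')) (Sum.map a' b') := by
  rw [atomicType_eq_iff] at hG hH ⊢
  have cross (i j) : Relation.Map R a b (a i) (b j) ↔ Relation.Map R a' b' (a' i) (b' j) := by
    simp only [Relation.Map, (hG _ i).1, (hH _ j).1]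
  rintro (i | i) (j | j)
  · simpa using hG i j
  · simpa using cross i j
  · simpa using cross j i
  · simpa using hH i j

lemma elim'_inl_map (a : ι → V) (b : κ → W) (x : V) :
    Option.elim' (.inl x) (Sum.map a b) =
      Sum.map (Option.elim' x a) b ∘ Option.elim' (.inl none) (Sum.map some id) := by
  funext o; rcases o with _ | _ | _ <;> rfl

lemma elim'_inr_map (a : ι → V) (b : κ → W) (y : W) :
    Option.elim' (.inr y) (Sum.map a b) =
      Sum.map a (Option.elim' y b) ∘ Option.elim' (.inr none) (Sum.map id some) := by
  funext o; rcases o with _ | _ | _ <;> rfl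

lemma relationMap_eq_some_left (R : ι → κ → Prop) (a : ι → V) (b : κ → W) (x : V) :
    Relation.Map R a b = Relation.Map (Relation.Map R some id) (Option.elim' x a) b := by
  rw [Relation.map_map]; rfl

lemma relationMap_eq_some_right (R : ι → κ → Prop) (a : ι → V) (b : κ → W) (y : W) :
    Relation.Map R a b = Relation.Map (Relation.Map R id some) a (Option.elim' y b) := by
  rw [Relation.map_map]; rfl

lemma rankType_glue_congr {R : ι → κ → Prop} (hG : rankType k G a = rankType k G' a')
    (hH : rankType k H b = rankType k H' b') :
    rankType k (glue G H (Relation.Map R a b)) (Sum.map a b) =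
      rankType k (glue G' H' (Relation.Map R a' b')) (Sum.map a' b') := by
  induction k generalizing ι κ with
  | zero => exact atomicType_glue_congr hG hH
  | succ k ih =>
    obtain ⟨hG₀, forthG, backG⟩ := rankType_succ_eq_iff.1 hG
    obtain ⟨hH₀, forthH, backH⟩ := rankType_succ_eq_iff.1 hH
    have left {x : V} {x' : V'}
        (h : rankType k G (Option.elim' x a) = rankType k G' (Option.elim' x' a')) :
        rankType k (glue G H (Relation.Map R a b)) (Option.elim' (.inl x) (Sum.map a b)) =
          rankType k (glue G' H' (Relation.Map R a' b'))
            (Option.elim' (.inl x') (Sum.map a' b')) := by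
      rw [elim'_inl_map a b x, elim'_inl_map a' b' x', relationMap_eq_some_left R a b x,
        relationMap_eq_some_left R a' b' x']
      exact rankType_comp_eq (ih h (rankType_eq_of_succ hH))
    have right {y : W} {y' : W'}
        (h : rankType k H (Option.elim' y b) = rankType k H' (Option.elim' y' b')) :
        rankType k (glue G H (Relation.Map R a b)) (Option.elim' (.inr y) (Sum.map a b)) =
          rankType k (glue G' H' (Relation.Map R a' b'))
            (Option.elim' (.inr y') (Sum.map a' b')) := by
      rw [elim'_inr_map a b y, elim'_inr_map a' b' y', relationMap_eq_some_right R a b y,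
        relationMap_eq_some_right R a' b' y']
      exact rankType_comp_eq (ih (rankType_eq_of_succ hG) h)
    refine rankType_succ_eq_iff.2 ⟨atomicType_glue_congr hG₀ hH₀, ?_, ?_⟩
    · exact Sum.rec (fun x => (forthG x).elim fun x' h => ⟨.inl x', left h⟩)
        fun y => (forthH y).elim fun y' h => ⟨.inr y', right h⟩
    · exact Sum.rec (fun x' => (backG x').elim fun x h => ⟨.inl x, left h⟩)
        fun y' => (backH y').elim fun y h => ⟨.inr y, right h⟩

end GlueCongr

/-- The rank-`k` type of a rooted graph. -/
def rootedType (k : ℕ) (G : SimpleGraph V) (r : V) : RankType k Unit :=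
  rankType k G fun _ => r

/-- The rank-`k` type of a graph without distinguished vertices; it determines which sentences of
quantifier rank at most `k` hold in the graph. -/
def rankTheory (k : ℕ) (G : SimpleGraph V) : RankType k Empty :=
  rankType k G Empty.elim

section Rooted

variable {k : ℕ} {G : SimpleGraph V} {H : SimpleGraph W} {G' : SimpleGraph V'}
  {H' : SimpleGraph W'} {r : V} {p : W} {r' : V'} {p' : W'}

lemma rootedType_iso (e : G ≃g H) (r : V) : rootedType k H (e r) = rootedType k G r :=
  rankType_iso_comp e _

lemma rankTheory_iso (e : G ≃g H) : rankTheory k H = rankTheory k G := by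
  rw [rankTheory, rankTheory, ← rankType_iso_comp e, Subsingleton.elim (e ∘ Empty.elim)]

lemma rankTheory_eq_of_rootedType_eq (h : rootedType k G r = rootedType k H p) :
    rankTheory k G = rankTheory k H := by
  simpa only [rankTheory, Subsingleton.elim (_ ∘ Empty.elim) Empty.elim] using
    rankType_comp_eq (f := (Empty.elim : Empty → Unit)) h

lemma glue_eq_sum (G : SimpleGraph V) (H : SimpleGraph W) :
    glue G H (Relation.Map (fun _ _ => False) (Empty.elim : Empty → V) (Empty.elim : Empty → W)) =
      G ⊕g H := by
  ext (x | x) (y | y) <;> simp [Relation.Map]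

lemma glue_eq_bridge (G : SimpleGraph V) (H : SimpleGraph W) (r : V) (p : W) :
    glue G H (Relation.Map (fun _ _ => True) (fun _ : Unit => r) (fun _ : Unit => p)) =
      bridge G H r p := by
  ext (x | x) (y | y) <;> simp [Relation.Map, eq_comm]

lemma rankTheory_sum_congr (hG : rankTheory k G = rankTheory k G')
    (hH : rankTheory k H = rankTheory k H') : rankTheory k (G ⊕g H) = rankTheory k (G' ⊕g H') := by
  rw [← glue_eq_sum, ← glue_eq_sum]
  simpa only [rankTheory, Subsingleton.elim (_ ∘ Sum.inl) Empty.elim] using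
    rankType_comp_eq (f := (Sum.inl : Empty → Empty ⊕ Empty)) (rankType_glue_congr hG hH)

lemma rootedType_bridge_inl_congr (hG : rootedType k G r = rootedType k G' r')
    (hH : rootedType k H p = rootedType k H' p') :
    rootedType k (bridge G H r p) (.inl r) = rootedType k (bridge G' H' r' p') (.inl r') := by
  rw [← glue_eq_bridge, ← glue_eq_bridge]
  exact rankType_comp_eq (f := (Sum.inl : Unit → Unit ⊕ Unit)) (rankType_glue_congr hG hH)

end Rooted

/-! ### First-order sentences -/

/-- Satisfaction of a formula of the language of graphs in a simple graph, the free variables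
and the bound ones being interpreted by a single tuple. -/
def RealizesIn (G : SimpleGraph V) {n : ℕ} (φ : Language.graph.BoundedFormula ι n)
    (a : ι ⊕ Fin n → V) : Prop :=
  letI := G.structure
  φ.Realize (a ∘ .inl) (a ∘ .inr)

section RealizesIn

variable {n : ℕ} {G : SimpleGraph V}

lemma exists_eq_var (t : Language.graph.Term ι) : ∃ i, t = Language.Term.var i := by
  cases t with
  | var i => exact ⟨i, rfl⟩
  | func f _ => exact isEmptyElim f

lemma realizesIn_adj (ts : Fin 2 → Language.graph.Term (ι ⊕ Fin n)) (a : ι ⊕ Fin n → V)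
    {i j : ι ⊕ Fin n} (hi : ts 0 = .var i) (hj : ts 1 = .var j) :
    RealizesIn G (.rel Language.graphRel.adj ts) a ↔ G.Adj (a i) (a j) := by
  let := G.structure
  change G.Adj ((ts 0).realize (Sum.elim (a ∘ .inl) (a ∘ .inr)))
    ((ts 1).realize (Sum.elim (a ∘ .inl) (a ∘ .inr))) ↔ _
  rw [Sum.elim_comp_inl_inr, hi, hj]
  rfl

lemma realizesIn_all (φ : Language.graph.BoundedFormula ι (n + 1)) (a : ι ⊕ Fin n → V) :
    RealizesIn G φ.all a ↔ ∀ x, RealizesIn G φ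
      (Option.elim' x a ∘ Sum.elim (some ∘ .inl) (Fin.lastCases none (some ∘ .inr))) := by
  refine forall_congr' fun x => ?_
  have : (Fin.snoc (a ∘ .inr) x : Fin (n + 1) → V) =
      Option.elim' x a ∘ Fin.lastCases none (some ∘ .inr) := by
    funext i
    refine Fin.lastCases ?_ (fun i => ?_) i <;> simp
  rw [this]
  rfl

theorem exists_rank_realizesIn_iff (φ : Language.graph.BoundedFormula ι n) :
    ∃ k, ∀ {V : Type u} {W : Type v} {G : SimpleGraph V} {H : SimpleGraph W}
      {a : ι ⊕ Fin n → V} {b : ι ⊕ Fin n → W},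
      rankType k G a = rankType k H b → (RealizesIn G φ a ↔ RealizesIn H φ b) := by
  induction φ with
  | falsum => exact ⟨0, fun _ => Iff.rfl⟩
  | equal t₁ t₂ =>
    obtain ⟨i, rfl⟩ := exists_eq_var t₁
    obtain ⟨j, rfl⟩ := exists_eq_var t₂
    refine ⟨0, fun {_ _ _ _ a b} h => ?_⟩
    simpa [RealizesIn, Language.BoundedFormula.Realize] using (atomicType_eq_iff.1 h i j).1
  | rel R ts =>
    cases R
    obtain ⟨i, hi⟩ := exists_eq_var (ts 0)
    obtain ⟨j, hj⟩ := exists_eq_var (ts 1)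
    refine ⟨0, fun h => ?_⟩
    rw [realizesIn_adj ts _ hi hj, realizesIn_adj ts _ hi hj]
    exact (atomicType_eq_iff.1 h i j).2
  | imp φ ψ ihφ ihψ =>
    obtain ⟨k, hk⟩ := ihφ
    obtain ⟨l, hl⟩ := ihψ
    exact ⟨max k l, fun h => imp_congr (hk (rankType_eq_of_le (le_max_left k l) h))
      (hl (rankType_eq_of_le (le_max_right k l) h))⟩
  | all φ ih =>
    obtain ⟨k, hk⟩ := ih
    refine ⟨k + 1, fun h => ?_⟩
    obtain ⟨-, forth, back⟩ := rankType_succ_eq_iff.1 h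
    rw [realizesIn_all, realizesIn_all]
    constructor
    · intro hall y
      obtain ⟨x, hx⟩ := back y
      exact (hk (rankType_comp_eq hx)).1 (hall x)
    · intro hall x
      obtain ⟨y, hy⟩ := forth x
      exact (hk (rankType_comp_eq hy)).2 (hall y)

end RealizesIn

theorem exists_rank_satFO_iff (φ : Language.graph.Sentence) :
    ∃ k, ∀ {V W : Type} {G : SimpleGraph V} {H : SimpleGraph W},
      rankTheory k G = rankTheory k H → (SatFO G φ ↔ SatFO H φ) := by
  obtain ⟨k, hk⟩ := exists_rank_realizesIn_iff φ
  refine ⟨k, fun {V W G H} h => ?_⟩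
  have realizesIn_iff {U : Type} (K : SimpleGraph U) :
      RealizesIn K φ (Empty.elim ∘ Sum.elim id Fin.elim0) ↔ SatFO K φ := by
    simp only [RealizesIn, SatFO, Language.Sentence.Realize, Language.Formula.Realize]
    congr!
  rw [← realizesIn_iff, ← realizesIn_iff]
  exact hk (rankType_comp_eq h)

/-! ### Unions of components -/

/-- `W` is a union of connected components of `G`: no edge of `G` leaves it. -/
def IsComponentUnion (G : SimpleGraph V) (W : Set V) : Prop :=
  ∀ ⦃x y⦄, G.Adj x y → (x ∈ W ↔ y ∈ W)

/-- The number of vertices of the connected component of `v`. -/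
noncomputable def componentSize (G : SimpleGraph V) (v : V) : ℕ :=
  (G.connectedComponentMk v).supp.ncard

section Components

variable {G : SimpleGraph V} {H : SimpleGraph W} {S : Set V} {x y : V}

lemma IsComponentUnion.compl (h : IsComponentUnion G S) : IsComponentUnion G Sᶜ :=
  fun _ _ hxy => (h hxy).not

lemma IsComponentUnion.mem_iff_of_reachable (h : IsComponentUnion G S) (hxy : G.Reachable x y) :
    x ∈ S ↔ y ∈ S := by
  obtain ⟨p⟩ := hxy
  induction p with
  | nil => rfl
  | cons hadj _ ih => exact (h hadj).trans ih

lemma isComponentUnion_supp (c : G.ConnectedComponent) : IsComponentUnion G c.supp :=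
  fun _ _ hxy => c.mem_supp_congr_adj hxy

lemma isComponentUnion_range_iso (e : G ≃g H) : IsComponentUnion H (Set.range e.toEmbedding) :=
  fun x y _ => iff_of_true (e.surjective x) (e.surjective y)

lemma isComponentUnion_range_sumInl :
    IsComponentUnion (G ⊕g H) (Set.range (Embedding.sumInl : G ↪g G ⊕g H)) := by
  have : Set.range (Embedding.sumInl : G ↪g G ⊕g H) = Set.range Sum.inl := rfl
  rw [this]
  rintro (x | x) (y | y) h <;> simp_all

lemma isComponentUnion_range_sumInr :
    IsComponentUnion (G ⊕g H) (Set.range (Embedding.sumInr : H ↪g G ⊕g H)) := by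
  have : Set.range (Embedding.sumInr : H ↪g G ⊕g H) = Set.range Sum.inr := rfl
  rw [this]
  rintro (x | x) (y | y) h <;> simp_all

lemma IsComponentUnion.range_induce (h : IsComponentUnion G S) :
    IsComponentUnion G (Set.range (Embedding.induce S : G.induce S ↪g G)) := by
  have : Set.range (Embedding.induce S : G.induce S ↪g G) = S := Subtype.range_val
  rwa [this]

lemma IsComponentUnion.exists_of_reachable_map {f : G ↪g H} {z : W}
    (hf : IsComponentUnion H (Set.range f)) (h : H.Reachable (f x) z) :
    ∃ y, f y = z ∧ G.Reachable x y := by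
  rw [reachable_iff_reflTransGen] at h
  induction h with
  | refl => exact ⟨x, rfl, .rfl⟩
  | tail _ hadj ih =>
    obtain ⟨y, rfl, hxy⟩ := ih
    obtain ⟨y', rfl⟩ := (hf hadj).1 ⟨y, rfl⟩
    exact ⟨y', rfl, hxy.trans (f.map_adj_iff.1 hadj).reachable⟩

lemma IsComponentUnion.image_supp {f : G ↪g H} (hf : IsComponentUnion H (Set.range f)) (x : V) :
    f '' (G.connectedComponentMk x).supp = (H.connectedComponentMk (f x)).supp := by
  ext z
  simp only [Set.mem_image, ConnectedComponent.mem_supp_iff, ConnectedComponent.eq]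
  constructor
  · rintro ⟨y, hyx, rfl⟩
    exact hyx.map f.toHom
  · intro h
    obtain ⟨y, rfl, hxy⟩ := hf.exists_of_reachable_map h.symm
    exact ⟨y, hxy.symm, rfl⟩

lemma IsComponentUnion.componentSize_map {f : G ↪g H} (hf : IsComponentUnion H (Set.range f))
    (x : V) : componentSize H (f x) = componentSize G x := by
  rw [componentSize, ← hf.image_supp, Set.ncard_image_of_injective _ f.injective, componentSize]

lemma componentSize_iso (e : G ≃g H) (x : V) : componentSize H (e x) = componentSize G x :=
  (isComponentUnion_range_iso e).componentSize_map x

lemma IsComponentUnion.componentSize_induce (h : IsComponentUnion G S) (x : S) :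
    componentSize (G.induce S) x = componentSize G x :=
  (h.range_induce.componentSize_map x).symm

lemma componentSize_eq_of_reachable (h : G.Reachable x y) :
    componentSize G x = componentSize G y := by
  rw [componentSize, ConnectedComponent.eq.2 h, componentSize]

lemma componentSize_eq_of_connected (h : G.Connected) (x : V) : componentSize G x = Nat.card V := by
  have : (G.connectedComponentMk x).supp = Set.univ :=
    Set.eq_univ_of_forall fun y => ConnectedComponent.eq.2 (h.preconnected y x)
  rw [componentSize, this, Set.ncard_univ]

lemma connected_bridge (hG : G.Connected) (hH : H.Connected) (r : V) (p : W) :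
    (bridge G H r p).Connected := by
  rw [bridge_eq_sum_sup_edge]
  exact hG.sum_sup_edge hH

open Classical in
/-- A graph is the disjoint sum of what it induces on a union of components and on the
complement. -/
noncomputable def IsComponentUnion.sumIso (h : IsComponentUnion G S) :
    G.induce S ⊕g G.induce Sᶜ ≃g G where
  toEquiv := Equiv.Set.sumCompl S
  map_rel_iff' := by
    rintro (⟨a, ha⟩ | ⟨a, ha⟩) (⟨b, hb⟩ | ⟨b, hb⟩)
    · simp
    · simpa using fun hab : G.Adj a b => hb ((h hab).1 ha)
    · simpa using fun hab : G.Adj a b => ha ((h hab).2 hb)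
    · simp

/-- Splitting a graph along a union of its components. -/
def componentUnionEquiv (S : Set V) :
    {G : SimpleGraph V // IsComponentUnion G S} ≃ SimpleGraph S × SimpleGraph ↥Sᶜ where
  toFun G := (G.1.induce S, G.1.induce Sᶜ)
  invFun p := ⟨p.1.spanningCoe ⊔ p.2.spanningCoe, by
    intro x y h
    simp only [sup_adj, map_adj, Function.Embedding.subtype_apply] at h
    aesop⟩
  left_inv := by
    rintro ⟨G, hG⟩
    ext x y
    have := @hG x y
    by_cases hx : x ∈ S <;> by_cases hy : y ∈ S <;> simp_all
  right_inv := by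
    rintro ⟨G, H⟩
    refine Prod.ext ?_ ?_
    · ext ⟨x, hx⟩ ⟨y, hy⟩
      simp [hx, hy]
    · ext ⟨x, hx⟩ ⟨y, hy⟩
      simp [show x ∉ S from hx, show y ∉ S from hy]

end Components

/-! ### Addable classes -/

section Classes

variable {C P Q : GraphClassOn}

section

variable {V W : Type} [Finite V] [Finite W] {G : SimpleGraph V} {H : SimpleGraph W}

lemma class_iff_of_iso (hC : ClassIsoInvariant C) (e : G ≃g H) : C V G ↔ C W H :=
  hC _ _ _ _ ⟨e⟩

lemma class_induce_supp_iff (hC : ClassIsoInvariant C) {f : G ↪g H}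
    (hf : IsComponentUnion H (Set.range f)) (x : V) :
    C _ (G.induce (G.connectedComponentMk x).supp) ↔
      C _ (H.induce (H.connectedComponentMk (f x)).supp) := by
  rw [← hf.image_supp]
  exact class_iff_of_iso hC
    { toEquiv := Equiv.Set.image f _ f.injective
      map_rel_iff' := by simp }

lemma class_sum_iff (hC : ClassIsoInvariant C) (hDec : ClassDecomposable C) :
    C _ (G ⊕g H) ↔ C V G ∧ C W H := by
  simp only [hDec _ (G ⊕g H), hDec _ G, hDec _ H, ConnectedComponent.forall, Sum.forall]
  exact (and_congr
    (forall_congr' (class_induce_supp_iff hC (isComponentUnion_range_sumInl (H := H))))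
    (forall_congr' (class_induce_supp_iff hC (isComponentUnion_range_sumInr (G := G))))).symm

lemma class_iff_of_isComponentUnion (hC : ClassIsoInvariant C) (hDec : ClassDecomposable C)
    {S : Set V} (h : IsComponentUnion G S) : C V G ↔ C _ (G.induce S) ∧ C _ (G.induce Sᶜ) := by
  rw [← class_iff_of_iso hC h.sumIso, class_sum_iff hC hDec]

lemma class_bridge (hC : ClassIsoInvariant C) (hAdd : ClassAddable C) (hG : C V G) (hH : C W H)
    (r : V) (p : W) : C _ (bridge G H r p) := by
  rw [bridge_eq_sum_sup_edge]
  exact hAdd.2 _ _ _ _ ((class_sum_iff hC hAdd.1).2 ⟨hG, hH⟩) (not_reachable_sum_inl_inr r p)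

lemma card_class_eq_classCount (hC : ClassIsoInvariant C) :
    Nat.card {G : SimpleGraph V // C V G} = classCount C (Nat.card V) := by
  have e : V ≃ Fin (Nat.card V) := Finite.equivFin V
  exact Nat.card_congr <| e.simpleGraph.subtypeEquiv fun G =>
    class_iff_of_iso hC (Iso.comap e.symm G).symm

lemma card_split_eq (hP : ClassIsoInvariant P) (hQ : ClassIsoInvariant Q) (S : Set V) :
    Nat.card {G : SimpleGraph V // IsComponentUnion G S ∧ P _ (G.induce S) ∧ Q _ (G.induce Sᶜ)} =
      classCount P S.ncard * classCount Q Sᶜ.ncard := by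
  have e : {G : SimpleGraph V // IsComponentUnion G S ∧ P _ (G.induce S) ∧ Q _ (G.induce Sᶜ)} ≃
      {G : SimpleGraph S // P _ G} × {G : SimpleGraph ↥Sᶜ // Q _ G} :=
    (Equiv.subtypeSubtypeEquivSubtypeInter (IsComponentUnion · S)
      fun G => P _ (G.induce S) ∧ Q _ (G.induce Sᶜ)).symm.trans <|
      ((componentUnionEquiv S).subtypeEquiv fun _ => Iff.rfl).trans Equiv.subtypeProdEquivProd
  rw [Nat.card_congr e, Nat.card_prod, card_class_eq_classCount hP, card_class_eq_classCount hQ,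
    Nat.card_coe_set_eq, Nat.card_coe_set_eq]

end

end Classes

/-! ### Absorbing graphs -/

/-- The graph `G` with a pendant copy of `T` for each element of `ι`, each copy being joined to the
vertex `r` of `G` by an edge from its vertex `t`. -/
def attachCopies (G : SimpleGraph V) (r : V) (T : SimpleGraph W) (t : W) (ι : Type*) :
    SimpleGraph (V ⊕ ι × W) :=
  glue G ((⊥ : SimpleGraph ι) □ T) fun x y => x = r ∧ y.2 = t

/-- One of the copies of an `attachCopies` can be made part of the base graph. -/
def attachCopiesPeel (G : SimpleGraph V) (r : V) (T : SimpleGraph W) (t : W) (e : Option κ ≃ ι) :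
    attachCopies (bridge G T r t) (.inl r) T t κ ≃g attachCopies G r T t ι where
  toEquiv :=
    (Equiv.sumAssoc V W (κ × W)).trans <| Equiv.sumCongr (Equiv.refl V) <|
      optionProdEquiv.symm.trans (e.prodCongr (Equiv.refl W))
  map_rel_iff' := by
    rintro ((x | w) | ⟨i, w⟩) ((x' | w') | ⟨i', w'⟩) <;>
      simp [attachCopies, boxProd_adj]

/-- Attaching no copies changes nothing. -/
def attachCopiesEmpty (G : SimpleGraph V) (r : V) (T : SimpleGraph W) (t : W) (ι : Type*)
    [IsEmpty ι] : attachCopies G r T t ι ≃g G where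
  toEquiv := Equiv.sumEmpty V (ι × W)
  map_rel_iff' := by
    rintro (x | y) (x' | y') <;> first | exact Iff.rfl | exact isEmptyElim ‹ι × W›

/-- A graph bridged to the base of an `attachCopies` can be made part of the base graph. -/
def bridgeAttachCopies (G : SimpleGraph V) (r : V) (T : SimpleGraph W) (t : W) (ι : Type*)
    (P : SimpleGraph V') (p : V') :
    bridge (attachCopies G r T t ι) P (.inl r) p ≃g
      attachCopies (bridge G P r p) (.inl r) T t ι where
  toEquiv := (Equiv.sumAssoc V (ι × W) V').trans <|
    (Equiv.sumCongr (Equiv.refl V) (Equiv.sumComm (ι × W) V')).trans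
      (Equiv.sumAssoc V V' (ι × W)).symm
  map_rel_iff' := by
    rintro ((x | w) | y) ((x' | w') | y') <;> simp [attachCopies]

/-- Bridging is attaching a single copy. -/
def bridgeIsoAttachCopies (G : SimpleGraph V) (r : V) (T : SimpleGraph W) (t : W) :
    bridge G T r t ≃g attachCopies G r T t Unit :=
  (attachCopiesEmpty _ _ T t Empty).symm.trans
    (attachCopiesPeel G r T t ((Equiv.optionEquivSumPUnit Empty).trans (Equiv.emptySum _ _)))

section AttachCopies

variable {k : ℕ}

lemma attachCopies_eq_glue (G : SimpleGraph V) (r : V) (T : SimpleGraph W) (t : W) (ι : Type*) :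
    attachCopies G r T t ι =
      glue G ((⊥ : SimpleGraph ι) □ T)
        (Relation.Map (fun _ y => y.2 = t) (fun _ : Unit => r) id) := by
  ext (x | x) (y | y) <;> simp [attachCopies, Relation.Map, and_comm, eq_comm]

lemma rootedType_attachCopies_congr {G : SimpleGraph V} {G' : SimpleGraph V'} {r : V} {r' : V'}
    (h : rootedType k G r = rootedType k G' r') (T : SimpleGraph W) (t : W) (ι : Type*) :
    rootedType k (attachCopies G r T t ι) (.inl r) =
      rootedType k (attachCopies G' r' T t ι) (.inl r') := by
  rw [attachCopies_eq_glue, attachCopies_eq_glue]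
  exact rankType_comp_eq (f := (Sum.inl : Unit → Unit ⊕ ι × W)) (rankType_glue_congr h rfl)

lemma rankType_attachCopies_inr (G : SimpleGraph V) (r : V) (T : SimpleGraph W) (t : W)
    (a : κ → V) (i : ι) (w : W) :
    rankType k (attachCopies G r T t ι) (Option.elim' (.inr (i, w)) (Sum.inl ∘ a)) =
      rankType k (attachCopies (bridge G T r t) (.inl r) T t {j // j ≠ i})
        (Sum.inl ∘ Option.elim' (.inr w) (Sum.inl ∘ a)) := by
  classical
  rw [← rankType_iso_comp (attachCopiesPeel G r T t (Equiv.optionSubtypeNe i))]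
  congr 1
  funext o
  cases o <;> simp [attachCopiesPeel]

lemma rankType_attachCopies_eq {V W ι ι' κ : Type} [Finite ι] [Finite ι']
    (G : SimpleGraph V) (r : V) (T : SimpleGraph W) (t : W) (a : κ → V)
    (hι : k ≤ Nat.card ι) (hι' : k ≤ Nat.card ι') :
    rankType k (attachCopies G r T t ι) (Sum.inl ∘ a) =
      rankType k (attachCopies G r T t ι') (Sum.inl ∘ a) := by
  induction k generalizing V ι ι' κ with
  | zero => exact atomicType_eq_iff.2 fun i j => by simp [attachCopies]
  | succ k ih =>
    have forth {ι ι' : Type} [Finite ι] [Finite ι'] (hι : k + 1 ≤ Nat.card ι)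
        (hι' : k + 1 ≤ Nat.card ι') (x : V ⊕ ι × W) : ∃ y,
          rankType k (attachCopies G r T t ι) (Option.elim' x (Sum.inl ∘ a)) =
            rankType k (attachCopies G r T t ι') (Option.elim' y (Sum.inl ∘ a)) := by
      obtain v | ⟨i, w⟩ := x
      · exact ⟨.inl v, by
          rw [elim'_comp_left, elim'_comp_left]; exact ih G r _ (by omega) (by omega)⟩
      · obtain ⟨i'⟩ : Nonempty ι' := (Nat.card_pos_iff.1 (by omega)).1
        have card_ne {J : Type} [Finite J] (j : J) : Nat.card {j' // j' ≠ j} + 1 = Nat.card J := by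
          classical rw [← Finite.card_option, Nat.card_congr (Equiv.optionSubtypeNe j)]
        have := card_ne i
        have := card_ne i'
        exact ⟨.inr (i', w), by
          rw [rankType_attachCopies_inr, rankType_attachCopies_inr]
          exact ih _ _ _ (by omega) (by omega)⟩
    refine rankType_succ_eq_iff.2 ⟨atomicType_eq_iff.2 fun i j => by simp [attachCopies],
      forth hι hι', fun y => ?_⟩
    obtain ⟨x, hx⟩ := forth hι' hι y
    exact ⟨x, hx.symm⟩

lemma attachCopies_induction {V W : Type} [Finite V] [Finite W] {P : GraphClassOn}
    (hP : ClassIsoInvariant P)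
    (hBridge : ∀ {V W : Type} [Finite V] [Finite W] {G : SimpleGraph V} {H : SimpleGraph W},
      P V G → P W H → ∀ r p, P _ (bridge G H r p))
    {G : SimpleGraph V} {T : SimpleGraph W} (hG : P V G) (hT : P W T) (r : V) (t : W) (n : ℕ) :
    P _ (attachCopies G r T t (Fin n)) := by
  induction n generalizing V with
  | zero => exact (class_iff_of_iso hP (attachCopiesEmpty G r T t (Fin 0))).2 hG
  | succ n ih =>
    exact (class_iff_of_iso hP (attachCopiesPeel G r T t (finSuccEquiv n).symm)).1
      (ih (hBridge hG hT r t) (.inl r))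

end AttachCopies

/-- Bridging the root of `(T, t)` to the root of `(G, r)` does not change the rooted rank-`k` type
of `(G, r)`. -/
def Absorbs (k : ℕ) (G : SimpleGraph V) (r : V) (T : SimpleGraph W) (t : W) : Prop :=
  rootedType k (bridge G T r t) (.inl r) = rootedType k G r

section Absorbs

variable {k : ℕ}

lemma Absorbs.congr {G : SimpleGraph V} {r : V} {T : SimpleGraph W} {t : W} {T' : SimpleGraph W'}
    {t' : W'} (h : Absorbs k G r T t) (hT : rootedType k T t = rootedType k T' t') :
    Absorbs k G r T' t' :=
  (rootedType_bridge_inl_congr rfl hT.symm).trans h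

lemma Absorbs.attachCopies_base {G : SimpleGraph V} {r : V} {P : SimpleGraph V'} {p : V'}
    (h : Absorbs k G r P p) (T : SimpleGraph W) (t : W) (ι : Type*) :
    Absorbs k (attachCopies G r T t ι) (.inl r) P p :=
  (rootedType_iso (bridgeAttachCopies G r T t ι P p) (.inl (.inl r))).symm.trans
    (rootedType_attachCopies_congr h T t ι)

lemma Absorbs.bridge_base {G : SimpleGraph V} {r : V} {P : SimpleGraph V'} {p : V'}
    (h : Absorbs k G r P p) (K : SimpleGraph W) (v : W) :
    Absorbs k (bridge G K r v) (.inl r) P p := by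
  let e := bridgeIsoAttachCopies G r K v
  calc rootedType k (bridge (bridge G K r v) P (.inl r) p) (.inl (.inl r))
    _ = rootedType k (bridge (attachCopies G r K v Unit) P (.inl r) p) (.inl (.inl r)) :=
      (rootedType_iso (bridgeIso e .refl (.inl r) p) (.inl (.inl r))).symm
    _ = rootedType k (attachCopies G r K v Unit) (.inl r) := h.attachCopies_base K v Unit
    _ = rootedType k (bridge G K r v) (.inl r) := rootedType_iso e (.inl r)

lemma absorbs_attachCopies {V W : Type} (G : SimpleGraph V) (r : V) (T : SimpleGraph W) (t : W) :
    Absorbs k (attachCopies G r T t (Fin k)) (.inl r) T t :=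
  calc rootedType k (bridge (attachCopies G r T t (Fin k)) T (.inl r) t) (.inl (.inl r))
    _ = rootedType k (attachCopies (bridge G T r t) (.inl r) T t (Fin k)) (.inl (.inl r)) :=
      (rootedType_iso (bridgeAttachCopies G r T t (Fin k) T t) _).symm
    _ = rootedType k (attachCopies G r T t (Fin (k + 1))) (.inl r) :=
      (rootedType_iso (attachCopiesPeel G r T t (finSuccEquiv k).symm) _).symm
    _ = rootedType k (attachCopies G r T t (Fin k)) (.inl r) :=
      rankType_attachCopies_eq G r T t (fun _ : Unit => r) (by simp) (by simp)

end Absorbs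

/-- The connected members of a class of graphs. -/
def connectedMembers (C : GraphClassOn) : GraphClassOn := fun V _ G => C V G ∧ G.Connected

/-- The rooted graph `(M, r)` absorbs every rooted connected graph of the class. -/
def IsAbsorbing (k : ℕ) (C : GraphClassOn) (M : SimpleGraph V) (r : V) : Prop :=
  ∀ {W : Type} [Finite W] {T : SimpleGraph W}, connectedMembers C W T → ∀ t, Absorbs k M r T t

section Absorbing

variable {C : GraphClassOn} {k : ℕ}

lemma connectedMembers_isoInvariant (hC : ClassIsoInvariant C) :
    ClassIsoInvariant (connectedMembers C) :=
  fun V W _ _ G H ⟨e⟩ => and_congr (hC V W G H ⟨e⟩) e.connected_iff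

lemma connectedMembers_bridge {V W : Type} [Finite V] [Finite W] {G : SimpleGraph V}
    {H : SimpleGraph W} (hC : ClassIsoInvariant C) (hAdd : ClassAddable C)
    (hG : connectedMembers C V G) (hH : connectedMembers C W H) (r : V) (p : W) :
    connectedMembers C _ (bridge G H r p) :=
  ⟨class_bridge hC hAdd hG.1 hH.1 r p, connected_bridge hG.2 hH.2 r p⟩

lemma exists_connectedMembers_card_gt (hC : ClassIsoInvariant C) (hAdd : ClassAddable C)
    (hne : ∃ G : SimpleGraph (Fin 1), C (Fin 1) G) (K : ℕ) :
    ∃ (V : Type) (_ : Finite V) (G : SimpleGraph V), connectedMembers C V G ∧ K < Nat.card V := by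
  obtain ⟨B, hB⟩ := hne
  have hB : connectedMembers C (Fin 1) B := ⟨hB, .of_subsingleton⟩
  induction K with
  | zero => exact ⟨Fin 1, inferInstance, B, hB, by simp⟩
  | succ K ih =>
    obtain ⟨V, _, G, hG, hK⟩ := ih
    exact ⟨V ⊕ Fin 1, inferInstance, bridge G B hG.2.nonempty.some 0,
      connectedMembers_bridge hC hAdd hG hB _ _, by simpa using hK⟩

lemma exists_isAbsorbing (hC : ClassIsoInvariant C) (hAdd : ClassAddable C)
    (hne : ∃ G : SimpleGraph (Fin 1), C (Fin 1) G) (k K : ℕ) :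
    ∃ (V : Type) (_ : Finite V) (M : SimpleGraph V) (r : V),
      connectedMembers C V M ∧ K < Nat.card V ∧ IsAbsorbing k C M r := by
  suffices h : ∀ types : Set (RankType k Unit), ∃ (V : Type) (_ : Finite V) (M : SimpleGraph V)
      (r : V), connectedMembers C V M ∧ K < Nat.card V ∧
        ∀ {W : Type} [Finite W] {T : SimpleGraph W}, connectedMembers C W T →
          ∀ t, rootedType k T t ∈ types → Absorbs k M r T t by
    obtain ⟨V, hV, M, r, hM, hK, habs⟩ := h Set.univ
    exact ⟨V, hV, M, r, hM, hK, fun hT t => habs hT t trivial⟩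
  intro types
  induction types, types.toFinite using Set.Finite.induction_on with
  | empty =>
    obtain ⟨V, hV, G, hG, hK⟩ := exists_connectedMembers_card_gt hC hAdd hne K
    exact ⟨V, hV, G, hG.2.nonempty.some, hG, hK, fun _ _ h => h.elim⟩
  | @insert τ types _ _ ih =>
    obtain ⟨V, hV, M, r, hM, hK, habs⟩ := ih
    by_cases hτ : ∃ (W : Type) (_ : Finite W) (T : SimpleGraph W) (t : W),
        connectedMembers C W T ∧ rootedType k T t = τ
    · obtain ⟨W, hW, T, t, hT, rfl⟩ := hτ
      refine ⟨V ⊕ Fin k × W, inferInstance, attachCopies M r T t (Fin k), .inl r,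
        attachCopies_induction (connectedMembers_isoInvariant hC)
          (connectedMembers_bridge hC hAdd) hM hT r t k, ?_, ?_⟩
      · rw [Nat.card_sum]
        omega
      · rintro W' _ P hP p (hp | hp)
        · exact (absorbs_attachCopies M r T t).congr hp.symm
        · exact (habs hP p hp).attachCopies_base T t (Fin k)
    · refine ⟨V, hV, M, r, hM, hK, ?_⟩
      rintro W _ T hT t (ht | ht)
      · exact (hτ ⟨W, inferInstance, T, t, hT, ht⟩).elim
      · exact habs hT t ht

lemma IsAbsorbing.rankTheory_bridge_eq {V W : Type} [Finite V] [Finite W] {M : SimpleGraph V}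
    {r : V} {K : SimpleGraph W} {v : W} (habs : IsAbsorbing k C M r)
    (hM : connectedMembers C V M) (hMK : connectedMembers C _ (bridge M K r v)) :
    rankTheory k (bridge M K r v) = rankTheory k M :=
  -- each of `M` and `bridge M K r v` absorbs the other
  calc rankTheory k (bridge M K r v)
    _ = rankTheory k (bridge (bridge M K r v) M (.inl r) r) :=
      (rankTheory_eq_of_rootedType_eq ((habs hM r).bridge_base K v)).symm
    _ = rankTheory k (bridge M (bridge M K r v) r (.inl r)) := rankTheory_iso (bridgeComm ..)
    _ = rankTheory k M := rankTheory_eq_of_rootedType_eq (habs hMK (.inl r))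

end Absorbing

/-! ### Decomposing a graph by the sizes of its components -/

/-- The vertices lying in components of size at most `K`. -/
def smallPart (K : ℕ) (G : SimpleGraph V) : Set V := {v | componentSize G v ≤ K}

/-- The graphs of the class all of whose components have at most `K` vertices. -/
def smallMembers (C : GraphClassOn) (K : ℕ) : GraphClassOn :=
  fun V _ G => C V G ∧ ∀ v, componentSize G v ≤ K

/-- The graphs of the class all of whose components have more than `K` vertices. -/
def largeMembers (C : GraphClassOn) (K : ℕ) : GraphClassOn :=
  fun V _ G => C V G ∧ ∀ v, K < componentSize G v

section SmallPart

variable {K : ℕ} {G : SimpleGraph V} {S : Set V} {v : V}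

lemma isComponentUnion_smallPart : IsComponentUnion G (smallPart K G) :=
  fun _ _ hxy => by simp only [smallPart, Set.mem_ofPred_eq,
    componentSize_eq_of_reachable hxy.reachable]

lemma IsComponentUnion.forall_componentSize_iff (h : IsComponentUnion G S) {p : ℕ → Prop} :
    (∀ v, p (componentSize G v)) ↔ (∀ v, p (componentSize (G.induce S) v)) ∧
      ∀ v, p (componentSize (G.induce Sᶜ) v) := by
  simp only [h.componentSize_induce, h.compl.componentSize_induce, Subtype.forall,
    Set.mem_compl_iff, ← forall_and]
  exact forall_congr' fun v => by tauto

lemma IsComponentUnion.smallPart_eq_iff (h : IsComponentUnion G S) :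
    smallPart K G = S ↔ (∀ v, componentSize (G.induce S) v ≤ K) ∧
      ∀ v, K < componentSize (G.induce Sᶜ) v := by
  simp only [h.componentSize_induce, h.compl.componentSize_induce, Subtype.forall,
    Set.mem_compl_iff, smallPart, Set.ext_iff, Set.mem_ofPred_eq, ← forall_and, ← not_le]
  exact forall_congr' fun v => by tauto

lemma supp_eq_iff :
    (G.connectedComponentMk v).supp = S ↔
      v ∈ S ∧ IsComponentUnion G S ∧ (G.induce S).Connected := by
  constructor
  · rintro rfl
    exact ⟨rfl, isComponentUnion_supp _, ConnectedComponent.connected_toSimpleGraph _⟩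
  · rintro ⟨hv, hS, hconn⟩
    ext x
    rw [ConnectedComponent.mem_supp_iff, ConnectedComponent.eq]
    exact ⟨fun hx => (hS.mem_iff_of_reachable hx).2 hv, fun hx =>
      (hconn.preconnected ⟨x, hx⟩ ⟨v, hv⟩).map (Embedding.induce S).toHom⟩

end SmallPart

section Decomposition

variable {C Q : GraphClassOn}

lemma classIsoInvariant_and (hC : ClassIsoInvariant C) (hQ : ClassIsoInvariant Q) :
    ClassIsoInvariant fun V _ G => C V G ∧ Q V G :=
  fun V W _ _ G H e => and_congr (hC V W G H e) (hQ V W G H e)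

lemma classIsoInvariant_forall_componentSize (p : ℕ → Prop) :
    ClassIsoInvariant fun _ _ G => ∀ v, p (componentSize G v) := by
  rintro V W _ _ G H ⟨e⟩
  simp only [← e.toEquiv.forall_congr_right, ← componentSize_iso e]
  rfl

lemma smallMembers_isoInvariant (hC : ClassIsoInvariant C) (K : ℕ) :
    ClassIsoInvariant (smallMembers C K) :=
  classIsoInvariant_and hC (classIsoInvariant_forall_componentSize (· ≤ K))

lemma largeMembers_isoInvariant (hC : ClassIsoInvariant C) (K : ℕ) :
    ClassIsoInvariant (largeMembers C K) :=
  classIsoInvariant_and hC (classIsoInvariant_forall_componentSize (K < ·))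

lemma card_eq_sum_card_fiber {α β : Type*} [Finite α] [Fintype β] (p : α → Prop) (f : α → β) :
    Nat.card {a // p a} = ∑ b, Nat.card {a // p a ∧ f a = b} := by
  rw [← Nat.card_sigma]
  exact Nat.card_congr <| (Equiv.sigmaFiberEquiv fun a : {a // p a} => f a).symm.trans <|
    Equiv.sigmaCongrRight fun b => Equiv.subtypeSubtypeEquivSubtypeInter p (f · = b)

lemma card_class_and_smallPart (hC : ClassIsoInvariant C) (hDec : ClassDecomposable C)
    (hQ : ClassIsoInvariant Q) (K n : ℕ) :
    Nat.card {G : SimpleGraph (Fin n) // C _ G ∧ Q _ (G.induce (smallPart K G))} =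
      ∑ S : Set (Fin n), classCount (fun V _ G => smallMembers C K V G ∧ Q V G) S.ncard *
        classCount (largeMembers C K) Sᶜ.ncard := by
  rw [card_eq_sum_card_fiber _ (smallPart K)]
  refine Finset.sum_congr rfl fun S _ => ?_
  rw [← card_split_eq (classIsoInvariant_and (smallMembers_isoInvariant hC K) hQ)
    (largeMembers_isoInvariant hC K)]
  refine Nat.card_congr (Equiv.subtypeEquivRight fun G => ?_)
  constructor
  · rintro ⟨⟨hG, hQG⟩, rfl⟩
    have hS := isComponentUnion_smallPart (K := K) (G := G)
    have hparts := (class_iff_of_isComponentUnion hC hDec hS).1 hG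
    have hsize := hS.smallPart_eq_iff.1 rfl
    exact ⟨hS, ⟨⟨hparts.1, hsize.1⟩, hQG⟩, hparts.2, hsize.2⟩
  · rintro ⟨hS, ⟨⟨hin, hsmall⟩, hQS⟩, hout, hlarge⟩
    obtain rfl := hS.smallPart_eq_iff.2 ⟨hsmall, hlarge⟩
    exact ⟨⟨(class_iff_of_isComponentUnion hC hDec hS).2 ⟨hin, hout⟩, hQS⟩, rfl⟩

lemma smallMembers_and_supp_eq_iff {n K : ℕ} (hC : ClassIsoInvariant C)
    (hDec : ClassDecomposable C) {G : SimpleGraph (Fin n)} {S : Set (Fin n)} {v : Fin n} :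
    smallMembers C K _ G ∧ (G.connectedComponentMk v).supp = S ↔
      v ∈ S ∧ IsComponentUnion G S ∧ smallMembers (connectedMembers C) K _ (G.induce S) ∧
        smallMembers C K _ (G.induce Sᶜ) := by
  rw [supp_eq_iff]
  by_cases hS : IsComponentUnion G S
  · simp only [smallMembers, connectedMembers, hS, class_iff_of_isComponentUnion hC hDec hS,
      hS.forall_componentSize_iff (p := (· ≤ K))]
    tauto
  · simp only [hS, false_and, and_false]

/-- Marking a vertex marks its component, which gives the analogue of `X * E' = X * P' * E` for the
generating functions `E = exp P` of all and `P` of the connected graphs. -/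
lemma mul_classCount_smallMembers (hC : ClassIsoInvariant C) (hDec : ClassDecomposable C)
    (K n : ℕ) :
    n * classCount (smallMembers C K) n =
      ∑ S : Set (Fin n), (S.ncard * classCount (smallMembers (connectedMembers C) K) S.ncard) *
        classCount (smallMembers C K) Sᶜ.ncard := by
  have hpairs : n * classCount (smallMembers C K) n =
      Nat.card {p : Fin n × SimpleGraph (Fin n) // smallMembers C K _ p.2} := by
    rw [Nat.card_congr <| Equiv.subtypeProdEquivSigmaSubtype fun _ => smallMembers C K (Fin n),
      Nat.card_sigma, Finset.sum_const, Finset.card_fin, smul_eq_mul, classCount]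
  rw [hpairs, card_eq_sum_card_fiber _ fun p => (p.2.connectedComponentMk p.1).supp]
  refine Finset.sum_congr rfl fun S _ => ?_
  rw [mul_assoc, ← card_split_eq
    (smallMembers_isoInvariant (connectedMembers_isoInvariant hC) K)
    (smallMembers_isoInvariant hC K), ← Nat.card_coe_set_eq, ← Nat.card_prod]
  simp only [smallMembers_and_supp_eq_iff hC hDec]
  exact Nat.card_congr <| Equiv.subtypeProdEquivProd (p := (· ∈ S)) (q := fun G =>
    IsComponentUnion G S ∧ smallMembers (connectedMembers C) K _ (G.induce S) ∧
      smallMembers C K _ (G.induce Sᶜ))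

end Decomposition

/-! ### Power series with summable coefficients -/

section Summability

open PowerSeries

lemma summable_of_sum_natCast_mul_le {g : ℕ → ℝ} (hg : ∀ n, 0 ≤ g n) (b : ℝ)
    (h : ∀ N, ∑ n ∈ Finset.range N, n * g n ≤ b * ∑ n ∈ Finset.range N, g n) : Summable g := by
  obtain ⟨L, hL⟩ := exists_nat_gt (b + 1)
  refine summable_of_sum_range_le (c := L * ∑ n ∈ Finset.range L, g n) hg fun N => ?_
  have hterm (n : ℕ) : L * g n ≤ n * g n + if n < L then L * g n else 0 := by
    split_ifs with hn
    · exact le_add_of_nonneg_left (mul_nonneg n.cast_nonneg (hg n))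
    · rw [add_zero]
      exact mul_le_mul_of_nonneg_right (Nat.cast_le.2 (not_lt.1 hn)) (hg n)
  have htail : ∑ n ∈ Finset.range N, (if n < L then L * g n else 0) ≤
      L * ∑ n ∈ Finset.range L, g n := by
    rw [← Finset.sum_filter, Finset.mul_sum]
    refine Finset.sum_le_sum_of_subset_of_nonneg (fun n hn => ?_)
      fun n _ _ => mul_nonneg L.cast_nonneg (hg n)
    exact Finset.mem_range.2 (Finset.mem_filter.1 hn).2
  have hsum : L * ∑ n ∈ Finset.range N, g n ≤
      b * ∑ n ∈ Finset.range N, g n + L * ∑ n ∈ Finset.range L, g n := by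
    rw [Finset.mul_sum]
    refine (Finset.sum_le_sum fun n _ => hterm n).trans ?_
    rw [Finset.sum_add_distrib]
    exact add_le_add (h N) htail
  nlinarith [Finset.sum_nonneg fun n (_ : n ∈ Finset.range N) => hg n]

variable {𝕜 : Type*} [RCLike 𝕜]

lemma summable_norm_coeff_mul {F G : 𝕜⟦X⟧} (hF : Summable fun n => ‖coeff n F‖)
    (hG : Summable fun n => ‖coeff n G‖) : Summable fun n => ‖coeff n (F * G)‖ := by
  simpa only [coeff_mul] using summable_norm_sum_mul_antidiagonal_of_summable_norm hF hG

lemma sum_norm_coeff_coe_mul_le (B : Polynomial 𝕜) (F : 𝕜⟦X⟧) (N : ℕ) :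
    ∑ n ∈ Finset.range N, ‖coeff n ((B : 𝕜⟦X⟧) * F)‖ ≤
      (∑ i ∈ B.support, ‖B.coeff i‖) * ∑ n ∈ Finset.range N, ‖coeff n F‖ := by
  have hcoeff (n : ℕ) : coeff n ((B : 𝕜⟦X⟧) * F) =
      ∑ i ∈ B.support, B.coeff i * if i ≤ n then coeff (n - i) F else 0 := by
    have hB : (B : 𝕜⟦X⟧) = ∑ i ∈ B.support, C (B.coeff i) * X ^ i := by
      ext m
      simp +contextual [coeff_X_pow]
    simp only [hB, Finset.sum_mul, mul_assoc, map_sum, coeff_C_mul, coeff_X_pow_mul']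
  have hshift (i : ℕ) : ∑ n ∈ Finset.range N, ‖if i ≤ n then coeff (n - i) F else 0‖ ≤
      ∑ n ∈ Finset.range N, ‖coeff n F‖ := by
    simp only [apply_ite norm, norm_zero]
    rw [← Finset.sum_filter, Finset.range_eq_Ico, Finset.Ico_filter_le, Finset.sum_Ico_eq_sum_range]
    simp only [max_eq_right, zero_le, add_tsub_cancel_left]
    rw [← Finset.range_eq_Ico]
    exact Finset.sum_le_sum_of_subset_of_nonneg (Finset.range_mono (Nat.sub_le N i))
      fun _ _ _ => norm_nonneg _
  calc ∑ n ∈ Finset.range N, ‖coeff n ((B : 𝕜⟦X⟧) * F)‖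
    _ ≤ ∑ n ∈ Finset.range N, ∑ i ∈ B.support,
        ‖B.coeff i‖ * ‖if i ≤ n then coeff (n - i) F else 0‖ := by
      refine Finset.sum_le_sum fun n _ => ?_
      rw [hcoeff]
      exact (norm_sum_le _ _).trans_eq (Finset.sum_congr rfl fun i _ => norm_mul _ _)
    _ ≤ _ := by
      rw [Finset.sum_comm, Finset.sum_mul]
      refine Finset.sum_le_sum fun i _ => ?_
      rw [← Finset.mul_sum]
      exact mul_le_mul_of_nonneg_left (hshift i) (norm_nonneg _)

lemma coeff_X_mul_derivative (F : 𝕜⟦X⟧) (n : ℕ) :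
    coeff n (X * d⁄dX 𝕜 F) = n * coeff n F := by
  cases n with
  | zero => simp
  | succ n => rw [coeff_succ_X_mul, coeff_derivative, Nat.cast_succ, mul_comm]

lemma summable_norm_coeff_of_X_mul_derivative_eq (B : Polynomial 𝕜) {F : 𝕜⟦X⟧}
    (h : X * d⁄dX 𝕜 F = (B : 𝕜⟦X⟧) * F) : Summable fun n => ‖coeff n F‖ := by
  refine summable_of_sum_natCast_mul_le (fun n => norm_nonneg _)
    (∑ i ∈ B.support, ‖B.coeff i‖) fun N => ?_
  refine le_trans (Finset.sum_le_sum fun n _ => ?_) (sum_norm_coeff_coe_mul_le B F N)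
  rw [← h, coeff_X_mul_derivative, norm_mul, RCLike.norm_natCast]

lemma X_mul_derivative_inv {F B : 𝕜⟦X⟧} (hF : constantCoeff F ≠ 0)
    (h : X * d⁄dX 𝕜 F = B * F) : X * d⁄dX 𝕜 F⁻¹ = -B * F⁻¹ := by
  rw [derivative_inv']
  linear_combination -F⁻¹ ^ 2 * h - B * F⁻¹ * PowerSeries.mul_inv_cancel F hF

end Summability

section Ratio

open PowerSeries

lemma tendsto_div_add_of_tendsto_succ_div {a : ℕ → ℝ} (ha : ∀ n, a n ≠ 0) {γ : ℝ} (hγ : γ ≠ 0)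
    (h : Tendsto (fun n => a (n + 1) / a n) atTop (𝓝 γ)) (j : ℕ) :
    Tendsto (fun n => a n / a (n + j)) atTop (𝓝 (γ⁻¹ ^ j)) := by
  induction j with
  | zero => simp [div_self (ha _)]
  | succ j ih =>
    rw [pow_succ]
    refine (ih.mul (((tendsto_add_atTop_iff_nat j).2 h).inv₀ hγ)).congr fun n => ?_
    rw [inv_div, div_mul_div_cancel₀ (ha _)]
    rfl

lemma tendsto_coeff_mul_div_coeff {F A : ℝ⟦X⟧} (hF : Summable fun n => ‖coeff n F‖)
    (hpos : ∀ n, 0 < coeff n A) (hmono : Monotone fun n => coeff n A) {γ : ℝ} (hγ : γ ≠ 0)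
    (hratio : Tendsto (fun n => coeff (n + 1) A / coeff n A) atTop (𝓝 γ)) :
    Tendsto (fun n => coeff n (F * A) / coeff n A) atTop (𝓝 (∑' j, coeff j F * γ⁻¹ ^ j)) := by
  have hterm (n j : ℕ) : ‖if j ≤ n then coeff j F * (coeff (n - j) A / coeff n A) else 0‖ ≤
      ‖coeff j F‖ := by
    split_ifs
    · rw [norm_mul]
      refine mul_le_of_le_one_right (norm_nonneg _) ?_
      rw [Real.norm_of_nonneg (div_nonneg (hpos _).le (hpos _).le), div_le_one (hpos _)]
      exact hmono (Nat.sub_le _ _)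
    · simp
  refine (tendsto_tsum_of_dominated_convergence hF (fun j => ?_)
    (Eventually.of_forall hterm)).congr fun n => ?_
  · rw [← tendsto_add_atTop_iff_nat j]
    simpa using (tendsto_div_add_of_tendsto_succ_div (fun n => (hpos n).ne') hγ hratio j).const_mul
      (coeff j F)
  · rw [coeff_mul, Finset.Nat.sum_antidiagonal_eq_sum_range_succ_mk, Finset.sum_div,
      tsum_eq_sum (s := Finset.range (n + 1)) fun j hj => if_neg (by simpa using hj)]
    refine Finset.sum_congr rfl fun j hj => ?_
    rw [if_pos (Nat.lt_succ_iff.1 (Finset.mem_range.1 hj)), mul_div_assoc]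

end Ratio

/-! ### Exponential generating functions of graph classes -/

section Egf

open PowerSeries Nat

/-- The exponential generating function of a sequence of numbers. -/
noncomputable def egf (f : ℕ → ℕ) : ℝ⟦X⟧ := PowerSeries.mk fun n => f n / n !

@[simp] lemma coeff_egf (f : ℕ → ℕ) (n : ℕ) : coeff n (egf f) = f n / n ! := coeff_mk _ _

lemma coeff_egf_nonneg (f : ℕ → ℕ) (n : ℕ) : 0 ≤ coeff n (egf f) := by
  rw [coeff_egf]
  positivity

lemma coeff_egf_mul_egf (f g : ℕ → ℕ) (n : ℕ) :
    coeff n (egf f * egf g) = (∑ S : Set (Fin n), f S.ncard * g Sᶜ.ncard : ℕ) / n ! := by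
  have hsum : ∑ S : Set (Fin n), f S.ncard * g Sᶜ.ncard =
      ∑ i ∈ Finset.range (n + 1), n.choose i * (f i * g (n - i)) := by
    rw [← (Fintype.finsetEquivSet (α := Fin n)).sum_comp]
    simp only [Fintype.finsetEquivSet_apply, ← Finset.coe_compl, Set.ncard_coe_finset,
      Finset.card_compl, Fintype.card_fin]
    simpa using Finset.sum_powerset_apply_card (fun i => f i * g (n - i))
      (x := (Finset.univ : Finset (Fin n)))
  rw [hsum, coeff_mul, Finset.Nat.sum_antidiagonal_eq_sum_range_succ_mk, Nat.cast_sum,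
    Finset.sum_div]
  refine Finset.sum_congr rfl fun i hi => ?_
  rw [coeff_egf, coeff_egf, Nat.cast_mul, Nat.cast_mul,
    Nat.cast_choose ℝ (Nat.lt_succ_iff.1 (Finset.mem_range.1 hi))]
  field_simp

lemma X_mul_derivative_egf (f : ℕ → ℕ) : X * d⁄dX ℝ (egf f) = egf fun n => n * f n := by
  ext n
  rw [coeff_X_mul_derivative, coeff_egf, coeff_egf, Nat.cast_mul, mul_div_assoc]

end Egf

section Counting

open PowerSeries Nat

variable {C Q : GraphClassOn}

lemma class_of_isEmpty (hDec : ClassDecomposable C) {U : Type} [Finite U] [IsEmpty U]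
    (G : SimpleGraph U) : C U G :=
  (hDec _ G).2 fun c => isEmptyElim c.nonempty_supp.some

lemma classCount_pos (hDec : ClassDecomposable C)
    (hne : ∀ n : ℕ, 1 ≤ n → ∃ G : SimpleGraph (Fin n), C (Fin n) G) (n : ℕ) :
    0 < classCount C n := by
  obtain ⟨G, hG⟩ : ∃ G : SimpleGraph (Fin n), C _ G := by
    rcases n.eq_zero_or_pos with rfl | hn
    · exact ⟨⊥, class_of_isEmpty hDec _⟩
    · exact hne n hn
  exact Nat.card_pos_iff.2 ⟨⟨⟨G, hG⟩⟩, inferInstance⟩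

lemma mul_classCount_le_classCount_succ (hC : ClassIsoInvariant C) (hAdd : ClassAddable C)
    (hne : ∃ G : SimpleGraph (Fin 1), C _ G) (n : ℕ) :
    (n + 1) * classCount C n ≤ classCount C (n + 1) := by
  obtain ⟨P, hP⟩ := hne
  let join (q : Option (Fin n) × {G : SimpleGraph (Fin n) // C _ G}) :
      SimpleGraph (Fin n ⊕ Fin 1) := glue q.2.1 P fun x _ => q.1 = some x
  have hmem (q) : C _ (join q) := by
    obtain ⟨_ | r, G, hG⟩ := q
    · convert (class_sum_iff hC hAdd.1).2 ⟨hG, hP⟩ using 1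
      ext (x | x) (y | y) <;> simp [join]
    · convert class_bridge hC hAdd hG hP r 0 using 1
      ext (x | x) (y | y) <;> simp [join, eq_comm, Fin.fin_one_eq_zero]
  have hinj : Function.Injective fun q => (⟨join q, hmem q⟩ : {G // C (Fin n ⊕ Fin 1) G}) := by
    rintro ⟨o, G, hG⟩ ⟨o', G', hG'⟩ h
    have hAdj (x y) : (join ⟨o, G, hG⟩).Adj x y ↔ (join ⟨o', G', hG'⟩).Adj x y :=
      iff_of_eq (congrArg (fun H => H.1.Adj x y) h)
    obtain rfl : G = G' := by
      ext x y
      exact hAdj (.inl x) (.inl y)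
    obtain rfl : o = o' := Option.ext fun x => hAdj (.inl x) (.inr 0)
    rfl
  calc (n + 1) * classCount C n
    _ = Nat.card (Option (Fin n) × {G : SimpleGraph (Fin n) // C _ G}) := by
      simp [Nat.card_prod, classCount]
    _ ≤ Nat.card {G // C (Fin n ⊕ Fin 1) G} := Nat.card_le_card_of_injective _ hinj
    _ = classCount C (n + 1) := by simp [card_class_eq_classCount hC]

lemma monotone_coeff_egf_classCount (hC : ClassIsoInvariant C) (hAdd : ClassAddable C)
    (hne : ∃ G : SimpleGraph (Fin 1), C _ G) : Monotone fun n => coeff n (egf (classCount C)) := by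
  refine monotone_nat_of_le_succ fun n => ?_
  have h : ((n + 1 : ℕ) : ℝ) * classCount C n ≤ classCount C (n + 1) := by
    exact_mod_cast mul_classCount_le_classCount_succ hC hAdd hne n
  rw [coeff_egf, coeff_egf, Nat.factorial_succ, Nat.cast_mul, div_le_div_iff₀ (by positivity)
    (by positivity)]
  nlinarith [(Nat.cast_pos (α := ℝ)).2 n.factorial_pos]

lemma coeff_egf_classCount_pos (hDec : ClassDecomposable C)
    (hne : ∀ n : ℕ, 1 ≤ n → ∃ G : SimpleGraph (Fin n), C (Fin n) G) (n : ℕ) :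
    0 < coeff n (egf (classCount C)) := by
  have := classCount_pos hDec hne n
  rw [coeff_egf]
  positivity

lemma exists_tendsto_coeff_egf_classCount_succ_div (hC : ClassIsoInvariant C)
    (hAdd : ClassAddable C) (hSmooth : ClassSmooth C)
    (hne : ∀ n : ℕ, 1 ≤ n → ∃ G : SimpleGraph (Fin n), C (Fin n) G) :
    ∃ γ : ℝ, γ ≠ 0 ∧ Tendsto (fun n => coeff (n + 1) (egf (classCount C)) /
      coeff n (egf (classCount C))) atTop (𝓝 γ) := by
  obtain ⟨γ, h⟩ := hSmooth
  have hratio : Tendsto (fun n => coeff (n + 1) (egf (classCount C)) /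
      coeff n (egf (classCount C))) atTop (𝓝 γ) := by
    refine ((tendsto_add_atTop_iff_nat 1).2 h).congr fun n => ?_
    rw [coeff_egf, coeff_egf, Nat.factorial_succ, Nat.cast_mul, Nat.add_sub_cancel]
    field_simp
  have hγ : 1 ≤ γ := ge_of_tendsto' hratio fun n =>
    (one_le_div (coeff_egf_classCount_pos hAdd.1 hne n)).2
      (monotone_coeff_egf_classCount hC hAdd (hne 1 le_rfl) n.le_succ)
  exact ⟨γ, by positivity, hratio⟩

lemma classProb_smallPart_eq (hC : ClassIsoInvariant C) (hDec : ClassDecomposable C)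
    (hQ : ClassIsoInvariant Q) (K n : ℕ) :
    classProb C n (fun G => Q _ (G.induce (smallPart K G))) =
      coeff n (egf (classCount fun V _ G => smallMembers C K V G ∧ Q V G) *
        egf (classCount (largeMembers C K))) / coeff n (egf (classCount C)) := by
  rw [coeff_egf_mul_egf, ← card_class_and_smallPart hC hDec hQ, coeff_egf, classProb,
    div_div_div_cancel_right₀ (Nat.cast_ne_zero.2 n.factorial_ne_zero)]

lemma egf_classCount_eq_mul (hC : ClassIsoInvariant C) (hDec : ClassDecomposable C) (K : ℕ) :
    egf (classCount C) =
      egf (classCount (smallMembers C K)) * egf (classCount (largeMembers C K)) := by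
  ext n
  have hcard := card_class_and_smallPart hC hDec (Q := fun _ _ _ => True)
    (fun _ _ _ _ _ _ _ => Iff.rfl) K n
  simp only [and_true] at hcard
  rw [coeff_egf_mul_egf, coeff_egf, ← hcard, classCount]

/-- Marking a vertex turns `E = exp P` into `X * E' = (X * P') * E`, where `P` counts the connected
graphs with at most `K` vertices and so is a polynomial. -/
lemma exists_X_mul_derivative_egf_smallMembers (hC : ClassIsoInvariant C)
    (hDec : ClassDecomposable C) (K : ℕ) :
    ∃ B : Polynomial ℝ, X * d⁄dX ℝ (egf (classCount (smallMembers C K))) =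
      (B : ℝ⟦X⟧) * egf (classCount (smallMembers C K)) := by
  let conn (n : ℕ) : ℕ := n * classCount (smallMembers (connectedMembers C) K) n
  have hconn (n : ℕ) (hn : K < n) : conn n = 0 := by
    refine Nat.mul_eq_zero.2 <| .inr <| Nat.card_eq_zero.2 <| .inl ⟨fun ⟨G, hG⟩ => ?_⟩
    have hle := hG.2 ⟨0, by omega⟩
    rw [componentSize_eq_of_connected hG.1.2, Nat.card_fin] at hle
    omega
  have htrunc : (trunc (K + 1) (egf conn) : ℝ⟦X⟧) = egf conn := by
    ext n
    rw [Polynomial.coeff_coe, coeff_trunc]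
    split_ifs with hn
    · rfl
    · simp [hconn n (by omega)]
  refine ⟨trunc (K + 1) (egf conn), ?_⟩
  ext n
  rw [htrunc, X_mul_derivative_egf, coeff_egf_mul_egf, coeff_egf,
    mul_classCount_smallMembers hC hDec]

lemma constantCoeff_egf_smallMembers_ne_zero (hDec : ClassDecomposable C) (K : ℕ) :
    constantCoeff (egf (classCount (smallMembers C K))) ≠ 0 := by
  have : 0 < classCount (smallMembers C K) 0 :=
    Nat.card_pos_iff.2 ⟨⟨⟨⊥, class_of_isEmpty hDec _, fun v => v.elim0⟩⟩, inferInstance⟩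
  rw [← coeff_zero_eq_constantCoeff_apply, coeff_egf]
  positivity

lemma summable_norm_coeff_egf_of_le {f g : ℕ → ℕ} (h : f ≤ g)
    (hg : Summable fun n => ‖coeff n (egf g)‖) : Summable fun n => ‖coeff n (egf f)‖ := by
  refine hg.of_nonneg_of_le (fun n => norm_nonneg _) fun n => ?_
  rw [Real.norm_of_nonneg (coeff_egf_nonneg f n), Real.norm_of_nonneg (coeff_egf_nonneg g n),
    coeff_egf, coeff_egf]
  exact div_le_div_of_nonneg_right (Nat.cast_le.2 (h n)) (Nat.cast_nonneg _)

/-- With `E_Q`, `E` and `L` counting the small members satisfying `Q`, all small members, and the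
large members, the probability is the ratio of the coefficients of `E_Q * L = (E_Q * E⁻¹) * A` and
of `A = E * L`. -/
lemma exists_tendsto_classProb_smallPart (hC : ClassIsoInvariant C) (hAdd : ClassAddable C)
    (hSmooth : ClassSmooth C) (hne : ∀ n : ℕ, 1 ≤ n → ∃ G : SimpleGraph (Fin n), C (Fin n) G)
    (hQ : ClassIsoInvariant Q) (K : ℕ) :
    ∃ p : ℝ, Tendsto (fun n => classProb C n fun G => Q _ (G.induce (smallPart K G)))
      atTop (𝓝 p) := by
  have hmono := monotone_coeff_egf_classCount hC hAdd (hne 1 le_rfl)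
  obtain ⟨γ, hγ, hratio⟩ := exists_tendsto_coeff_egf_classCount_succ_div hC hAdd hSmooth hne
  obtain ⟨B, hB⟩ := exists_X_mul_derivative_egf_smallMembers hC hAdd.1 K
  have hE := constantCoeff_egf_smallMembers_ne_zero hAdd.1 K
  have hEinv := X_mul_derivative_inv hE hB
  rw [← Polynomial.coe_neg] at hEinv
  have hle : (classCount fun V _ G => smallMembers C K V G ∧ Q V G) ≤
      classCount (smallMembers C K) :=
    fun n => Nat.card_mono (Set.toFinite _) fun G => And.left
  have hsum := summable_norm_coeff_mul
    (summable_norm_coeff_egf_of_le hle (summable_norm_coeff_of_X_mul_derivative_eq B hB))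
    (summable_norm_coeff_of_X_mul_derivative_eq (-B) hEinv)
  refine ⟨_, (tendsto_coeff_mul_div_coeff hsum (coeff_egf_classCount_pos hAdd.1 hne) hmono hγ
    hratio).congr fun n => ?_⟩
  rw [classProb_smallPart_eq hC hAdd.1 hQ, egf_classCount_eq_mul hC hAdd.1 K, mul_assoc,
    ← mul_assoc _⁻¹, PowerSeries.inv_mul_cancel _ hE, one_mul]

end Counting

/-! ### Giant components -/

section DoubleCounting

variable {α β : Type*} [Finite α] [Finite β]

lemma card_mul_le_card_mul_of_fiber_le {p q : α → Prop} {r s : α → β → Prop} {m k : ℕ}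
    (hm : ∀ a, p a → m ≤ Nat.card {b // r a b}) (hk : ∀ a, q a → Nat.card {b // s a b} ≤ k)
    (hle : ∀ b, Nat.card {a // p a ∧ r a b} ≤ Nat.card {a // q a ∧ s a b}) :
    Nat.card {a // p a} * m ≤ Nat.card {a // q a} * k := by
  cases nonempty_fintype α
  cases nonempty_fintype β
  classical
  have hcomm (p : α → Prop) (r : α → β → Prop) :
      ∑ a : {a // p a}, Nat.card {b // r a b} = ∑ b, Nat.card {a // p a ∧ r a b} := by
    rw [← Nat.card_sigma, ← Nat.card_sigma]
    exact Nat.card_congr ⟨fun x => ⟨x.2.1, x.1.1, x.1.2, x.2.2⟩,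
      fun y => ⟨⟨y.2.1, y.2.2.1⟩, y.1, y.2.2.2⟩, fun _ => rfl, fun _ => rfl⟩
  calc Nat.card {a // p a} * m
    _ = ∑ _a : {a // p a}, m := by simp
    _ ≤ ∑ a : {a // p a}, Nat.card {b // r a b} := Finset.sum_le_sum fun a _ => hm a a.2
    _ ≤ ∑ a : {a // q a}, Nat.card {b // s a b} := by
      rw [hcomm, hcomm]
      exact Finset.sum_le_sum fun b _ => hle b
    _ ≤ ∑ _a : {a // q a}, k := Finset.sum_le_sum fun a _ => hk a a.2
    _ = Nat.card {a // q a} * k := by simp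

end DoubleCounting

section Bridges

variable {C : GraphClassOn} {G : SimpleGraph V}

/-- The subgraph formed by the bridges of `G`. -/
def bridgeSubgraph (G : SimpleGraph V) : SimpleGraph V where
  Adj u v := G.Adj u v ∧ G.IsBridge s(u, v)
  symm := ⟨fun _ _ h => ⟨h.1.symm, Sym2.eq_swap ▸ h.2⟩⟩
  loopless := ⟨fun v h => G.loopless.1 v h.1⟩

lemma isAcyclic_bridgeSubgraph (G : SimpleGraph V) : (bridgeSubgraph G).IsAcyclic :=
  isAcyclic_iff_forall_adj_isBridge.2 fun _ _ h => h.2.anti fun _ _ h => h.1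

lemma card_adj_le_of_isAcyclic [Finite V] (hG : G.IsAcyclic) :
    Nat.card {p : V × V // G.Adj p.1 p.2} ≤ 2 * Nat.card V := by
  classical
  cases nonempty_fintype V
  cases isEmpty_or_nonempty V with
  | inl _ => simp
  | inr _ =>
    obtain ⟨T, hGT, -, hT⟩ := connected_top.exists_isTree_le_of_le_of_isAcyclic le_top hG
    calc Nat.card {p : V × V // G.Adj p.1 p.2}
      _ ≤ Nat.card {p : V × V // T.Adj p.1 p.2} :=
        Nat.card_mono (Set.toFinite _) fun p hp => hGT hp
      _ = 2 * T.edgeFinset.card := by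
        rw [T.two_mul_card_edgeFinset, Nat.card_eq_fintype_card, Fintype.card_subtype]
      _ ≤ 2 * Nat.card V := by
        rw [Nat.card_eq_fintype_card, ← hT.card_edgeFinset]
        omega

lemma mul_le_card_not_reachable [Finite V] {K : ℕ}
    (h : ∀ v, componentSize G v + K ≤ Nat.card V) :
    Nat.card V * K ≤ Nat.card {p : V × V // ¬G.Reachable p.1 p.2} := by
  cases nonempty_fintype V
  have hfiber (u : V) : K ≤ Nat.card {v // ¬G.Reachable u v} := by
    have hcompl : {v | ¬G.Reachable u v} = (G.connectedComponentMk u).suppᶜ := by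
      ext v
      simp [reachable_comm]
    have hcard := Set.ncard_add_ncard_compl (G.connectedComponentMk u).supp
    rw [← hcompl] at hcard
    exact Nat.le_of_add_le_add_left ((h u).trans hcard.ge)
  rw [Nat.card_congr <| Equiv.subtypeProdEquivSigmaSubtype fun u v => ¬G.Reachable u v,
    Nat.card_sigma]
  calc Nat.card V * K
    _ = ∑ _u : V, K := by simp
    _ ≤ _ := Finset.sum_le_sum fun u _ => hfiber u

lemma card_not_reachable_le_card_bridge {V : Type} [Finite V] (hAdd : ClassBridgeAddable C)
    (p : SimpleGraph V → Prop) (u v : V) :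
    Nat.card {G // (C V G ∧ p G) ∧ ¬G.Reachable u v} ≤
      Nat.card {G // C V G ∧ (bridgeSubgraph G).Adj u v} := by
  have hne {H : SimpleGraph V} (hH : ¬H.Reachable u v) : u ≠ v := by
    rintro rfl
    exact hH .rfl
  have hdisj {H : SimpleGraph V} (hH : ¬H.Reachable u v) : Disjoint H (fromEdgeSet {s(u, v)}) :=
    (disjoint_fromEdgeSet ..).2 <| Set.disjoint_singleton_right.2 fun h => hH (Adj.reachable h)
  refine Nat.card_le_card_of_injective (fun G => ⟨G.1 ⊔ fromEdgeSet {s(u, v)},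
    hAdd _ _ _ _ G.2.1.1 G.2.2, ?_, isBridge_sup_edge.2 (.of_not_reachable G.2.2)⟩) ?_
  · simp [hne G.2.2]
  · rintro ⟨G, hG, hGuv⟩ ⟨G', hG', hGuv'⟩ h
    exact Subtype.ext <| eq_of_inf_eq_sup_eq
      ((hdisj hGuv).eq_bot.trans (hdisj hGuv').eq_bot.symm) (Subtype.ext_iff.1 h)

/-- Double counting of pairs of a graph and an edge joining two of its components. -/
lemma card_forall_componentSize_mul_le (hAdd : ClassBridgeAddable C) {n : ℕ} (hn : 0 < n) (K : ℕ) :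
    Nat.card {G : SimpleGraph (Fin n) // C _ G ∧ ∀ v, componentSize G v + K ≤ n} * K ≤
      2 * classCount C n := by
  have h := card_mul_le_card_mul_of_fiber_le (m := n * K) (k := 2 * n)
    (p := fun G : SimpleGraph (Fin n) => C _ G ∧ ∀ v, componentSize G v + K ≤ n) (q := C (Fin n))
    (r := fun G (p : Fin n × Fin n) => ¬G.Reachable p.1 p.2)
    (s := fun G p => (bridgeSubgraph G).Adj p.1 p.2)
    (fun G hG => by simpa using mul_le_card_not_reachable (G := G) (K := K) (by simpa using hG.2))
    (fun G _ => by simpa using card_adj_le_of_isAcyclic (isAcyclic_bridgeSubgraph G))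
    fun p => card_not_reachable_le_card_bridge hAdd _ p.1 p.2
  rw [classCount]
  refine Nat.le_of_mul_le_mul_right ?_ hn
  linarith

end Bridges

/-! ### Pendant copies -/

/-- The induced copy `j` of `M` in `G` is joined to the rest of `G` by a single edge, which connects
the image of the root `r` with the vertex `w` outside the copy. -/
structure IsPendantCopy (M : SimpleGraph W) (r : W) (G : SimpleGraph V) (j : M ↪g G) (w : V) :
    Prop where
  notMem : w ∉ Set.range j
  adj_iff : ∀ x ∉ Set.range j, ∀ a, G.Adj x (j a) ↔ x = w ∧ a = r

/-- `G` contains a pendant copy of the rooted graph `(M, r)`. -/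
def HasPendantCopy (M : SimpleGraph W) (r : W) (G : SimpleGraph V) : Prop :=
  ∃ (j : M ↪g G) (w : V), IsPendantCopy M r G j w

section PendantCopies

variable {M : SimpleGraph W} {r : W} {G : SimpleGraph V} {H : SimpleGraph V'}

lemma componentSize_le_of_embedding [Finite V'] (f : G ↪g H) (x : V) :
    componentSize G x ≤ componentSize H (f x) := by
  rw [componentSize, ← Set.ncard_image_of_injective _ f.injective]
  refine Set.ncard_le_ncard ?_
  rintro _ ⟨y, hy, rfl⟩
  exact ConnectedComponent.eq.2 ((ConnectedComponent.eq.1 hy).map f.toHom)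

lemma IsPendantCopy.of_embedding {j : M ↪g H} {w : V'} (h : IsPendantCopy M r H j w) (f : G ↪g H)
    {j' : M ↪g G} {w' : V} (hj : ∀ a, f (j' a) = j a) (hw : f w' = w) :
    IsPendantCopy M r G j' w' where
  notMem := by
    rintro ⟨a, rfl⟩
    exact h.notMem ⟨a, by rw [← hw, hj]⟩
  adj_iff x hx a := by
    rw [← f.map_adj_iff, hj, h.adj_iff, ← hw, f.injective.eq_iff]
    rintro ⟨b, hb⟩
    exact hx ⟨b, f.injective (by rw [hj, hb])⟩

lemma IsPendantCopy.exists_isPendantCopy {j : M ↪g H} {w : V} {f : G ↪g H}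
    (h : IsPendantCopy M r H j (f w)) (hj : Set.range j ⊆ Set.range f) :
    ∃ j' : M ↪g G, IsPendantCopy M r G j' w := by
  choose j' hj' using fun a => hj ⟨a, rfl⟩
  exact ⟨⟨⟨j', fun a b hab => j.injective (by rw [← hj', ← hj', hab])⟩, fun {a b} =>
    (f.map_adj_iff (v := j' a) (w := j' b)).symm.trans (by rw [hj', hj', j.map_adj_iff])⟩,
    h.of_embedding f hj' rfl⟩

lemma IsPendantCopy.map_iso {j : M ↪g G} {w : V} (h : IsPendantCopy M r G j w) (e : G ≃g H) :
    IsPendantCopy M r H (e.toEmbedding.comp j) (e w) :=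
  h.of_embedding e.symm.toEmbedding (fun a => e.symm_apply_apply (j a)) (e.symm_apply_apply w)

/-- The copy of `G` in a bridge of `G` and `M`. -/
def bridgeInl (G : SimpleGraph V) (M : SimpleGraph W) (v : V) (r : W) : G ↪g bridge G M v r :=
  ⟨Function.Embedding.inl, Iff.rfl⟩

/-- The copy of `M` in a bridge of `G` and `M`. -/
def bridgeInr (G : SimpleGraph V) (M : SimpleGraph W) (v : V) (r : W) : M ↪g bridge G M v r :=
  ⟨Function.Embedding.inr, Iff.rfl⟩

@[simp] lemma bridgeInr_apply (G : SimpleGraph V) (M : SimpleGraph W) (v : V) (r x : W) :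
    bridgeInr G M v r x = .inr x := rfl

lemma isPendantCopy_bridge (G : SimpleGraph V) (M : SimpleGraph W) (v : V) (r : W) :
    IsPendantCopy M r (bridge G M v r) (bridgeInr G M v r) (.inl v) where
  notMem := by simp
  adj_iff := by
    rintro (x | x) hx a
    · simp
    · exact absurd ⟨x, rfl⟩ hx

lemma range_comp_bridgeInl {v : V} (e : bridge G M v r ≃g H) :
    Set.range (e.toEmbedding.comp (bridgeInl G M v r)) =
      (Set.range (e.toEmbedding.comp (bridgeInr G M v r)))ᶜ := by
  change Set.range (e ∘ Sum.inl) = (Set.range (e ∘ Sum.inr))ᶜ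
  rw [Set.range_comp, Set.range_comp, ← Set.image_compl_eq e.bijective, Set.compl_range_inr]

lemma bridge_injective {G' : SimpleGraph V} {v v' : V} (h : bridge G M v r = bridge G' M v' r) :
    G = G' ∧ v = v' := by
  have hadj (x y) : (bridge G M v r).Adj x y ↔ (bridge G' M v' r).Adj x y := by rw [h]
  refine ⟨?_, ?_⟩
  · ext x y
    exact hadj (.inl x) (.inl y)
  · simpa using hadj (.inl v) (.inr r)

variable {j j₁ j₂ : M ↪g H} {w w₁ w₂ : V'}

open Classical in
/-- A graph with a pendant copy of `M` is a bridge of `M` and of what the copy leaves. -/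
noncomputable def IsPendantCopy.bridgeIso (h : IsPendantCopy M r H j w) :
    bridge M (H.induce (Set.range j)ᶜ) r ⟨w, h.notMem⟩ ≃g H where
  toEquiv := ((Equiv.ofInjective j j.injective).sumCongr (Equiv.refl _)).trans
    (Equiv.Set.sumCompl (Set.range j))
  map_rel_iff' := by
    rintro (a | ⟨x, hx⟩) (b | ⟨y, hy⟩)
    · simp
    · simp [adj_comm H (j a), h.adj_iff y hy, and_comm]
    · simp [h.adj_iff x hx, and_comm]
    · simp

lemma IsPendantCopy.subset_or_disjoint (h₂ : IsPendantCopy M r H j₂ w₂) (hM : M.Connected)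
    (hw : w₂ ∉ Set.range j₁) :
    Set.range j₁ ⊆ Set.range j₂ ∨ Disjoint (Set.range j₁) (Set.range j₂) := by
  have hunion : IsComponentUnion M (j₁ ⁻¹' Set.range j₂) := by
    have hstep ⦃a b⦄ (hab : M.Adj a b) (ha : j₁ a ∈ Set.range j₂) : j₁ b ∈ Set.range j₂ := by
      by_contra hb
      obtain ⟨c, hc⟩ := ha
      rw [← j₁.map_adj_iff, ← hc, adj_comm, h₂.adj_iff _ hb] at hab
      exact hw ⟨b, hab.1⟩
    exact fun a b hab => ⟨hstep hab, hstep hab.symm⟩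
  rw [or_iff_not_imp_right, Set.not_disjoint_iff]
  rintro ⟨_, ⟨a, rfl⟩, ha⟩ _ ⟨b, rfl⟩
  exact (hunion.mem_iff_of_reachable (hM.preconnected a b)).1 ha

lemma IsPendantCopy.isComponentUnion_union (h₁ : IsPendantCopy M r H j₁ w₁)
    (h₂ : IsPendantCopy M r H j₂ w₂) (hw₁ : w₁ ∈ Set.range j₂) (hw₂ : w₂ ∈ Set.range j₁) :
    IsComponentUnion H (Set.range j₁ ∪ Set.range j₂) := by
  have hstep ⦃x y⦄ (hxy : H.Adj x y) (hx : x ∈ Set.range j₁ ∪ Set.range j₂) :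
      y ∈ Set.range j₁ ∪ Set.range j₂ := by
    by_contra hy
    simp only [Set.mem_union, not_or] at hy
    rcases hx with ⟨a, rfl⟩ | ⟨a, rfl⟩
    · exact hy.2 (((h₁.adj_iff y hy.1 a).1 hxy.symm).1 ▸ hw₁)
    · exact hy.1 (((h₂.adj_iff y hy.2 a).1 hxy.symm).1 ▸ hw₂)
  exact fun x y hxy => ⟨hstep hxy, hstep hxy.symm⟩

lemma IsComponentUnion.componentSize_le [Finite V] {S : Set V} {x : V}
    (h : IsComponentUnion G S) (hx : x ∈ S) : componentSize G x ≤ S.ncard :=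
  Set.ncard_le_ncard fun _ hy => (h.mem_iff_of_reachable (ConnectedComponent.eq.1 hy)).2 hx

lemma IsPendantCopy.range_eq_of_notMem [Finite V'] (h₂ : IsPendantCopy M r H j₂ w₂)
    (hM : M.Connected) (hw : w₂ ∉ Set.range j₁) {f : G ↪g H} (hf : Set.range f = (Set.range j₁)ᶜ)
    (hG : ¬HasPendantCopy M r G) : Set.range j₁ = Set.range j₂ := by
  rcases h₂.subset_or_disjoint hM hw with hsub | hdisj
  · refine Set.eq_of_subset_of_ncard_le hsub (le_of_eq ?_)
    rw [Set.ncard_range_of_injective j₁.injective, Set.ncard_range_of_injective j₂.injective]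
  · obtain ⟨v, rfl⟩ : w₂ ∈ Set.range f := hf ▸ hw
    obtain ⟨j, hj⟩ := h₂.exists_isPendantCopy (hf ▸ hdisj.subset_compl_left)
    exact absurd ⟨j, v, hj⟩ hG

/-- The place where a copy of `M` was attached to a graph without pendant copies can be read off
from the result, unless the two copies hang from one another. -/
lemma IsPendantCopy.range_eq [Finite V'] {G' : SimpleGraph W'} (h₁ : IsPendantCopy M r H j₁ w₁)
    (h₂ : IsPendantCopy M r H j₂ w₂) (hM : M.Connected)
    {f₁ : G ↪g H} (hf₁ : Set.range f₁ = (Set.range j₁)ᶜ) (hG : ¬HasPendantCopy M r G)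
    {f₂ : G' ↪g H} (hf₂ : Set.range f₂ = (Set.range j₂)ᶜ) (hG' : ¬HasPendantCopy M r G')
    (hsize : 2 * Nat.card W < componentSize H w₁) : Set.range j₁ = Set.range j₂ := by
  by_cases hw₂ : w₂ ∈ Set.range j₁
  · by_cases hw₁ : w₁ ∈ Set.range j₂
    · have hle := (h₁.isComponentUnion_union h₂ hw₁ hw₂).componentSize_le (.inr hw₁)
      have hunion := Set.ncard_union_le (Set.range j₁) (Set.range j₂)
      rw [Set.ncard_range_of_injective j₁.injective,
        Set.ncard_range_of_injective j₂.injective] at hunion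
      omega
    · exact (h₁.range_eq_of_notMem hM hw₁ hf₂ hG').symm
  · exact h₂.range_eq_of_notMem hM hw₂ hf₁ hG

end PendantCopies

section PendantCopyCount

variable {C : GraphClassOn} {W : Type} {M : SimpleGraph W} {r : W} {K n : ℕ}

/-- The graphs without pendant copies of `(M, r)` whose giant component misses fewer than `K`
vertices. -/
def IsPendantFreeGiant (M : SimpleGraph W) (r : W) (K : ℕ) (G : SimpleGraph V) : Prop :=
  ¬HasPendantCopy M r G ∧ ∃ v, Nat.card V < componentSize G v + K

lemma card_sub_le_card_lt_componentSize_add [Finite V] {G : SimpleGraph V}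
    (h : ∃ v, Nat.card V < componentSize G v + K) :
    Nat.card V - K ≤ Nat.card {v // Nat.card V < componentSize G v + K} := by
  obtain ⟨v, hv⟩ := h
  have hle : componentSize G v ≤ Nat.card {v // Nat.card V < componentSize G v + K} :=
    Set.ncard_le_ncard fun u hu => by
      change Nat.card V < componentSize G u + K
      rwa [componentSize_eq_of_reachable (ConnectedComponent.eq.1 hu)]
  omega

lemma exists_sumEquiv_range_inr_eq {X : Type} [Finite W] [Finite X] {S : Finset X}
    (hX : Nat.card X = n + Nat.card W) (hS : S.card = Nat.card W) :
    ∃ e : Fin n ⊕ W ≃ X, Set.range (e ∘ Sum.inr) = S := by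
  classical
  have hcompl := Set.ncard_add_ncard_compl (S : Set X)
  obtain ⟨e₁⟩ : Nonempty (W ≃ (S : Set X)) := Finite.card_eq.1 (by simp [hS])
  rw [Set.ncard_coe_finset] at hcompl
  obtain ⟨e₂⟩ : Nonempty (Fin n ≃ ↥(S : Set X)ᶜ) := Finite.card_eq.1 (by
    rw [Nat.card_coe_set_eq, Nat.card_fin]
    omega)
  refine ⟨(Equiv.sumComm _ _).trans ((e₁.sumCongr e₂).trans (Equiv.Set.sumCompl (S : Set X))), ?_⟩
  ext x
  simp only [Set.mem_range, Function.comp_apply, Equiv.trans_apply]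
  constructor
  · rintro ⟨a, rfl⟩
    exact (e₁ a).2
  · intro hx
    exact ⟨e₁.symm ⟨x, hx⟩, congrArg Subtype.val (e₁.apply_symm_apply ⟨x, hx⟩)⟩

lemma range_inr_eq_of_bridge_iso {X : Type} [Finite X] {H : SimpleGraph X}
    {G : SimpleGraph V} {G' : SimpleGraph V'} {v : V} {v' : V'} (hM : M.Connected)
    (e : bridge G M v r ≃g H) (e' : bridge G' M v' r ≃g H)
    (hG : ¬HasPendantCopy M r G) (hG' : ¬HasPendantCopy M r G')
    (hsize : 2 * Nat.card W < componentSize G v) :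
    Set.range (e ∘ Sum.inr) = Set.range (e' ∘ Sum.inr) := by
  exact ((isPendantCopy_bridge G M v r).map_iso e).range_eq
    ((isPendantCopy_bridge G' M v' r).map_iso e') hM (range_comp_bridgeInl e) hG
    (range_comp_bridgeInl e') hG'
    (hsize.trans_le (componentSize_le_of_embedding (e.toEmbedding.comp (bridgeInl G M v r)) v))

lemma card_isPendantFreeGiant_mul_le [Finite W] (hC : ClassIsoInvariant C) (hAdd : ClassAddable C)
    (hM : connectedMembers C W M) (hn : 2 * Nat.card W + K ≤ n) :
    Nat.card {G : SimpleGraph (Fin n) // C _ G ∧ IsPendantFreeGiant M r K G} *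
      ((n - K) * (n + Nat.card W).choose (Nat.card W)) ≤ classCount C (n + Nat.card W) := by
  choose e he using fun S : Set.powersetCard (Fin (n + Nat.card W)) (Nat.card W) =>
    exists_sumEquiv_range_inr_eq (n := n) (by simp) S.2
  let Source := (Σ G : {G : SimpleGraph (Fin n) // C _ G ∧ IsPendantFreeGiant M r K G},
    {v // Nat.card (Fin n) < componentSize G.1 v + K}) ×
      Set.powersetCard (Fin (n + Nat.card W)) (Nat.card W)
  let attach (z : Source) : {G : SimpleGraph (Fin (n + Nat.card W)) // C _ G} :=
    ⟨(e z.2).simpleGraph (bridge z.1.1.1 M z.1.2.1 r),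
      (class_iff_of_iso hC (Iso.comap (e z.2).symm _)).2
        (class_bridge hC hAdd z.1.1.2.1 hM.1 _ _)⟩
  have hattach : Function.Injective attach := by
    rintro ⟨⟨⟨G, hG⟩, v, hv⟩, S⟩ ⟨⟨⟨G', hG'⟩, v', hv'⟩, S'⟩ h
    replace h : (e S).simpleGraph (bridge G M v r) = (e S').simpleGraph (bridge G' M v' r) :=
      Subtype.ext_iff.1 h
    let E' : bridge G' M v' r ≃g (e S).simpleGraph (bridge G M v r) :=
      ⟨e S', fun {_ _} => by rw [h]; exact (Iso.comap (e S').symm _).symm.map_rel_iff'⟩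
    have hsize : n < componentSize G v + K := by simpa using hv
    have hrange := range_inr_eq_of_bridge_iso hM.2 (Iso.comap (e S).symm _).symm E' hG.2.1 hG'.2.1
      (by omega)
    obtain rfl : S = S' :=
      Subtype.ext <| Finset.coe_injective <| (he S).symm.trans <| hrange.trans (he S')
    obtain ⟨rfl, rfl⟩ := bridge_injective ((e S).simpleGraph.injective h)
    rfl
  have := Fintype.ofFinite {G : SimpleGraph (Fin n) // C _ G ∧ IsPendantFreeGiant M r K G}
  calc Nat.card {G : SimpleGraph (Fin n) // C _ G ∧ IsPendantFreeGiant M r K G} *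
      ((n - K) * (n + Nat.card W).choose (Nat.card W))
    _ = (∑ _G : {G : SimpleGraph (Fin n) // C _ G ∧ IsPendantFreeGiant M r K G}, (n - K)) *
        (n + Nat.card W).choose (Nat.card W) := by simp [mul_assoc, Nat.card_eq_fintype_card]
    _ ≤ Nat.card Source := by
      rw [Nat.card_prod, Nat.card_sigma, Set.powersetCard.card, Nat.card_fin (n + _)]
      gcongr with G
      simpa using card_sub_le_card_lt_componentSize_add G.2.2.2
    _ ≤ classCount C (n + Nat.card W) := Nat.card_le_card_of_injective attach hattach

end PendantCopyCount

/-! ### Graphs with a pendant copy of an absorbing graph -/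

section Absorption

lemma reachable_of_card_lt_componentSize_add [Finite V] {G : SimpleGraph V} {u v : V}
    (h : Nat.card V < componentSize G u + componentSize G v) : G.Reachable u v := by
  by_contra huv
  have hdisj : Disjoint (G.connectedComponentMk u).supp (G.connectedComponentMk v).supp :=
    pairwise_disjoint_supp_connectedComponent G
      fun huv' => huv (ConnectedComponent.eq.1 huv')
  have hunion := Set.ncard_le_card
    ((G.connectedComponentMk u).supp ∪ (G.connectedComponentMk v).supp)
  rw [Set.ncard_union_eq hdisj] at hunion
  exact h.not_ge hunion

variable {K : ℕ}

lemma connected_induce_compl_smallPart [Finite V] {G : SimpleGraph V}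
    (hgiant : ∃ v, Nat.card V < componentSize G v + K) (hne : (smallPart K G)ᶜ.Nonempty) :
    (G.induce (smallPart K G)ᶜ).Connected := by
  obtain ⟨v, hv⟩ := hgiant
  obtain ⟨x, hx⟩ := hne
  have hreach {y : V} (hy : y ∈ (smallPart K G)ᶜ) : G.Reachable v y := by
    refine reachable_of_card_lt_componentSize_add (hv.trans_le ?_)
    have : K < componentSize G y := not_le.1 hy
    omega
  refine (supp_eq_iff.1 (Set.ext fun y => ?_ :
    (G.connectedComponentMk x).supp = (smallPart K G)ᶜ)).2.2
  rw [ConnectedComponent.mem_supp_iff, ConnectedComponent.eq]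
  exact ⟨fun h => (isComponentUnion_smallPart.compl.mem_iff_of_reachable h).2 hx,
    fun hy => (hreach hy).symm.trans (hreach hx)⟩

variable {C : GraphClassOn} {V W : Type} [Finite V] [Finite W] {M : SimpleGraph W} {r : W} {k : ℕ}

lemma IsAbsorbing.rankTheory_eq_sum (habs : IsAbsorbing k C M r) (hC : ClassIsoInvariant C)
    (hDec : ClassDecomposable C) (hM : connectedMembers C W M) (hK : K < Nat.card W)
    {G : SimpleGraph V} (hG : C V G) (hgiant : ∃ v, Nat.card V < componentSize G v + K)
    (hcopy : HasPendantCopy M r G) :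
    rankTheory k G = rankTheory k (G.induce (smallPart K G) ⊕g M) := by
  obtain ⟨j, w, h⟩ := hcopy
  have hunion := isComponentUnion_smallPart (K := K) (G := G)
  have hj (a : W) : j a ∈ (smallPart K G)ᶜ := not_le.2 <| hK.trans_le <| by
    simpa only [componentSize_eq_of_connected hM.2] using componentSize_le_of_embedding j a
  have hw : w ∈ (smallPart K G)ᶜ :=
    (hunion.compl ((h.adj_iff w h.notMem r).2 ⟨rfl, rfl⟩)).2 (hj r)
  have hconn : connectedMembers C _ (G.induce (smallPart K G)ᶜ) :=
    ⟨((class_iff_of_isComponentUnion hC hDec hunion).1 hG).2,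
      connected_induce_compl_smallPart hgiant ⟨w, hw⟩⟩
  obtain ⟨j', h'⟩ := IsPendantCopy.exists_isPendantCopy
    (f := Embedding.induce (smallPart K G)ᶜ) (w := ⟨w, hw⟩) h
    (by rintro _ ⟨a, rfl⟩; exact ⟨⟨j a, hj a⟩, rfl⟩)
  have hgiant_theory : rankTheory k (G.induce (smallPart K G)ᶜ) = rankTheory k M := by
    rw [rankTheory_iso h'.bridgeIso]
    exact habs.rankTheory_bridge_eq hM
      ((connectedMembers_isoInvariant hC _ _ _ _ ⟨h'.bridgeIso⟩).2 hconn)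
  rw [rankTheory_iso hunion.sumIso, rankTheory_sum_congr rfl hgiant_theory]

end Absorption

/-! ### Convergence of probabilities -/

lemma exists_tendsto_of_approx {f : ℕ → ℝ} (h : ∀ ε > 0, ∃ (g : ℕ → ℝ) (p : ℝ),
      Tendsto g atTop (𝓝 p) ∧ ∀ᶠ n in atTop, |f n - g n| ≤ ε) : ∃ p, Tendsto f atTop (𝓝 p) := by
  refine cauchySeq_tendsto_of_complete (Metric.cauchySeq_iff'.2 fun ε hε => ?_)
  obtain ⟨g, p, hg, hfg⟩ := h (ε / 5) (by positivity)
  have hfp : ∀ᶠ n in atTop, dist (f n) p < 2 * (ε / 5) := by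
    filter_upwards [hfg, Metric.tendsto_nhds.1 hg (ε / 5) (by positivity)] with n hfg hgp
    rw [← Real.dist_eq] at hfg
    linarith [dist_triangle (f n) (g n) p]
  obtain ⟨N, hN⟩ := eventually_atTop.1 hfp
  exact ⟨N, fun n hn => by linarith [dist_triangle_right (f n) (f N) p, hN n hn, hN N le_rfl]⟩

section Probability

variable {C : GraphClassOn} {n : ℕ}

lemma classProb_le_add_add {P Q A B : SimpleGraph (Fin n) → Prop}
    (h : ∀ G, C _ G → P G → Q G ∨ A G ∨ B G) :
    classProb C n P ≤ classProb C n Q + (classProb C n A + classProb C n B) := by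
  simp only [classProb, ← add_div]
  gcongr
  norm_cast
  have hsub : {G | C _ G ∧ P G} ⊆ {G | C _ G ∧ Q G} ∪ ({G | C _ G ∧ A G} ∪ {G | C _ G ∧ B G}) :=
    fun G ⟨hG, hP⟩ => (h G hG hP).imp (⟨hG, ·⟩) (.imp (⟨hG, ·⟩) (⟨hG, ·⟩))
  exact (Set.ncard_le_ncard hsub).trans <| (Set.ncard_union_le _ _).trans <|
    Nat.add_le_add_left (Set.ncard_union_le _ _) _

lemma abs_classProb_sub_le {P Q A B : SimpleGraph (Fin n) → Prop}
    (h : ∀ G, C _ G → ¬A G → ¬B G → (P G ↔ Q G)) :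
    |classProb C n P - classProb C n Q| ≤ classProb C n A + classProb C n B := by
  rw [abs_sub_le_iff, sub_le_iff_le_add', sub_le_iff_le_add']
  constructor <;> refine classProb_le_add_add fun G hG hP => ?_ <;>
    have := h G hG <;> tauto

lemma classProb_forall_componentSize_le (hAdd : ClassAddable C)
    (hne : ∀ n : ℕ, 1 ≤ n → ∃ G : SimpleGraph (Fin n), C (Fin n) G) (hn : 0 < n) {K : ℕ}
    (hK : 0 < K) : classProb C n (fun G => ∀ v, componentSize G v + K ≤ n) ≤ 2 / K := by
  have hcount := classCount_pos hAdd.1 hne n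
  rw [classProb, div_le_div_iff₀ (by positivity) (by positivity)]
  exact_mod_cast card_forall_componentSize_mul_le hAdd.2 hn K

section PendantFree

open PowerSeries Nat

variable {W : Type} [Finite W] {M : SimpleGraph W} {K : ℕ}

lemma classProb_isPendantFreeGiant_le (hC : ClassIsoInvariant C) (hAdd : ClassAddable C)
    (hne : ∀ n : ℕ, 1 ≤ n → ∃ G : SimpleGraph (Fin n), C (Fin n) G)
    (hM : connectedMembers C W M) (r : W) (hn : 2 * Nat.card W + K < n) :
    classProb C n (IsPendantFreeGiant M r K) ≤
      (coeff n (egf (classCount C)) / coeff (n + Nat.card W) (egf (classCount C)))⁻¹ *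
        ((Nat.card W)! / (n - K : ℕ)) := by
  have hcard : (Nat.card {G : SimpleGraph (Fin n) // C _ G ∧ IsPendantFreeGiant M r K G} : ℝ) *
      ((n - K : ℕ) * (n + Nat.card W).choose (Nat.card W)) ≤ classCount C (n + Nat.card W) :=
    mod_cast card_isPendantFreeGiant_mul_le hC hAdd hM hn.le
  rw [Nat.cast_choose ℝ (Nat.le_add_left _ n), Nat.add_sub_cancel] at hcard
  have hcount := classCount_pos hAdd.1 hne n
  have hnK : 0 < n - K := by omega
  rw [coeff_egf, coeff_egf, inv_div, classProb]
  calc _ ≤ (classCount C (n + Nat.card W) /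
        ((n - K : ℕ) * ((n + Nat.card W)! / ((Nat.card W)! * n !)) : ℝ)) / classCount C n := by
        gcongr
        exact (le_div_iff₀ (by positivity)).2 hcard
    _ = _ := by field_simp

lemma tendsto_classProb_isPendantFreeGiant (hC : ClassIsoInvariant C) (hAdd : ClassAddable C)
    (hSmooth : ClassSmooth C) (hne : ∀ n : ℕ, 1 ≤ n → ∃ G : SimpleGraph (Fin n), C (Fin n) G)
    (hM : connectedMembers C W M) (r : W) (K : ℕ) :
    Tendsto (fun n => classProb C n (IsPendantFreeGiant M r K)) atTop (𝓝 0) := by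
  obtain ⟨γ, hγ, hratio⟩ := exists_tendsto_coeff_egf_classCount_succ_div hC hAdd hSmooth hne
  have hgrowth := (tendsto_div_add_of_tendsto_succ_div
    (fun n => (coeff_egf_classCount_pos hAdd.1 hne n).ne') hγ hratio (Nat.card W)).inv₀
    (pow_ne_zero _ (inv_ne_zero hγ))
  have hdecay : Tendsto (fun n : ℕ => ((Nat.card W)! : ℝ) / (n - K : ℕ)) atTop (𝓝 0) :=
    tendsto_const_nhds.div_atTop
      (tendsto_natCast_atTop_atTop.comp (tendsto_sub_atTop_nat K))
  refine tendsto_of_tendsto_of_tendsto_of_le_of_le' tendsto_const_nhds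
    (by simpa only [mul_zero] using hgrowth.mul hdecay) (.of_forall fun n => ?_) ?_
  · rw [classProb]
    positivity
  · filter_upwards [eventually_gt_atTop (2 * Nat.card W + K)] with n hn
    exact classProb_isPendantFreeGiant_le hC hAdd hne hM r hn

end PendantFree

variable {W : Type} {M : SimpleGraph W} {r : W} {k : ℕ} {φ : Language.graph.Sentence}

lemma classIsoInvariant_satFO_sum (hφ : ∀ {V V' : Type} {G : SimpleGraph V} {H : SimpleGraph V'},
      rankTheory k G = rankTheory k H → (SatFO G φ ↔ SatFO H φ)) (M : SimpleGraph W) :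
    ClassIsoInvariant fun _ _ G => SatFO (G ⊕g M) φ := by
  rintro V V' _ _ G H ⟨e⟩
  exact hφ (rankTheory_sum_congr (rankTheory_iso e).symm rfl)

lemma abs_classProb_satFO_sub_le [Finite W]
    (hφ : ∀ {V V' : Type} {G : SimpleGraph V} {H : SimpleGraph V'},
      rankTheory k G = rankTheory k H → (SatFO G φ ↔ SatFO H φ))
    (hC : ClassIsoInvariant C) (hAdd : ClassAddable C)
    (hne : ∀ n : ℕ, 1 ≤ n → ∃ G : SimpleGraph (Fin n), C (Fin n) G)
    (habs : IsAbsorbing k C M r) (hM : connectedMembers C W M) {K : ℕ} (hK : 0 < K)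
    (hKM : K < Nat.card W) (hn : 0 < n) :
    |classProb C n (fun G => SatFO G φ) -
        classProb C n (fun G => SatFO (G.induce (smallPart K G) ⊕g M) φ)| ≤
      2 / K + classProb C n (IsPendantFreeGiant M r K) := by
  refine (abs_classProb_sub_le (A := fun G => ∀ v, componentSize G v + K ≤ n)
    (B := IsPendantFreeGiant M r K) fun G hG hgiant hfree => hφ ?_).trans
    (add_le_add_left (classProb_forall_componentSize_le hAdd hne hn hK) _)
  replace hgiant : ∃ v, Nat.card (Fin n) < componentSize G v + K := by simpa using hgiant
  exact habs.rankTheory_eq_sum hC hAdd.1 hM hKM hG hgiant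
    (not_not.1 fun hcopy => hfree ⟨hcopy, hgiant⟩)

end Probability

end RandomGraphClass

open RandomGraphClass

/-- Convergence law for first-order logic on a smooth addable class. -/
theorem fo_convergence_law
    (C : GraphClassOn) (hIso : ClassIsoInvariant C) (hAdd : ClassAddable C)
    (hSmooth : ClassSmooth C)
    (hne : ∀ n : ℕ, 1 ≤ n → ∃ G : SimpleGraph (Fin n), C (Fin n) G)
    (φ : Language.graph.Sentence) :
    ∃ p : ℝ, Tendsto (fun n : ℕ => classProb C n (fun G => SatFO G φ)) atTop (𝓝 p) := by
  obtain ⟨k, hφ⟩ := exists_rank_satFO_iff φ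
  refine exists_tendsto_of_approx fun ε hε => ?_
  obtain ⟨K, hK⟩ := exists_nat_gt (4 / ε)
  have hKpos : 0 < K := Nat.cast_pos.1 ((by positivity : 0 < 4 / ε).trans hK)
  obtain ⟨W, _, M, r, hM, hKM, habs⟩ := exists_isAbsorbing hIso hAdd (hne 1 le_rfl) k K
  obtain ⟨p, hp⟩ := exists_tendsto_classProb_smallPart hIso hAdd hSmooth hne
    (classIsoInvariant_satFO_sum hφ M) K
  refine ⟨_, p, hp, ?_⟩
  have hfree := tendsto_classProb_isPendantFreeGiant hIso hAdd hSmooth hne hM r K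
  filter_upwards [hfree.eventually (gt_mem_nhds (half_pos hε)), eventually_gt_atTop 0]
    with n hfree hn
  have hgiant : (2 : ℝ) / K ≤ ε / 2 := by
    rw [div_lt_iff₀ hε] at hK
    rw [div_le_iff₀ (by positivity)]
    linarith
  linarith [abs_classProb_satFO_sub_le hφ hIso hAdd hne habs hM hKpos hKM hn]
end
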